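/- Let G be a one-relator group with torsion and suppose x, y ∈ G and i, j are integers such that x⁻¹ yⁱ x = yʲ with yⁱ ≠ 1 and yʲ ≠ 1. Then the subgroup H = ⟨x, y⟩ of G is either cyclic or a free product of cyclic groups. -/

import Mathlib

/-- A group is *virtually-ℤ* if it has a finite-index subgroup isomorphic to `ℤ`. -/
def VirtuallyZ (G : Type*) [Group G] : Prop :=
  ∃ H : Subgroup G, H.FiniteIndex ∧ Nonempty (H ≃* Multiplicative ℤ)

/-- A subgroup `M` of `G` is *malnormal* if `g M g⁻¹ ∩ M ≠ 1` implies `g ∈ M`. -/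
def Subgroup.IsMalnormal {G : Type*} [Group G] (M : Subgroup G) : Prop :=
  ∀ g : G, (∃ x : G, x ≠ 1 ∧ x ∈ M ∧ g * x * g⁻¹ ∈ M) → g ∈ M

/-- A group is a *free product of cyclic groups* if it is isomorphic to the free product
(`Monoid.CoprodI`) of a family of cyclic groups; every cyclic group is isomorphic to
`Multiplicative (ZMod m)` for some `m : ℕ` (with `m = 0` giving the infinite cyclic group). -/
def IsFreeProductOfCyclics (G : Type*) [Group G] : Prop :=
  ∃ (ι : Type) (m : ι → ℕ),
    Nonempty (G ≃* Monoid.CoprodI fun i => Multiplicative (ZMod (m i)))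

/-- A group is *freely decomposable* if it is isomorphic to a free product of two
nontrivial groups. -/
def FreelyDecomposable (G : Type*) [Group G] : Prop :=
  ∃ (H K : Type) (gH : Group H) (gK : Group K),
    Nontrivial H ∧ Nontrivial K ∧
      Nonempty (G ≃* (letI := gH; letI := gK; Monoid.Coprod H K))

/-- A group is *freely indecomposable* if it is not isomorphic to a free product of two
nontrivial groups. -/
def FreelyIndecomposable (G : Type*) [Group G] : Prop := ¬ FreelyDecomposable G

namespace OneRel
open FreeGroup (of mk)

/-! ### The group of permutational cocycles -/

/-- Pairs of a permutation of `Ω` and a `P`-valued cocycle. -/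
@[ext] structure Wr (Ω P : Type*) where
  /-- permutation part -/
  p : Equiv.Perm Ω
  /-- cocycle part -/
  c : Ω → P

namespace Wr
variable {Ω P : Type*} [Group P]

instance : Mul (Wr Ω P) := ⟨fun a b => ⟨a.p * b.p, fun q => a.c (b.p q) * b.c q⟩⟩
instance : One (Wr Ω P) := ⟨⟨1, fun _ => 1⟩⟩
instance : Inv (Wr Ω P) := ⟨fun a => ⟨a.p⁻¹, fun q => (a.c (a.p⁻¹ q))⁻¹⟩⟩

@[simp] theorem mul_p (a b : Wr Ω P) : (a * b).p = a.p * b.p := rfl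
@[simp] theorem mul_c (a b : Wr Ω P) (q : Ω) : (a * b).c q = a.c (b.p q) * b.c q := rfl
@[simp] theorem one_p : (1 : Wr Ω P).p = 1 := rfl
@[simp] theorem one_c (q : Ω) : (1 : Wr Ω P).c q = 1 := rfl
@[simp] theorem inv_p (a : Wr Ω P) : (a⁻¹).p = a.p⁻¹ := rfl
@[simp] theorem inv_c (a : Wr Ω P) (q : Ω) : (a⁻¹).c q = (a.c (a.p⁻¹ q))⁻¹ := rfl

instance : Group (Wr Ω P) := Group.ofLeftAxioms
  (by intro a b c; ext q <;> simp [mul_assoc])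
  (by intro a; ext q <;> simp)
  (by intro a; ext q <;> simp)

/-- projection to the permutation part -/
def pHom : Wr Ω P →* Equiv.Perm Ω where
  toFun := Wr.p
  map_one' := rfl
  map_mul' _ _ := rfl

theorem equivariant {X Z : Type*} [Group Z] (f : FreeGroup X →* Wr Ω P)
    (ρ : FreeGroup X →* Z) (ev : Ω → P → Z)
    (h : ∀ a q π, ev ((f (of a)).p q) ((f (of a)).c q * π) = ρ (of a) * ev q π)
    (w : FreeGroup X) : ∀ q π, ev ((f w).p q) ((f w).c q * π) = ρ w * ev q π := by
  induction w using FreeGroup.induction_on with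
  | C1 => intro q π; simp
  | of a => exact h a
  | inv_of a _ =>
    intro q π
    have := h a (((f (of a))⁻¹).p q) (((f (of a))⁻¹).c q * π)
    simp only [map_inv] at *
    rw [eq_inv_mul_iff_mul_eq, ← this]
    simp
  | mul x y hx hy =>
    intro q π
    simp only [map_mul, mul_p, mul_c, Equiv.Perm.mul_apply, mul_assoc]
    rw [hx, hy]

/-- restriction of a cocycle to elements fixing a point -/
def stab {G : Type*} [Group G] (f : G →* Wr Ω P) (q0 : Ω) (K : Subgroup G)
    (h : ∀ k ∈ K, (f k).p q0 = q0) : K →* P where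
  toFun k := (f k).c q0
  map_one' := by simp
  map_mul' a b := by simp [h b b.2]

end Wr

/-! ### Letters in free groups -/

/-- reduced word -/
noncomputable def wd {A : Type*} (w : FreeGroup A) : List (A × Bool) :=
  @FreeGroup.toWord A (Classical.decEq A) w

/-- word length -/
noncomputable def nrm {A : Type*} (w : FreeGroup A) : ℕ := (wd w).length

theorem mk_wd {A : Type*} (w : FreeGroup A) : mk (wd w) = w :=
  @FreeGroup.mk_toWord A (Classical.decEq A) w

theorem wd_eq_nil {A : Type*} {w : FreeGroup A} : wd w = [] ↔ w = 1 :=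
  @FreeGroup.toWord_eq_nil_iff A (Classical.decEq A) w

theorem nrm_mk_le {A : Type*} {L : List (A × Bool)} : nrm (mk L) ≤ L.length :=
  @FreeGroup.norm_mk_le A L (Classical.decEq A)

theorem nrm_mul_le {A : Type*} (x y : FreeGroup A) : nrm (x * y) ≤ nrm x + nrm y :=
  @FreeGroup.norm_mul_le A (Classical.decEq A) x y

@[simp] theorem nrm_inv {A : Type*} (x : FreeGroup A) : nrm x⁻¹ = nrm x :=
  @FreeGroup.norm_inv_eq A (Classical.decEq A) x

@[simp] theorem nrm_of {A : Type*} (x : A) : nrm (of x) = 1 :=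
  @FreeGroup.norm_of A (Classical.decEq A) x

@[simp] theorem nrm_one {A : Type*} : nrm (1 : FreeGroup A) = 0 :=
  @FreeGroup.norm_one A (Classical.decEq A)

variable {X : Type}

open Classical in
/-- kill a generator -/
noncomputable def kill (y : X) : FreeGroup X →* FreeGroup X :=
  FreeGroup.lift (fun z => if z = y then 1 else FreeGroup.of z)

/-- `w` does not involve `y` -/
def Omits (w : FreeGroup X) (y : X) : Prop := kill y w = w

/-- no conjugate of `R` omits `y` -/
def Ess (R : FreeGroup X) (y : X) : Prop := ∀ g, ¬ Omits (g * R * g⁻¹) y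

/-- normal closure of one element -/
abbrev NC {G : Type*} [Group G] (w : G) : Subgroup G := Subgroup.normalClosure {w}

/-- not a proper power -/
def NotPow {G : Type*} [Group G] (R : G) : Prop := ∀ (S : G) (k : ℕ), 1 ≤ k → R = S ^ k → k = 1

open Classical in
theorem kill_mk (y : X) (L : List (X × Bool)) :
    kill y (mk L) = mk (L.filter (fun l => l.1 ≠ y)) := by
  induction L with
  | nil => simp [kill]; rfl
  | cons a L ih =>
    have e : (mk (a :: L) : FreeGroup X) = mk [a] * mk L := by simp [FreeGroup.mul_mk]
    rw [e, map_mul, ih, List.filter_cons]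
    rcases a with ⟨a, b⟩
    by_cases hb : a = y
    · cases b <;> simp [kill, hb]
    · cases b <;> simp [kill, hb, FreeGroup.of, FreeGroup.inv_mk, FreeGroup.invRev, FreeGroup.mul_mk]

open Classical in
theorem omits_iff (w : FreeGroup X) (y : X) : Omits w y ↔ ∀ l ∈ (wd w), l.1 ≠ y := by
  constructor
  · intro h
    unfold Omits at h
    have h2 : nrm (kill y w) = nrm w := by rw [h]
    conv_lhs at h2 => rw [← mk_wd w, kill_mk]
    have h3 := nrm_mk_le (L := (wd w).filter (fun l => l.1 ≠ y))
    rw [h2] at h3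
    have h4 : ((wd w).filter (fun l => l.1 ≠ y)) = (wd w) :=
      (List.filter_sublist).eq_of_length_le h3
    rw [List.filter_eq_self] at h4
    simpa using h4
  · intro h
    unfold Omits
    conv_lhs => rw [← mk_wd w, kill_mk]
    rw [List.filter_eq_self.2 (by simpa using h), mk_wd]

open Classical in
theorem norm_kill_lt {w : FreeGroup X} {y : X} (h : ¬ Omits w y) : nrm (kill y w) < nrm w := by
  conv_lhs => rw [← mk_wd w, kill_mk]
  refine lt_of_le_of_lt nrm_mk_le ?_
  rw [omits_iff] at h
  push Not at h
  obtain ⟨l, hl, hl2⟩ := h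
  unfold nrm
  refine lt_of_le_of_ne (List.length_filter_le _ _) fun h => ?_
  rw [List.length_filter_eq_length_iff] at h
  simpa [hl2] using h l hl

theorem eq_one_of_omits {w : FreeGroup X} (h : ∀ y, Omits w y) : w = 1 := by
  classical
  rw [← wd_eq_nil]
  by_contra h2
  obtain ⟨l, hl⟩ := List.exists_mem_of_ne_nil _ h2
  exact (omits_iff _ _).1 (h l.1) l hl rfl

open Classical in
/-- minimal norm in the conjugacy class -/
def MinConj (R : FreeGroup X) : Prop := ∀ g, nrm R ≤ nrm (g * R * g⁻¹)

theorem MinConj.ess {R : FreeGroup X} (h : MinConj R) {y : X} (hy : ¬ Omits R y) : Ess R y := by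
  intro g hg
  classical
  unfold Omits at hg
  rw [map_mul, map_mul, map_inv] at hg
  have e : kill y R = ((kill y g)⁻¹ * g) * R * ((kill y g)⁻¹ * g)⁻¹ := by
    have : kill y R = (kill y g)⁻¹ * (g * R * g⁻¹) * (kill y g) := by rw [← hg]; group
    rw [this]; group
  have h1 := h ((kill y g)⁻¹ * g)
  rw [← e] at h1
  exact absurd (norm_kill_lt hy) (not_lt.2 h1)

theorem exists_minConj (R : FreeGroup X) : ∃ g, MinConj (g * R * g⁻¹) := by
  classical
  obtain ⟨g, hg⟩ := WellFounded.has_min (InvImage.wf (fun g => nrm (g * R * g⁻¹)) wellFounded_lt)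
      Set.univ ⟨1, trivial⟩
  refine ⟨g, fun k => ?_⟩
  have := hg.2 (k * g) trivial
  simp only [InvImage, not_lt] at this
  refine this.trans (le_of_eq ?_)
  congr 1; group

theorem NotPow.conj {G : Type*} [Group G] {R : G} (h : NotPow R) (g : G) : NotPow (g * R * g⁻¹) := by
  intro S k hk e
  refine h (g⁻¹ * S * g) k hk ?_
  have := conj_pow (i := k) (a := g⁻¹) (b := S)
  rw [inv_inv] at this
  rw [this, ← e]; group

theorem NotPow.ne_one {G : Type*} [Group G] {R : G} (h : NotPow R) : R ≠ 1 := by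
  rintro rfl
  have := h 1 2 (by norm_num) (by simp)
  omega

theorem Ess.of_conj {R : FreeGroup X} {y : X} {g : FreeGroup X} (h : Ess (g * R * g⁻¹) y) :
    Ess R y := by
  intro k hk
  refine h (k * g⁻¹) ?_
  convert hk using 1; group

theorem Ess.conj {R : FreeGroup X} {y : X} (h : Ess R y) (g : FreeGroup X) :
    Ess (g * R * g⁻¹) y := by
  intro k hk
  refine h (k * g) ?_
  convert hk using 1; group

theorem mem_NC {G : Type*} [Group G] (R : G) : R ∈ NC R :=
  Subgroup.subset_normalClosure (Set.mem_singleton R)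

theorem conj_mem_NC {G : Type*} [Group G] {R w : G} (h : w ∈ NC R) (g : G) : g * w * g⁻¹ ∈ NC R :=
  Subgroup.normalClosure_normal.conj_mem _ h _

theorem NC_le {G : Type*} [Group G] {R : G} {N : Subgroup G} [N.Normal] (h : R ∈ N) : NC R ≤ N :=
  Subgroup.normalClosure_le_normal (by simpa using h)

theorem NC_conj {G : Type*} [Group G] (R g : G) : NC (g * R * g⁻¹) = NC R := by
  apply le_antisymm
  · exact NC_le (conj_mem_NC (mem_NC R) g)
  · refine NC_le ?_
    have h := conj_mem_NC (mem_NC (g * R * g⁻¹)) g⁻¹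
    have e : g⁻¹ * (g * R * g⁻¹) * g⁻¹⁻¹ = R := by group
    rw [e] at h
    exact h

/-- Freiheitssatz at `y` -/
def I1 (R : FreeGroup X) (y : X) : Prop := ∀ w, Omits w y → w ∈ NC R → w = 1

/-- torsion-freeness of the quotient -/
def I2 (R : FreeGroup X) : Prop := ∀ (w : FreeGroup X) (k : ℕ), k ≠ 0 → w ^ k ∈ NC R → w ∈ NC R

/-- structure of the normal closure modulo the normal closure of the power -/
def I3 (n : ℕ) (R : FreeGroup X) : Prop := ∃ (ι : Type) (idx : FreeGroup X → ι)
    (Ψ : NC R →* Monoid.CoprodI (fun _ : ι => Multiplicative (ZMod n))),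
    (∀ h h', idx h = idx h' → h⁻¹ * h' ∈ NC R) ∧
    (∀ k, Ψ k = 1 ↔ (k : FreeGroup X) ∈ NC (R ^ n)) ∧
    (∀ h : FreeGroup X, ∃ (c : Monoid.CoprodI (fun _ : ι => Multiplicative (ZMod n)))
      (a : Multiplicative (ZMod n)), Ψ ⟨h * R * h⁻¹, conj_mem_NC (mem_NC R) h⟩ =
      c * Monoid.CoprodI.of (M := fun _ : ι => Multiplicative (ZMod n)) (i := idx h) a * c⁻¹)

/-- The list of properties proved by induction. -/
structure Good (n : ℕ) (R : FreeGroup X) : Prop where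
  i1 : ∀ y, Ess R y → I1 R y
  i2 : I2 R
  i3 : I3 n R

theorem Good.of_conj {n : ℕ} {R : FreeGroup X} (g : FreeGroup X) (h : Good n (g * R * g⁻¹)) :
    Good n R := by
  have e := NC_conj R g
  have e2 : NC ((g * R * g⁻¹) ^ n) = NC (R ^ n) := by rw [conj_pow, NC_conj]
  refine ⟨?_, ?_, ?_⟩
  · intro y hy w hw hw2
    exact h.i1 y (hy.conj g) w hw (e ▸ hw2)
  · intro w k hk hw
    rw [← e] at *
    exact h.i2 w k hk hw
  · obtain ⟨ι, idx, Ψ, h1, h2, h3⟩ := h.i3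
    refine ⟨ι, fun k => idx (k * g⁻¹), Ψ.comp (MulEquiv.subgroupCongr e.symm).toMonoidHom, ?_, ?_, ?_⟩
    · intro a b hab
      have := h1 _ _ hab
      rw [e] at this
      have := conj_mem_NC this g⁻¹
      convert this using 1; group
    · intro k
      rw [← e2]
      exact h2 _
    · intro k
      obtain ⟨c, a, hc⟩ := h3 (k * g⁻¹)
      refine ⟨c, a, ?_⟩
      rw [← hc]
      simp only [MonoidHom.comp_apply]
      congr 1
      ext
      simp [mul_assoc]

end OneRel

namespace OneRel
open FreeGroup (of mk)
variable {X : Type}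

theorem wr_i3 {Ω P : Type*} [Group P] (f : FreeGroup X →* Wr Ω P) (q0 : Ω) (R : FreeGroup X) (n : ℕ)
    (hfix : ∀ k ∈ NC R, (f k).p q0 = q0) (hRn : f (R ^ n) = 1)
    (ev : Ω → P → FreeGroup X ⧸ NC (R ^ n))
    (hev : ∀ a q π, ev ((f (of a)).p q) ((f (of a)).c q * π) =
      (QuotientGroup.mk' (NC (R ^ n)) (of a)) * ev q π) :
    ∃ Ψ : NC R →* P, (∀ k, Ψ k = 1 ↔ (k : FreeGroup X) ∈ NC (R ^ n)) ∧
      ∀ h : FreeGroup X, Ψ ⟨h * R * h⁻¹, conj_mem_NC (mem_NC R) h⟩ =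
        ((f h⁻¹).c q0)⁻¹ * (f R).c ((f h⁻¹).p q0) * (f h⁻¹).c q0 := by
  refine ⟨Wr.stab f q0 (NC R) hfix, ?_, ?_⟩
  · intro k
    constructor
    · intro hk
      have hk' : (f k).c q0 = 1 := hk
      have := Wr.equivariant f (QuotientGroup.mk' (NC (R ^ n))) ev hev k q0 1
      rw [hk', hfix k k.2, one_mul, right_eq_mul] at this
      simpa using this
    · intro hk
      have h1 : NC (R ^ n) ≤ f.ker := NC_le hRn
      have h2 : f k = 1 := h1 hk
      change (f k).c q0 = 1
      rw [h2]; rfl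
  · intro h
    change (f (h * R * h⁻¹)).c q0 = _
    have h3 := hfix _ (conj_mem_NC (mem_NC R) h)
    simp only [map_mul, map_inv, Wr.mul_p, Equiv.Perm.mul_apply, Wr.mul_c, Wr.inv_p, Wr.inv_c] at *
    have h4 : (f R).p ((f h).p⁻¹ q0) = (f h).p⁻¹ q0 := by
      apply (f h).p.injective; simpa using h3
    rw [h4]
    simp

theorem Good.of_inv {n : ℕ} {R : FreeGroup X} (h : Good n R⁻¹) : Good n R := by
  have e : ∀ S : FreeGroup X, NC S⁻¹ = NC S := fun S => le_antisymm
    (NC_le (inv_mem (mem_NC S))) (NC_le (by simpa using inv_mem (mem_NC S⁻¹)))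
  have e2 : NC (R⁻¹ ^ n) = NC (R ^ n) := by rw [inv_pow, e]
  refine ⟨?_, ?_, ?_⟩
  · intro y hy w hw hw2
    refine h.i1 y ?_ w hw ((e R).symm ▸ hw2)
    intro g hg
    refine hy g ?_
    have : g * R * g⁻¹ = (g * R⁻¹ * g⁻¹)⁻¹ := by group
    unfold Omits at *
    rw [this, map_inv, hg]
  · intro w k hk hw
    rw [← e] at *
    exact h.i2 w k hk hw
  · obtain ⟨ι, idx, Ψ, h1, h2, h3⟩ := h.i3
    refine ⟨ι, idx, Ψ.comp (MulEquiv.subgroupCongr (e R).symm).toMonoidHom, ?_, ?_, ?_⟩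
    · intro a b hab
      rw [← e]; exact h1 a b hab
    · intro k
      rw [← e2]
      exact h2 _
    · intro k
      obtain ⟨c, a, hc⟩ := h3 k
      refine ⟨c, a⁻¹, ?_⟩
      rw [map_inv, ← inv_inj]
      simp only [mul_inv_rev, inv_inv, ← mul_assoc]
      rw [← hc, ← map_inv]
      simp only [MonoidHom.comp_apply]
      congr 1
      ext
      simp [mul_assoc]

/-- hom from a cyclic group -/
noncomputable def zhom {G : Type*} [Group G] (n : ℕ) (g : G) (h : g ^ n = 1) :
    Multiplicative (ZMod n) →* G :=
  AddMonoidHom.toMultiplicativeLeft (ZMod.lift n ⟨zmultiplesHom (Additive G) (Additive.ofMul g), by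
    simp [← ofMul_pow, h]⟩)

@[simp] theorem zhom_one {G : Type*} [Group G] (n : ℕ) (g : G) (h : g ^ n = 1) :
    zhom n g h (Multiplicative.ofAdd 1) = g := by
  unfold zhom
  have := ZMod.lift_coe n ⟨zmultiplesHom (Additive G) (Additive.ofMul g), by
    simp [← ofMul_pow, h]⟩ 1
  simp only [Int.cast_one, zmultiplesHom_apply, one_smul] at this
  simp [this]

theorem zmod_hom_ext {G : Type*} [Group G] {n : ℕ} {f g : Multiplicative (ZMod n) →* G}
    (h : f (Multiplicative.ofAdd 1) = g (Multiplicative.ofAdd 1)) : f = g := by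
  have : ∀ a : Multiplicative (ZMod n), ∃ k : ℤ, a = (Multiplicative.ofAdd 1) ^ k := by
    intro a
    obtain ⟨k, hk⟩ := ZMod.intCast_surjective a.toAdd
    refine ⟨k, ?_⟩
    rw [← ofAdd_zsmul]
    simp [hk]
  refine MonoidHom.ext fun a => ?_
  obtain ⟨k, rfl⟩ := this a
  simp [h]

/-- retraction of the free group killing one generator -/
theorem kill_mem (t : X) (w : FreeGroup X) : (kill t w)⁻¹ * w ∈ NC (of t) := by
  rw [← QuotientGroup.eq]
  have : (QuotientGroup.mk' (NC (of t))).comp (kill t) = QuotientGroup.mk' (NC (of t)) := by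
    ext a
    by_cases h : a = t
    · subst h
      simp only [MonoidHom.comp_apply, kill, FreeGroup.lift_apply_of, if_true, map_one]
      symm
      simpa using mem_NC (of a)
    · simp [kill, h]
  exact DFunLike.congr_fun this w

theorem kill_eq_one_iff (t : X) (w : FreeGroup X) : kill t w = 1 ↔ w ∈ NC (of t) := by
  constructor
  · intro h; simpa [h] using kill_mem t w
  · intro h
    have : NC (of t) ≤ (kill t).ker := NC_le (by simp [MonoidHom.mem_ker, kill])
    exact this h

theorem good_base (n : ℕ) (t : X) : Good n (of t) := by
  classical
  refine ⟨?_, ?_, ?_⟩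
  · intro y hy w hw hw2
    have : y = t := by
      by_contra h
      refine hy 1 ?_
      simp [Omits, kill, Ne.symm h]
    subst this
    rw [← kill_eq_one_iff] at hw2
    rw [← hw2]; exact hw.symm
  · intro w k hk hw
    rw [← kill_eq_one_iff] at *
    rw [map_pow] at hw
    exact (pow_eq_one_iff_left hk).1 hw
  · let Q := FreeGroup {x : X // x ≠ t}
    let P := Monoid.CoprodI (fun _ : Q => Multiplicative (ZMod n))
    let f : FreeGroup X →* Wr Q P := FreeGroup.lift (fun x => if h : x = t then
      ⟨1, fun q => Monoid.CoprodI.of (M := fun _ : Q => Multiplicative (ZMod n)) (i := q)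
        (Multiplicative.ofAdd 1)⟩ else ⟨Equiv.mulLeft (of ⟨x, h⟩ : Q), fun _ => 1⟩)
    let ret : FreeGroup X →* Q := FreeGroup.lift (fun x => if h : x = t then 1 else of ⟨x, h⟩)
    let s : Q →* FreeGroup X := FreeGroup.map Subtype.val
    have hs : ∀ x, s (of x) = of x.1 := fun x => FreeGroup.map.of
    have hft : f (of t) = ⟨1, fun q => Monoid.CoprodI.of (M := fun _ : Q => Multiplicative (ZMod n))
        (i := q) (Multiplicative.ofAdd 1)⟩ := by simp [f]
    have hfx : ∀ x (h : x ≠ t), f (of x) = ⟨Equiv.mulLeft (of ⟨x, h⟩ : Q), fun _ => 1⟩ := by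
      intro x h; simp [f, h]
    have hsret : s.comp ret = kill t := by
      ext a
      by_cases h : a = t <;> simp [hs, ret, kill, h]
    have hret : ∀ w q, (f w).p q = ret w * q := by
      have : Wr.pHom.comp f = (MulAction.toPermHom Q Q).comp ret := by
        ext a q
        by_cases h : a = t
        · subst h; simp [Wr.pHom, ret, hft]
        · simp [Wr.pHom, ret, hfx _ h, h]
      intro w q
      exact congrArg (fun e => e q) (DFunLike.congr_fun this w)
    have hret1 : ∀ w, w ∈ NC (of t) ↔ ret w = 1 := by
      intro w
      rw [← kill_eq_one_iff, ← hsret]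
      have : Function.Injective s := FreeGroup.map_injective Subtype.val_injective
      simp only [MonoidHom.comp_apply]
      exact map_eq_one_iff s this
    obtain ⟨π, hπ0⟩ : ∃ π, π = QuotientGroup.mk' (NC ((of t : FreeGroup X) ^ n)) := ⟨_, rfl⟩
    have hπ : π (of t) ^ n = 1 := by
      rw [← map_pow, hπ0, QuotientGroup.mk'_apply, QuotientGroup.eq_one_iff]
      exact mem_NC ((of t : FreeGroup X) ^ n)
    let β : P →* FreeGroup X ⧸ NC ((of t : FreeGroup X) ^ n) := Monoid.CoprodI.lift (fun q =>
      zhom n ((π (s q))⁻¹ * π (of t) * π (s q)) (by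
        have := conj_pow (i := n) (a := (π (s q))⁻¹) (b := π (of t))
        rw [inv_inv] at this
        rw [this, hπ]; simp))
    have hβ : ∀ q : Q, β (Monoid.CoprodI.of (M := fun _ : Q => Multiplicative (ZMod n)) (i := q)
        (Multiplicative.ofAdd 1)) = (π (s q))⁻¹ * π (of t) * π (s q) := by
      intro q
      exact (Monoid.CoprodI.lift_of _ _).trans (zhom_one _ _ _)
    clear_value β
    obtain ⟨Ψ, h1, h2⟩ := wr_i3 f 1 (of t) n (by
        intro k hk; rw [hret, (hret1 k).1 hk, one_mul])
      (by
        have : ∀ m : ℕ, (f (of t)) ^ m = ⟨1, fun q => (Monoid.CoprodI.of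
          (M := fun _ : Q => Multiplicative (ZMod n)) (i := q) (Multiplicative.ofAdd 1)) ^ m⟩ := by
          intro m
          induction m with
          | zero => simp; rfl
          | succ m ih => rw [pow_succ, ih, hft]; ext <;> simp [pow_succ]
        rw [map_pow, this]
        ext q
        · rfl
        · simp only [← map_pow, ← ofAdd_nsmul]; simp)
      (fun q p => π (s q) * β p)
      (by
        intro a q p
        by_cases h : a = t
        · subst h
          rw [hft]
          rw [← hπ0, map_mul, hβ]
          simp only [Equiv.Perm.coe_one, id, mul_assoc, mul_inv_cancel_left]
        · rw [hfx a h, ← hπ0]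
          simp [hs, mul_assoc])
    refine ⟨Q, fun h => (f h⁻¹).p 1, Ψ, ?_, h1, ?_⟩
    · intro h h' e
      simp only [] at e
      rw [hret, hret, mul_one, mul_one, map_inv, map_inv, inv_inj] at e
      rw [hret1, map_mul, map_inv, e, inv_mul_cancel]
    · intro h
      refine ⟨((f h⁻¹).c 1)⁻¹, Multiplicative.ofAdd 1, ?_⟩
      rw [h2, inv_inv, hft]

end OneRel

namespace OneRel
open FreeGroup (of mk)
variable {X : Type}

open Classical in
/-- exponent sum -/
noncomputable def ex (t : X) : FreeGroup X →* Multiplicative ℤ :=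
  FreeGroup.lift (fun z => if z = t then Multiplicative.ofAdd 1 else 1)

theorem ex_of_omits {t : X} {w : FreeGroup X} (h : Omits w t) : ex t w = 1 := by
  have : (ex t).comp (kill t) = 1 := by
    ext a
    by_cases h : a = t <;> simp [ex, kill, h]
  unfold Omits at h
  rw [← h]
  exact DFunLike.congr_fun this w

theorem ess_of_ex {t : X} {w : FreeGroup X} (h : ex t w ≠ 1) : Ess w t := by
  intro g hg
  have := ex_of_omits hg
  rw [map_mul, map_mul, map_inv, mul_comm, inv_mul_cancel_left] at this
  exact h this

open Classical in
/-- the substitution `t ↦ t^m, b ↦ b t^{-a}` -/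
noncomputable def theta (t b : X) (m : ℕ) (a : ℤ) : FreeGroup X →* FreeGroup X :=
  FreeGroup.lift (fun z => if z = t then of t ^ m else if z = b then of b * of t ^ (-a) else of z)

section
variable {t b : X} (htb : b ≠ t) {m : ℕ} (hm : 0 < m) (a : ℤ)

include htb in
theorem ex_b_theta (w : FreeGroup X) : ex b (theta t b m a w) = ex b w := by
  have : (ex b).comp (theta t b m a) = ex b := by
    ext z
    by_cases h : z = t
    · simp [theta, ex, h, htb.symm]
    · by_cases h2 : z = b <;> simp [theta, ex, h, h2, htb, htb.symm]
  exact DFunLike.congr_fun this w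

include htb in
theorem ex_t_theta (w : FreeGroup X) : ex t (theta t b m a w) = ex t w ^ m * ex b w ^ (-a) := by
  have : (ex t).comp (theta t b m a) = (powMonoidHom m).comp (ex t) * (zpowGroupHom (-a)).comp (ex b) := by
    ext z
    by_cases h : z = t
    · simp [theta, ex, h, htb.symm]
    · by_cases h2 : z = b <;> simp [theta, ex, h, h2, htb]
  exact DFunLike.congr_fun this w

include htb hm in
theorem theta_wr {Q : Type*} [Group Q] (ρ : FreeGroup X →* Q) :
    ∃ f : FreeGroup X →* Wr ℤ Q, (∀ w k, (f w).p k = k + (ex t w).toAdd) ∧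
      ∀ w k, (f (theta t b m a w)).c k = ρ w := by
  classical
  let T : Wr ℤ Q := ⟨Equiv.addRight 1, fun k => if (m : ℤ) ∣ k then ρ (of t) else 1⟩
  let D : Wr ℤ Q := ⟨Equiv.addRight (-a), fun _ => ρ (of b)⟩
  let f : FreeGroup X →* Wr ℤ Q := FreeGroup.lift (fun z => if z = t then T else
    if z = b then D * T ^ a else ⟨1, fun _ => ρ (of z)⟩)
  have hft : f (of t) = T := by simp [f]
  have hfb : f (of b) = D * T ^ a := by simp [f, htb]
  have hfz : ∀ z, z ≠ t → z ≠ b → f (of z) = ⟨1, fun _ => ρ (of z)⟩ := by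
    intro z h1 h2; simp [f, h1, h2]
  have hTp : T.p = Equiv.addRight 1 := rfl
  have hTz : ∀ z : ℤ, (T ^ z).p = Equiv.addRight z := by
    intro z
    have : (T ^ z).p = T.p ^ z := map_zpow Wr.pHom T z
    rw [this, hTp]
    simp
  have hTm : ∀ j : ℕ, j ≤ m → ∀ k : ℤ, (T ^ j).c k = if (-k) % m < j then ρ (of t) else 1 := by
    intro j
    induction j with
    | zero =>
      intro _ k
      have : 0 ≤ (-k) % m := Int.emod_nonneg _ (by omega)
      rw [if_neg (by push_cast; omega)]
      simp
    | succ j ih =>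
      intro hj k
      have hj' : (T ^ j).p = Equiv.addRight (j : ℤ) := by
        have := hTz j
        rwa [zpow_natCast] at this
      rw [pow_succ', Wr.mul_c, ih (by omega), hj']
      have h0 : 0 ≤ (-k) % m := Int.emod_nonneg _ (by omega)
      have h1 : (-k) % m < m := Int.emod_lt_of_pos _ (by omega)
      have key : (m : ℤ) ∣ k + j ↔ (-k) % m = j := by
        constructor
        · intro hd
          have : (j : ℤ) = (-k) + (k + j) := by ring
          have h2 : (j : ℤ) % m = (-k) % m := by
            obtain ⟨d, hd⟩ := hd
            rw [this, hd, Int.add_mul_emod_self_left]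
          rw [← h2]
          exact Int.emod_eq_of_lt (by omega) (by omega)
        · intro h
          rw [← h]
          have := Int.emod_add_mul_ediv (-k) m
          refine ⟨-(-k / m), ?_⟩
          linarith
      change (if (m : ℤ) ∣ k + j then ρ (of t) else 1) * _ = _
      by_cases hd : (-k) % m = j
      · rw [if_pos (key.2 hd), if_neg (by omega), if_pos (by push_cast; omega), mul_one]
      · rw [if_neg (fun h => hd (key.1 h)), one_mul]
        by_cases hl : (-k) % m < j
        · rw [if_pos hl, if_pos (by push_cast; omega)]
        · rw [if_neg hl, if_neg (by push_cast; omega)]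
  refine ⟨f, ?_, ?_⟩
  · have : Wr.pHom.comp f = (MonoidHom.mk' (fun z : Multiplicative ℤ => (Equiv.addRight z.toAdd : Equiv.Perm ℤ))
      (by intro x y; ext k; simp; ring)).comp (ex t) := by
      ext z k
      by_cases h : z = t
      · subst h; simp [Wr.pHom, ex, hft, hTp]
      · by_cases h2 : z = b
        · subst h2; simp [Wr.pHom, ex, hfb, hTz, h, D]
        · simp [Wr.pHom, ex, hfz z h h2, h]
    intro w k
    exact congrArg (fun e => e k) (DFunLike.congr_fun this w)
  · intro w
    induction w using FreeGroup.induction_on with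
    | C1 => intro k; simp
    | of z =>
      intro k
      by_cases h : z = t
      · subst h
        simp only [theta, FreeGroup.lift_apply_of, if_true, map_pow, hft]
        rw [hTm m le_rfl, if_pos (Int.emod_lt_of_pos _ (by omega))]
      · by_cases h2 : z = b
        · subst h2
          simp only [theta, FreeGroup.lift_apply_of, if_true, if_neg h, map_mul, hft, hfb, map_zpow]
          rw [mul_assoc, ← zpow_add]
          simp [D]
        · simp [theta, h, h2, hfz z h h2]
    | inv_of z ih =>
      intro k
      rw [map_inv, map_inv, Wr.inv_c, ih, map_inv]
    | mul x y hx hy =>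
      intro k
      rw [map_mul, map_mul, Wr.mul_c, hx, hy, map_mul]

include htb hm in
theorem theta_mem_iff {S : FreeGroup X} (hS : ex t (theta t b m a S) = 1) (w : FreeGroup X) :
    theta t b m a w ∈ NC (theta t b m a S) ↔ w ∈ NC S := by
  constructor
  · intro h
    obtain ⟨f, h1, h2⟩ := theta_wr htb hm a (QuotientGroup.mk' (NC S))
    have : NC (theta t b m a S) ≤ f.ker := by
      refine NC_le ?_
      rw [MonoidHom.mem_ker]
      ext k
      · rw [h1, hS]; simp
      · rw [h2, QuotientGroup.mk'_apply, (QuotientGroup.eq_one_iff _).2 (mem_NC S)]; simp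
    have h3 : f (theta t b m a w) = 1 := this h
    have h4 := h2 w 0
    rw [h3] at h4
    exact (QuotientGroup.eq_one_iff _).1 h4.symm
  · intro h
    have : NC S ≤ (NC (theta t b m a S)).comap (theta t b m a) := NC_le (mem_NC _)
    exact this h

include htb hm in
theorem theta_inj {w : FreeGroup X} (h : theta t b m a w = 1) : w = 1 := by
  obtain ⟨f, h1, h2⟩ := theta_wr htb hm a (MonoidHom.id (FreeGroup X))
  have h4 := h2 w 0
  rw [h] at h4
  simpa using h4.symm

include htb hm in
theorem theta_notPow {S : FreeGroup X} (hS : ex t (theta t b m a S) = 1) (h : NotPow S) :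
    NotPow (theta t b m a S) := by
  intro U k hk e
  obtain ⟨f, h1, h2⟩ := theta_wr htb hm a (MonoidHom.id (FreeGroup X))
  have hU : ex t U = 1 := by
    rw [e, map_pow] at hS
    have h5 : (k : ℤ) * (ex t U).toAdd = 0 := by
      have := congrArg Multiplicative.toAdd hS
      simpa using this
    rcases mul_eq_zero.1 h5 with h6 | h6
    · omega
    · exact h6
  have hp : ∀ k : ℕ, (f (U ^ k)).c 0 = (f U).c 0 ^ k := by
    intro k
    induction k with
    | zero => simp
    | succ k ih =>
      rw [pow_succ, map_mul, Wr.mul_c, h1, hU]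
      simp only [toAdd_one, add_zero]
      rw [ih, pow_succ]
  refine h ((f U).c 0) k hk ?_
  rw [← hp, ← e, h2]; rfl

include htb hm in
theorem theta_I1 {S : FreeGroup X} (h : I1 (theta t b m a S) b)
    (hS : ex t (theta t b m a S) = 1) : I1 S b := by
  intro w hw hw2
  have h1 := (theta_mem_iff htb hm a hS w).2 hw2
  refine theta_inj htb hm a (h _ ?_ h1)
  have : ((kill b).comp (theta t b m a)).comp (kill b) = (theta t b m a).comp (kill b) := by
    ext z
    by_cases hz : z = b
    · simp [kill, hz]
    · by_cases hz2 : z = t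
      · simp [kill, theta, hz2, htb.symm]
      · simp [kill, theta, hz2, hz]
  have h3 := DFunLike.congr_fun this w
  simp only [MonoidHom.comp_apply] at h3
  unfold Omits at hw
  rwa [hw] at h3

include htb hm in
theorem theta_I2 {S : FreeGroup X} (h : I2 (theta t b m a S))
    (hS : ex t (theta t b m a S) = 1) : I2 S := by
  intro w k hk hw
  rw [← theta_mem_iff htb hm a hS] at *
  rw [map_pow] at hw
  exact h _ _ hk hw

include htb hm in
theorem theta_I3 {n : ℕ} {S : FreeGroup X} (h : I3 n (theta t b m a S))
    (hS : ex t (theta t b m a S) = 1) : I3 n S := by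
  obtain ⟨ι, idx, Ψ, h1, h2, h3⟩ := h
  have hle : NC S ≤ (NC (theta t b m a S)).comap (theta t b m a) := NC_le (mem_NC _)
  have hSn : ex t (theta t b m a (S ^ n)) = 1 := by rw [map_pow, map_pow, hS, one_pow]
  let r : NC S →* NC (theta t b m a S) :=
    ((theta t b m a).comp (NC S).subtype).codRestrict _ (fun x => hle x.2)
  have hr : ∀ k, ((r k : NC (theta t b m a S)) : FreeGroup X) = theta t b m a k := fun k => rfl
  refine ⟨ι, fun h => idx (theta t b m a h), Ψ.comp r, ?_, ?_, ?_⟩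
  · intro u v huv
    rw [← theta_mem_iff htb hm a hS, map_mul, map_inv]
    exact h1 _ _ huv
  · intro k
    rw [MonoidHom.comp_apply, h2, hr, ← map_pow, theta_mem_iff htb hm a hSn]
  · intro u
    obtain ⟨c, d, hc⟩ := h3 (theta t b m a u)
    refine ⟨c, d, ?_⟩
    rw [← hc, MonoidHom.comp_apply]
    congr 1
    ext
    simp [hr]

end
end OneRel

namespace OneRel
open FreeGroup (of mk)
variable {X : Type}

theorem hom_eq_of_letters {A : Type*} {G : Type*} [Group G] (f g : FreeGroup A →* G) (w : FreeGroup A)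
    (h : ∀ l ∈ (wd w), f (of l.1) = g (of l.1)) : f w = g w := by
  have : ∀ L : List (A × Bool), (∀ l ∈ L, f (of l.1) = g (of l.1)) → f (mk L) = g (mk L) := by
    intro L
    induction L with
    | nil => intro _; rw [← FreeGroup.one_eq_mk, map_one, map_one]
    | cons a L ih =>
      intro hL
      have e : (mk (a :: L) : FreeGroup A) = mk [a] * mk L := by simp [FreeGroup.mul_mk]
      have e2 : f (mk [a]) = g (mk [a]) := by
        have h3 := hL a (by simp)
        rcases a with ⟨a, b⟩
        cases b
        · have : (mk [(a, false)] : FreeGroup A) = (of a)⁻¹ := by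
            simp [FreeGroup.of, FreeGroup.inv_mk, FreeGroup.invRev]
          rw [this, map_inv, map_inv, h3]
        · exact h3
      rw [e, map_mul, map_mul, e2, ih (fun l hl => hL l (by simp [hl]))]
  have h2 := this (wd w) h
  rwa [mk_wd] at h2

theorem norm_hom_le {A B : Type*} (f : FreeGroup A →* FreeGroup B)
    (h : ∀ a, nrm (f (of a)) ≤ 1) (w : FreeGroup A) : nrm (f w) ≤ nrm w := by
  have : ∀ L : List (A × Bool), nrm (f (mk L)) ≤ L.length := by
    intro L
    induction L with
    | nil => rw [← FreeGroup.one_eq_mk, map_one]; simp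
    | cons a L ih =>
      have e : (mk (a :: L) : FreeGroup A) = mk [a] * mk L := by simp [FreeGroup.mul_mk]
      have e2 : nrm (f (mk [a])) ≤ 1 := by
        rcases a with ⟨a, b⟩
        cases b
        · have : (mk [(a, false)] : FreeGroup A) = (of a)⁻¹ := by
            simp [FreeGroup.of, FreeGroup.inv_mk, FreeGroup.invRev]
          rw [this, map_inv, nrm_inv]; exact h a
        · exact h a
      rw [e, map_mul]
      refine (nrm_mul_le _ _).trans ?_
      simp only [List.length_cons]; omega
  have h2 := this (wd w)
  rwa [mk_wd] at h2

/-- rewriting homomorphism -/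
noncomputable def rwh (t : X) : FreeGroup X →* Wr ℤ (FreeGroup ({c : X // c ≠ t} × ℤ)) :=
  open Classical in
  FreeGroup.lift (fun z => if h : z = t then ⟨Equiv.addRight 1, fun _ => 1⟩ else
    ⟨1, fun k => of (⟨z, h⟩, -k)⟩)

/-- `(c,k) ↦ t^k c t^{-k}` -/
noncomputable def emb (t : X) : FreeGroup ({c : X // c ≠ t} × ℤ) →* FreeGroup X :=
  FreeGroup.lift (fun p => of t ^ p.2 * of p.1.1 * (of t ^ p.2)⁻¹)

theorem rwh_p (t : X) (w : FreeGroup X) (k : ℤ) : (rwh t w).p k = k + (ex t w).toAdd := by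
  have : Wr.pHom.comp (rwh t) =
      (MonoidHom.mk' (fun z : Multiplicative ℤ => (Equiv.addRight z.toAdd : Equiv.Perm ℤ))
      (by intro x y; ext k; simp; ring)).comp (ex t) := by
    ext z k
    by_cases h : z = t
    · subst h; simp [Wr.pHom, ex, rwh]
    · simp [Wr.pHom, ex, rwh, h]
  exact congrArg (fun e => e k) (DFunLike.congr_fun this w)

theorem rwh_emb (t : X) (w : FreeGroup X) (hw : ex t w = 1) : emb t ((rwh t w).c 0) = w := by
  have := Wr.equivariant (rwh t) (MonoidHom.id _) (fun k u => of t ^ k * emb t u) (by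
    intro a q π
    by_cases h : a = t
    · subst h
      simp [rwh, zpow_add]
      rw [← mul_assoc, mul_zpow_self, mul_self_zpow]
    · simp [rwh, h, emb, mul_assoc]) w 0 1
  rw [rwh_p, hw] at this
  simpa using this

/-- number of letters different from `t` -/
noncomputable def cnt (t : X) (w : FreeGroup X) : ℕ :=
  open Classical in ((wd w).filter (fun l => l.1 ≠ t)).length

open Classical in
theorem norm_rwh_le (t : X) (g : FreeGroup X →* FreeGroup X)
    (hg : ∀ z k, nrm ((rwh t (g (of z))).c k) ≤ if z = t then 0 else 1) (w : FreeGroup X) (k : ℤ) :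
    nrm ((rwh t (g w)).c k) ≤ cnt t w := by
  have : ∀ (L : List (X × Bool)) (k : ℤ), nrm ((rwh t (g (mk L))).c k) ≤
      (L.filter (fun l => l.1 ≠ t)).length := by
    intro L
    induction L with
    | nil => intro k; rw [← FreeGroup.one_eq_mk, map_one, map_one]; simp
    | cons a L ih =>
      intro k
      have e : (mk (a :: L) : FreeGroup X) = mk [a] * mk L := by simp [FreeGroup.mul_mk]
      have e2 : ∀ k, nrm ((rwh t (g (mk [a]))).c k) ≤ if a.1 = t then 0 else 1 := by
        intro k
        rcases a with ⟨a, b⟩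
        cases b
        · have : (mk [(a, false)] : FreeGroup X) = (of a)⁻¹ := by
            simp [FreeGroup.of, FreeGroup.inv_mk, FreeGroup.invRev]
          rw [this, map_inv, map_inv, Wr.inv_c, nrm_inv]; exact hg a _
        · exact hg a k
      rw [e, map_mul, map_mul, Wr.mul_c]
      refine (nrm_mul_le _ _).trans ?_
      refine (add_le_add (e2 _) (ih k)).trans ?_
      rw [List.filter_cons]
      by_cases h : a.1 = t <;> simp [h]; omega
  have h2 := this (wd w) k
  rwa [mk_wd] at h2

theorem cnt_lt (t : X) (w : FreeGroup X) (h : ¬ Omits w t) :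
    cnt t w < nrm w := by
  classical
  rw [omits_iff] at h
  push Not at h
  obtain ⟨l, hl, hl2⟩ := h
  unfold nrm cnt
  refine lt_of_le_of_ne (List.length_filter_le _ _) fun h => ?_
  rw [List.length_filter_eq_length_iff] at h
  simpa [hl2] using h l hl

/-- letters at bounded level -/
abbrev XM (t x : X) (M : ℕ) : Type :=
  {p : {c : X // c ≠ t} × ℤ // p.1.1 = x → 0 ≤ p.2 ∧ p.2 ≤ M}

/-- embedding of the bounded-level free group -/
noncomputable def embM (t x : X) (M : ℕ) : FreeGroup (XM t x M) →* FreeGroup X :=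
  FreeGroup.lift (fun p => of t ^ p.1.2 * of p.1.1.1 * (of t ^ p.1.2)⁻¹)

theorem kill_map {A B : Type} (e : A → B) (he : Function.Injective e) (y : A) (w : FreeGroup A) :
    kill (e y) (FreeGroup.map e w) = FreeGroup.map e (kill y w) := by
  have : (kill (e y)).comp (FreeGroup.map e) = (FreeGroup.map e).comp (kill y) := by
    ext a
    by_cases h : a = y
    · simp [kill, h]
    · simp [kill, h, he.eq_iff]
  exact DFunLike.congr_fun this w

theorem omits_map {A B : Type} (e : A → B) (he : Function.Injective e) (y : A) (w : FreeGroup A) :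
    Omits (FreeGroup.map e w) (e y) ↔ Omits w y := by
  unfold Omits
  rw [kill_map e he]
  exact (FreeGroup.map_injective he).eq_iff

theorem core_setup {t x : X} (htx : x ≠ t) {R : FreeGroup X} (hR : NotPow R) (hex : ex t R = 1)
    (hx : Ess R x) (N : ℕ) (hN : nrm ((rwh t R).c 0) ≤ N) :
    ∃ (M : ℕ) (S : FreeGroup (XM t x M)), nrm S ≤ N ∧ NotPow S ∧
      Ess S ⟨(⟨x, htx⟩, 0), fun _ => ⟨le_rfl, by positivity⟩⟩ ∧
      Ess S ⟨(⟨x, htx⟩, M), fun _ => ⟨by positivity, le_rfl⟩⟩ ∧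
      (∃ g, g * R * g⁻¹ = embM t x M S) ∧
      (Ess R t → ∃ p : XM t x M, p.1.2 ≠ 0 ∧ Ess S p) := by
  classical
  obtain ⟨g, hg⟩ := exists_minConj ((rwh t R).c 0)
  obtain ⟨S2, hS2⟩ : ∃ S2, S2 = g * ((rwh t R).c 0) * g⁻¹ := ⟨_, rfl⟩
  rw [← hS2] at hg
  have hS2n : nrm S2 ≤ N := by
    refine (hg g⁻¹).trans ((le_of_eq ?_).trans hN)
    congr 1; rw [hS2]; group
  have hS2R : emb t S2 = emb t g * R * (emb t g)⁻¹ := by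
    rw [hS2, map_mul, map_mul, rwh_emb t R hex, map_inv]
  -- the x-levels
  let A : Finset ℤ := ((wd S2).filter (fun l => l.1.1.1 = x)).toFinset.image (fun l => l.1.2)
  have hA : ∀ k, k ∈ A ↔ ¬ Omits S2 (⟨x, htx⟩, k) := by
    intro k
    rw [omits_iff]
    simp only [A, Finset.mem_image, List.mem_toFinset, List.mem_filter, decide_eq_true_eq]
    push Not
    constructor
    · rintro ⟨l, ⟨hl, hlx⟩, rfl⟩
      exact ⟨l, hl, Prod.ext (Subtype.ext hlx) rfl⟩
    · rintro ⟨l, hl, hlx⟩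
      exact ⟨l, ⟨hl, by rw [hlx]⟩, by rw [hlx]⟩
  have hAne : A.Nonempty := by
    rw [Finset.nonempty_iff_ne_empty]
    intro hAe
    refine hx (emb t g) ?_
    rw [← hS2R]
    refine hom_eq_of_letters ((kill x).comp (emb t)) (emb t) S2 ?_
    intro l hl
    have hlx : l.1.1.1 ≠ x := by
      intro h
      have : l.1.2 ∈ A := by
        simp only [A, Finset.mem_image, List.mem_toFinset, List.mem_filter, decide_eq_true_eq]
        exact ⟨l, ⟨hl, h⟩, rfl⟩
      rw [hAe] at this; simp at this
    simp [emb, kill, hlx, htx.symm]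
  obtain ⟨k0, hk0⟩ : ∃ k, k = A.min' hAne := ⟨_, rfl⟩
  obtain ⟨k1, hk1⟩ : ∃ k, k = A.max' hAne := ⟨_, rfl⟩
  have hk0A : k0 ∈ A := hk0 ▸ A.min'_mem hAne
  have hk1A : k1 ∈ A := hk1 ▸ A.max'_mem hAne
  have hle0 : ∀ k ∈ A, k0 ≤ k := fun k hk => hk0 ▸ A.min'_le k hk
  have hle1 : ∀ k ∈ A, k ≤ k1 := fun k hk => hk1 ▸ A.le_max' k hk
  obtain ⟨M, hM⟩ : ∃ M : ℕ, (M : ℤ) = k1 - k0 := ⟨(k1 - k0).toNat, by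
    have := hle0 k1 hk1A; omega⟩
  let sh : XM t x M → {c : X // c ≠ t} × ℤ := fun p => (p.1.1, p.1.2 + k0)
  have hsh : Function.Injective sh := by
    intro p q h
    simp only [sh, Prod.mk.injEq, add_left_inj] at h
    exact Subtype.ext (Prod.ext h.1 h.2)
  let back : FreeGroup ({c : X // c ≠ t} × ℤ) →* FreeGroup (XM t x M) :=
    FreeGroup.lift (fun p => if h : p.1.1 = x → 0 ≤ p.2 - k0 ∧ p.2 - k0 ≤ M
      then of ⟨(p.1, p.2 - k0), h⟩ else 1)
  obtain ⟨S, hS⟩ : ∃ S, S = back S2 := ⟨_, rfl⟩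
  have hmapS : FreeGroup.map sh S = S2 := by
    rw [hS]
    refine hom_eq_of_letters ((FreeGroup.map sh).comp back) (MonoidHom.id _) S2 ?_
    intro l hl
    have hl2 : l.1.1.1 = x → 0 ≤ l.1.2 - k0 ∧ l.1.2 - k0 ≤ M := by
      intro h
      have : l.1.2 ∈ A := by
        simp only [A, Finset.mem_image, List.mem_toFinset, List.mem_filter, decide_eq_true_eq]
        exact ⟨l, ⟨hl, h⟩, rfl⟩
      have h1 := hle0 _ this
      have h2 := hle1 _ this
      constructor <;> omega
    simp only [MonoidHom.comp_apply, back, FreeGroup.lift_apply_of, MonoidHom.id_apply]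
    rw [dif_pos hl2, FreeGroup.map.of]
    simp [sh]
  have hSn : nrm S ≤ nrm S2 := by
    rw [hS]
    refine norm_hom_le _ ?_ _
    intro a
    simp only [back, FreeGroup.lift_apply_of]
    split_ifs <;> simp
  have hSmin : MinConj S := by
    intro h
    have h1 := hg (FreeGroup.map sh h)
    have h2 : nrm (FreeGroup.map sh (h * S * h⁻¹)) ≤ nrm (h * S * h⁻¹) :=
      norm_hom_le _ (by intro a; simp) _
    rw [map_mul, map_mul, map_inv, hmapS] at h2
    exact (hSn.trans h1).trans h2
  have hess : ∀ p, ¬ Omits S2 (sh p) → Ess S p := by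
    intro p hp
    refine hSmin.ess ?_
    rwa [← omits_map sh hsh, hmapS]
  have hemb : embM t x M S = (of t ^ (-k0) * emb t g) * R * (of t ^ (-k0) * emb t g)⁻¹ := by
    obtain ⟨T, hT⟩ : ∃ T, T = of t ^ k0 := ⟨_, rfl⟩
    have : (emb t).comp (FreeGroup.map sh) =
        (MulAut.conj T).toMonoidHom.comp (embM t x M) := by
      ext p
      simp only [MonoidHom.comp_apply, FreeGroup.map.of, emb, embM, sh, FreeGroup.lift_apply_of,
        MulEquiv.toMonoidHom_eq_coe, MonoidHom.coe_coe, MulAut.conj_apply]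
      rw [add_comm, zpow_add, ← hT]; group
    have h1 := DFunLike.congr_fun this S
    simp only [MonoidHom.comp_apply, hmapS, hS2R] at h1
    have h2 : embM t x M S = of t ^ (-k0) * (emb t g * R * (emb t g)⁻¹) * (of t ^ (-k0))⁻¹ := by
      rw [h1, zpow_neg, ← hT]; simp [mul_assoc]
    rw [h2]; group
  refine ⟨M, S, hSn.trans hS2n, ?_, ?_, ?_, ⟨_, hemb.symm⟩, ?_⟩
  · intro U k hk e
    refine (hR.conj (of t ^ (-k0) * emb t g)) (embM t x M U) k hk ?_
    rw [← hemb, e, map_pow]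
  · apply hess
    simp only [sh, zero_add]
    exact (hA _).1 hk0A
  · apply hess
    simp only [sh]
    have : (M : ℤ) + k0 = k1 := by omega
    rw [this]
    exact (hA _).1 hk1A
  · intro ht
    by_contra hno
    push Not at hno
    refine ht (of t ^ (-k0) * emb t g) ?_
    rw [← hemb]
    refine hom_eq_of_letters ((kill t).comp (embM t x M)) (embM t x M) S ?_
    intro l hl
    have : l.1.1.2 = 0 := by
      by_contra h
      refine hno l.1 h (hSmin.ess ?_)
      rw [omits_iff]
      push Not
      exact ⟨l, hl, rfl⟩
    simp [embM, kill, this, l.1.1.1.2]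

end OneRel

namespace OneRel
open HNNExtension HNNExtension.NormalWord

section
variable {G : Type*} [Group G] {A B : Subgroup G} (φ : A ≃* B)

/-- product of a list of syllables -/
def lprod (l : List (ℤˣ × G)) : HNNExtension G A B φ :=
  (l.map (fun x => t ^ (x.1 : ℤ) * of x.2)).prod

/-- reducedness -/
def Red (A B : Subgroup G) (l : List (ℤˣ × G)) : Prop :=
  l.IsChain (fun a b => a.2 ∈ toSubgroup A B a.1 → a.1 = b.1)

theorem lprod_append (l m : List (ℤˣ × G)) : lprod φ (l ++ m) = lprod φ l * lprod φ m := by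
  simp [lprod]

theorem tconj (u : ℤˣ) (r : G) (hr : r ∈ toSubgroup A B u) :
    ∃ r' : G, (t ^ (u : ℤ) * of r * t ^ (-(u : ℤ)) : HNNExtension G A B φ) = of r' := by
  rcases Int.units_eq_one_or u with rfl | rfl
  · refine ⟨φ ⟨r, hr⟩, ?_⟩
    rw [equiv_eq_conj]; simp
  · refine ⟨φ.symm ⟨r, hr⟩, ?_⟩
    rw [equiv_symm_eq_conj]; simp

theorem conj_red (n : ℕ) : ∀ (g : G) (l : List (ℤˣ × G)), Red A B l → l.length ≤ n →
    ∃ c : HNNExtension G A B φ, (∃ h, c * (of g * lprod φ l) * c⁻¹ = of h) ∨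
      (∃ l' : List (ℤˣ × G), l' ≠ [] ∧ Red A B l' ∧
        (∀ x ∈ l'.getLast?, ∀ y ∈ l'.head?, x.2 ∈ toSubgroup A B x.1 → x.1 = y.1) ∧
        c * (of g * lprod φ l) * c⁻¹ = lprod φ l') := by
  induction n using Nat.strong_induction_on with
  | _ n ih =>
  intro g l hl hn
  rcases List.eq_nil_or_concat l with rfl | ⟨ini, ⟨u, r⟩, rfl⟩
  · exact ⟨1, Or.inl ⟨g, by simp [lprod]⟩⟩
  · simp only [List.concat_eq_append] at *
    have hl' : Red A B (ini ++ [(u, r * g)]) := by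
      unfold Red at *
      rw [List.isChain_append] at *
      refine ⟨hl.1, by simp, ?_⟩
      intro x hx y hy
      simp only [List.head?_cons, Option.mem_def, Option.some.injEq] at hy
      subst hy
      exact hl.2.2 x hx (u, r) (by simp)
    have e1 : (of g)⁻¹ * (of g * lprod φ (ini ++ [(u, r)])) * of g =
        lprod φ (ini ++ [(u, r * g)]) := by
      rw [lprod_append, lprod_append]
      simp [lprod, mul_assoc]
    by_cases hcyc : (∀ x ∈ (ini ++ [(u, r * g)]).getLast?, ∀ y ∈ (ini ++ [(u, r * g)]).head?,
        x.2 ∈ toSubgroup A B x.1 → x.1 = y.1)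
    · exact ⟨(of g)⁻¹, Or.inr ⟨_, by simp, hl', hcyc, by rw [inv_inv, e1]⟩⟩
    · cases ini with
      | nil => simp at hcyc
      | cons a mid =>
        push Not at hcyc
        obtain ⟨x, hx, y, hy, h1, h2⟩ := hcyc
        rw [List.getLast?_append_of_ne_nil _ (by simp)] at hx
        obtain rfl : (u, r * g) = x := by simpa using hx
        obtain rfl : a = y := by simpa using hy
        obtain ⟨r', hr'⟩ := tconj φ u _ h1
        have hua : a.1 = -u := by
          rw [← Int.units_ne_iff_eq_neg]; exact fun h => h2 h.symm
        obtain ⟨c, hc⟩ := ih (mid.length) (by simp at hn; omega) (r' * a.2) mid (by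
          unfold Red at *
          rw [List.cons_append, List.isChain_cons, List.isChain_append] at hl'
          exact hl'.2.1) le_rfl
        have e2 : (t ^ (u : ℤ) * of (r * g)) * ((of g)⁻¹ *
            (of g * lprod φ ((a :: mid) ++ [(u, r)])) * of g) * (t ^ (u : ℤ) * of (r * g))⁻¹ =
            of (r' * a.2) * lprod φ mid := by
          rw [e1, List.cons_append]
          have : lprod φ (a :: (mid ++ [(u, r * g)])) =
              t ^ (a.1 : ℤ) * of a.2 * lprod φ mid * (t ^ (u : ℤ) * of (r * g)) := by
            simp [lprod, mul_assoc]
          rw [this, map_mul _ r' a.2, ← hr', hua]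
          simp [mul_assoc]
        refine ⟨c * (t ^ (u : ℤ) * of (r * g)) * (of g)⁻¹, ?_⟩
        have e3 : (c * (t ^ (u : ℤ) * of (r * g)) * (of g)⁻¹) *
            (of g * lprod φ ((a :: mid) ++ [(u, r)])) *
            (c * (t ^ (u : ℤ) * of (r * g)) * (of g)⁻¹)⁻¹ =
            c * (of (r' * a.2) * lprod φ mid) * c⁻¹ := by
          rw [← e2]; group
        rw [e3]
        exact hc

theorem hnn_torsionFree (hG : ∀ (g : G) (k : ℕ), k ≠ 0 → g ^ k = 1 → g = 1)
    (e : HNNExtension G A B φ) (k : ℕ) (hk : k ≠ 0) (he : e ^ k = 1) : e = 1 := by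
  obtain ⟨d⟩ := TransversalPair.nonempty G A B
  have hw : of (e • (empty : NormalWord d)).head * lprod φ (e • (empty : NormalWord d)).toList = e := by
    have := prod_smul (φ := φ) e (empty : NormalWord d)
    rw [prod_empty, mul_one] at this
    exact this
  obtain ⟨c, hc⟩ := conj_red φ _ (e • (empty : NormalWord d)).head (e • (empty : NormalWord d)).toList
    (e • (empty : NormalWord d)).chain le_rfl
  rw [hw] at hc
  have hck : (c * e * c⁻¹) ^ k = 1 := by rw [conj_pow, he]; simp
  have hfin : c * e * c⁻¹ = 1 → e = 1 := by
    intro h; simpa using h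
  rcases hc with ⟨h, hh⟩ | ⟨l, hl1, hl2, hl3, hl4⟩
  · apply hfin
    rw [hh] at hck ⊢
    rw [← map_pow, ← map_one (of : G →* HNNExtension G A B φ)] at hck
    rw [hG h k hk (of_injective φ hck), map_one]
  · exfalso
    rw [hl4] at hck
    have key : ∀ j : ℕ, Red A B (List.replicate (j + 1) l).flatten ∧
        (List.replicate (j + 1) l).flatten.head? = l.head? ∧
        lprod φ (List.replicate (j + 1) l).flatten = lprod φ l ^ (j + 1) := by
      intro j
      induction j with
      | zero => simpa using hl2
      | succ j ih =>
        rw [List.replicate_succ, List.flatten_cons]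
        refine ⟨?_, ?_, ?_⟩
        · unfold Red at *
          rw [List.isChain_append]
          refine ⟨hl2, ih.1, ?_⟩
          rw [ih.2.1]
          exact hl3
        · rw [List.head?_append_of_ne_nil _ hl1]
        · rw [lprod_append, ih.2.2, pow_succ' _ (j + 1)]
    obtain ⟨j, rfl⟩ := Nat.exists_eq_succ_of_ne_zero hk
    obtain ⟨h1, h2, h3⟩ := key j
    have h4 := ReducedWord.toList_eq_nil_of_mem_of_range φ ⟨1, _, h1⟩ (by
      refine ⟨1, ?_⟩
      have : (ReducedWord.prod φ ⟨1, _, h1⟩ : HNNExtension G A B φ) =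
        of 1 * lprod φ (List.replicate (j + 1) l).flatten := rfl
      rw [this, h3]
      simpa using hck.symm)
    simp at h4
    exact hl1 h4
end
end OneRel

namespace OneRel
open HNNExtension HNNExtension.NormalWord

section
variable {G : Type*} [Group G] {A B : Subgroup G} (φ : A ≃* B)

theorem exists_transversal : ∃ d : TransversalPair G A B, ∀ u, (1 : G) ∈ d.set u := by
  choose s hs using fun u : ℤˣ => (toSubgroup A B u).exists_isComplement_right 1
  exact ⟨⟨s, fun u => (hs u).1⟩, fun u => (hs u).2⟩

theorem t_step {d : TransversalPair G A B} (q : NormalWord d) :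
    (((t : HNNExtension G A B φ) • q).head = φ ((d.compl 1).equiv q.head).1 ∧
      ((t : HNNExtension G A B φ) • q).toList = (1, (((d.compl 1).equiv q.head).2 : G)) :: q.toList) ∨
    ∃ (h : q.head ∈ A) (r : G) (w : List (ℤˣ × G)), r ∈ d.set (-1) ∧ q.toList = (-1, r) :: w ∧
      ((t : HNNExtension G A B φ) • q).head = φ ⟨q.head, h⟩ * r ∧
      ((t : HNNExtension G A B φ) • q).toList = w := by
  rw [t_smul_eq_unitsSMul]
  by_cases hc : Cancels 1 q
  · right
    cases q using consRecOn with
    | ofGroup g => simp [Cancels, ofGroup] at hc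
    | cons g u w h1 h2 =>
      have hu : u = -1 := by
        have := hc.2
        simpa using this
      subst hu
      refine ⟨hc.1, w.head, w.toList, h1, by simp [cons], ?_⟩
      unfold unitsSMul
      rw [dif_pos hc]
      simp only [unitsSMulWithCancel, consRecOn_cons]
      constructor
      · rw [group_smul_head]; rfl
      · rw [group_smul_toList]
  · left
    unfold unitsSMul
    rw [dif_neg hc]
    constructor
    · rfl
    · simp only [cons, group_smul_head, group_smul_toList, inv_mul_cancel_right]
      rfl
end

section
variable {K L G Q Y : Type} [Group K] [Group L] [Group G] [Group Q] [Group Y]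
  (pL : K →* L) (ψ : pL.ker →* Q)

/-- inclusion of the kernel in the `w`-th free factor, extended by `1` -/
noncomputable def JJ (w : List (ℤˣ × L)) (k : K) :
    Monoid.CoprodI (fun _ : List (ℤˣ × L) => Q) :=
  open Classical in
  if h : k ∈ pL.ker then Monoid.CoprodI.of (M := fun _ : List (ℤˣ × L) => Q) (i := w) (ψ ⟨k, h⟩) else 1

theorem JJ_eq (w : List (ℤˣ × L)) {k : K} (h : k ∈ pL.ker) : JJ pL ψ w k =
    Monoid.CoprodI.of (M := fun _ : List (ℤˣ × L) => Q) (i := w) (ψ ⟨k, h⟩) := by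
  rw [JJ, dif_pos h]

theorem JJ_mul (w : List (ℤˣ × L)) {k k' : K} (h : pL k = 1) (h' : pL k' = 1) :
    JJ pL ψ w (k * k') = JJ pL ψ w k * JJ pL ψ w k' := by
  have h1 : k ∈ pL.ker := h
  have h2 : k' ∈ pL.ker := h'
  rw [JJ_eq _ _ _ h1, JJ_eq _ _ _ h2, JJ_eq _ _ _ (mul_mem h1 h2), ← map_mul, ← map_mul]
  rfl

theorem JJ_one (w : List (ℤˣ × L)) : JJ pL ψ w 1 = 1 := by
  have := JJ_mul pL ψ w (map_one pL) (map_one pL)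
  simpa using this

theorem section_aux {A : Subgroup L} {T : Set L} (hc : Subgroup.IsComplement (A : Set L) T) (i : Y →* K)
    (e : Y ≃* A) (h : ∀ y, (e y : L) = pL (i y)) (s0 : L → K) (hs0 : ∀ l, pL (s0 l) = l) :
    ∃ σ : L → K, (∀ l, σ l = i (e.symm (hc.equiv l).1) * s0 (hc.equiv l).2) ∧
      (∀ l, pL (σ l) = l) ∧ (∀ y l, σ (pL (i y) * l) = i y * σ l) ∧
      (∀ y r, r ∈ T → σ (pL (i y) * r) = i y * s0 r) := by
  have key : ∀ (y : Y) (r : L) (hr : r ∈ T), hc.equiv (pL (i y) * r) = (e y, ⟨r, hr⟩) := by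
    intro y r hr
    rw [← h, ← Equiv.eq_symm_apply]
    exact (hc.equiv_symm_apply (e y, ⟨r, hr⟩)).symm
  have h4 : ∀ y r, (hr : r ∈ T) → i (e.symm (hc.equiv (pL (i y) * r)).1) *
      s0 (hc.equiv (pL (i y) * r)).2 = i y * s0 r := by
    intro y r hr
    rw [key y r hr]
    simp
  refine ⟨_, fun l => rfl, ?_, ?_, h4⟩
  · intro l
    rw [map_mul, ← h, hs0, e.apply_symm_apply]
    exact hc.equiv_fst_mul_equiv_snd l
  · intro y l
    have hl : l = pL (i (e.symm (hc.equiv l).1)) * (hc.equiv l).2 := by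
      rw [← h, e.apply_symm_apply]
      exact (hc.equiv_fst_mul_equiv_snd l).symm
    have h5 := h4 (y * e.symm (hc.equiv l).1) _ (hc.equiv l).2.2
    rw [map_mul i, map_mul pL, mul_assoc (pL (i y)), ← hl] at h5
    rw [h5, mul_assoc]

variable {A B : Subgroup L} (φ : A ≃* B) (d : TransversalPair L A B)

/-- the action of `K` -/
noncomputable def aK (σ : L → K) (hσ : ∀ l, pL (σ l) = l) :
    K →* Wr (NormalWord d) (Monoid.CoprodI (fun _ : List (ℤˣ × L) => Q)) where
  toFun k := ⟨MulAction.toPerm (of (pL k) : HNNExtension L A B φ),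
    fun q => JJ pL ψ q.toList ((σ (pL k * q.head))⁻¹ * k * σ q.head)⟩
  map_one' := by
    refine Wr.ext (Equiv.ext fun q => ?_) (funext fun q => ?_)
    · simp
    · simp [JJ_one]
  map_mul' k k' := by
    refine Wr.ext (Equiv.ext fun q => ?_) (funext fun q => ?_)
    · simp [mul_smul]
    · simp only [Wr.mul_c, MulAction.toPerm_apply, of_smul_eq_smul, group_smul_toList,
        group_smul_head]
      rw [← JJ_mul]
      · simp [mul_assoc]
      · simp [hσ]
      · simp [hσ]

theorem hnn_wr (iA iB : Y →* K) (eA : Y ≃* A) (eB : Y ≃* B) (hA : ∀ y, (eA y : L) = pL (iA y))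
    (hB : ∀ y, (eB y : L) = pL (iB y)) (hpL : Function.Surjective pL)
    (hψ : Function.Surjective ψ) (ρ : K →* G) (hρ : ∀ ν, ψ ν = 1 → ρ ν = 1) (τ : G)
    (hτ : ∀ y, τ * ρ (iA y) = ρ (iB y) * τ) :
    ∃ (d : TransversalPair L A B)
      (a : K →* Wr (NormalWord d) (Monoid.CoprodI (fun _ : List (ℤˣ × L) => Q)))
      (T : Wr (NormalWord d) (Monoid.CoprodI (fun _ : List (ℤˣ × L) => Q))) (σ : L → K)
      (ev : NormalWord d → Monoid.CoprodI (fun _ : List (ℤˣ × L) => Q) → G),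
      (∀ l, pL (σ l) = l) ∧
      (∀ k q, (a k).p q = (of (pL k) : HNNExtension L A B (eA.symm.trans eB)) • q) ∧
      (∀ q, T.p q = (t : HNNExtension L A B (eA.symm.trans eB)) • q) ∧
      (∀ y, T * a (iA y) = a (iB y) * T) ∧
      (∀ ν q, ν ∈ pL.ker → (a ν).c q = JJ pL ψ q.toList ((σ q.head)⁻¹ * ν * σ q.head)) ∧
      (∀ k q π, ev ((a k).p q) ((a k).c q * π) = ρ k * ev q π) ∧
      (∀ q π, ev (T.p q) (T.c q * π) = τ * ev q π) := by
  obtain ⟨d, hd⟩ := exists_transversal (A := A) (B := B)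
  obtain ⟨s0, hs0, hs1⟩ : ∃ s0 : L → K, (∀ l, pL (s0 l) = l) ∧ s0 1 = 1 := by
    classical
    refine ⟨Function.update (Function.surjInv hpL) 1 1, fun l => ?_, by simp⟩
    by_cases h : l = 1
    · simp [h]
    · simp [Function.update_of_ne h, Function.surjInv_eq]
  -- the two adapted sections
  obtain ⟨σA, hσA, hpA, hAmul, hσA1⟩ := section_aux pL (d.compl 1) iA eA hA s0 hs0
  obtain ⟨σB, hσB, hpB, hBmul, hσB1⟩ := section_aux pL
    (show Subgroup.IsComplement (B : Set L) (d.set (-1)) from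
      by have := d.compl (-1); rwa [toSubgroup_neg_one] at this) iB eB hB s0 hs0
  -- tau of a tail
  obtain ⟨τW, hW⟩ : ∃ τW : List (ℤˣ × L) → G, ∀ w, τW w =
    (w.map (fun x => τ ^ (x.1 : ℤ) * ρ (s0 x.2))).prod := ⟨_, fun _ => rfl⟩
  obtain ⟨β, hβ⟩ : ∃ β : Monoid.CoprodI (fun _ : List (ℤˣ × L) => Q) →* G,
      ∀ w k, pL k = 1 → β (JJ pL ψ w k) = (τW w)⁻¹ * ρ k * τW w := by
    obtain ⟨β0, hβ0⟩ : ∃ β0 : Q →* G, ∀ ν, β0 (ψ ν) = ρ ν := by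
      refine ⟨ψ.liftOfSurjective hψ ⟨ρ.comp pL.ker.subtype, fun ν hν => hρ ν hν⟩, fun ν => ?_⟩
      exact MonoidHom.liftOfRightInverse_comp_apply _ _ (Function.rightInverse_surjInv hψ)
        ⟨ρ.comp pL.ker.subtype, fun ν hν => hρ ν hν⟩ ν
    refine ⟨Monoid.CoprodI.lift fun w => (MulAut.conj (τW w)⁻¹).toMonoidHom.comp β0, ?_⟩
    intro w k hk
    rw [JJ_eq _ _ _ (MonoidHom.mem_ker.2 hk)]
    refine (Monoid.CoprodI.lift_of _ _).trans ?_
    simp [hβ0]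
  -- gauge change
  obtain ⟨U, hUp, hUc⟩ : ∃ U : Wr (NormalWord d) (Monoid.CoprodI (fun _ : List (ℤˣ × L) => Q)),
    U.p = 1 ∧ ∀ q, U.c q = JJ pL ψ q.toList ((σB q.head)⁻¹ * σA q.head) := ⟨⟨1, _⟩, rfl, fun _ => rfl⟩
  obtain ⟨T0, hT0p, hT0c⟩ : ∃ T : Wr (NormalWord d) (Monoid.CoprodI (fun _ : List (ℤˣ × L) => Q)),
    T.p = MulAction.toPerm (t : HNNExtension L A B (eA.symm.trans eB)) ∧ ∀ q, T.c q = 1 :=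
      ⟨⟨_, fun _ => 1⟩, rfl, fun _ => rfl⟩
  have hap : ∀ σ hσ k q, (aK pL ψ (eA.symm.trans eB) d σ hσ k).p q =
      (of (pL k) : HNNExtension L A B (eA.symm.trans eB)) • q := fun _ _ _ _ => rfl
  have hac : ∀ σ hσ k q, (aK pL ψ (eA.symm.trans eB) d σ hσ k).c q =
    JJ pL ψ q.toList ((σ (pL k * q.head))⁻¹ * k * σ q.head) := fun _ _ _ _ => rfl
  have hUa : ∀ k, U * aK pL ψ (eA.symm.trans eB) d σA hpA k =
      aK pL ψ (eA.symm.trans eB) d σB hpB k * U := by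
    intro k
    refine Wr.ext (Equiv.ext fun q => ?_) (funext fun q => ?_)
    · simp [hUp, hap]
    · simp only [Wr.mul_c, hUc, hac, hap, hUp, of_smul_eq_smul, group_smul_toList,
        group_smul_head, Equiv.Perm.coe_one, id]
      rw [← JJ_mul, ← JJ_mul]
      · simp [mul_assoc]
      all_goals simp [hpA, hpB]
  have hT0a : ∀ y, T0 * aK pL ψ (eA.symm.trans eB) d σA hpA (iA y) =
      aK pL ψ (eA.symm.trans eB) d σB hpB (iB y) * T0 := by
    intro y
    refine Wr.ext (Equiv.ext fun q => ?_) (funext fun q => ?_)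
    · simp only [Wr.mul_p, Equiv.Perm.mul_apply, hap, hT0p, MulAction.toPerm_apply, ← mul_smul]
      rw [← hA, t_mul_of, ← hB]
      simp
    · simp only [Wr.mul_c, hT0c, hac, hap, hT0p, of_smul_eq_smul, group_smul_toList,
        group_smul_head, hAmul, hBmul]
      simp [JJ_one, mul_assoc]
  obtain ⟨ev, hev⟩ : ∃ ev : NormalWord d → Monoid.CoprodI (fun _ : List (ℤˣ × L) => Q) → G,
    ∀ q π, ev q π = ρ (σA q.head) * τW q.toList * β π := ⟨_, fun _ _ => rfl⟩
  have hstep : ∀ q : NormalWord d,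
      ρ (σB ((t : HNNExtension L A B (eA.symm.trans eB)) • q).head) *
        τW ((t : HNNExtension L A B (eA.symm.trans eB)) • q).toList =
      τ * (ρ (σA q.head) * τW q.toList) := by
    intro q
    rcases t_step (eA.symm.trans eB) q with ⟨h1, h2⟩ | ⟨h, r, w, hr, h0, h1, h2⟩
    · rw [h1, h2]
      have e1 : σB (((eA.symm.trans eB) ((d.compl 1).equiv q.head).1 : B) : L) =
          iB (eA.symm ((d.compl 1).equiv q.head).1) := by
        have := hσB1 (eA.symm ((d.compl 1).equiv q.head).1) 1 (hd _)
        rw [hs1, mul_one, mul_one, ← hB] at this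
        exact this
      rw [e1, hσA, hW, hW]
      simp only [List.map_cons, List.prod_cons, map_mul, Units.val_one, zpow_one, ← mul_assoc]
      rw [hτ]
      rfl
    · rw [h1, h2, h0]
      have e1 : σB ((((eA.symm.trans eB) ⟨q.head, h⟩ : B) : L) * r) =
          iB (eA.symm ⟨q.head, h⟩) * s0 r := by
        have := hσB1 (eA.symm ⟨q.head, h⟩) r hr
        rw [← hB] at this
        exact this
      have e2 : σA q.head = iA (eA.symm ⟨q.head, h⟩) := by
        have := hσA1 (eA.symm ⟨q.head, h⟩) 1 (hd _)
        rw [hs1, mul_one, mul_one, ← hA] at this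
        simpa using this
      rw [e1, e2, hW, hW]
      simp only [List.map_cons, List.prod_cons, map_mul, Units.val_neg, Units.val_one, zpow_neg,
        zpow_one, ← mul_assoc]
      rw [hτ]
      simp [mul_assoc]
  refine ⟨d, aK pL ψ (eA.symm.trans eB) d σA hpA, U⁻¹ * T0, σA, ev, hpA, fun k q => rfl, ?_, ?_, ?_,
    ?_, ?_⟩
  · intro q
    simp [hUp, hT0p]
  · intro y
    rw [mul_assoc, hT0a, ← mul_assoc, ← mul_assoc]
    congr 1
    rw [inv_mul_eq_iff_eq_mul, ← mul_assoc, hUa]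
    simp
  · intro ν q hν
    rw [hac, MonoidHom.mem_ker.1 hν, one_mul]
  · intro k q π
    simp only [hap, hac, hev, of_smul_eq_smul, group_smul_toList, group_smul_head, map_mul]
    rw [hβ]
    · simp [mul_assoc]
    · simp [hpA]
  · intro q π
    simp only [hev, Wr.mul_p, Wr.mul_c, Wr.inv_p, Wr.inv_c, hUp, hT0p, hT0c, inv_one,
      Equiv.Perm.coe_one, id, one_mul, mul_one, MulAction.toPerm_apply, hUc, map_mul, map_inv]
    rw [hβ _ _ (by simp [hpA, hpB])]
    rw [← mul_assoc τ, ← hstep q]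
    simp only [map_mul, map_inv]
    group
end
end OneRel

namespace OneRel
open Monoid

section coprod
variable {ι : Type*} {M N : ι → Type*} [∀ i, Group (M i)] [∀ i, Group (N i)]

theorem neWord_prod_ne_one [DecidableEq ι] [∀ i, DecidableEq (M i)] {i j : ι} (w : CoprodI.NeWord M i j) : w.prod ≠ 1 := by
  intro h
  have h1 : w.toWord.prod = (CoprodI.Word.empty : CoprodI.Word M).prod := by
    rw [CoprodI.Word.prod_empty]; exact h
  have h2 : w.toWord = CoprodI.Word.empty := CoprodI.Word.equiv.symm.injective h1
  have h3 : w.toWord.toList = [] := by rw [h2]; rfl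
  exact w.toList_ne_nil h3

/-- functoriality -/
noncomputable def cmap (f : ∀ i, M i →* N i) : CoprodI M →* CoprodI N :=
  CoprodI.lift fun i => (CoprodI.of (i := i)).comp (f i)

theorem cmap_of (f : ∀ i, M i →* N i) (i : ι) (m : M i) :
    cmap f (CoprodI.of m) = CoprodI.of (f i m) := CoprodI.lift_of _ _

theorem cmap_neWord (f : ∀ i, M i →* N i) (hf : ∀ i, Function.Injective (f i)) {i j : ι}
    (w : CoprodI.NeWord M i j) : ∃ w' : CoprodI.NeWord N i j, cmap f w.prod = w'.prod := by
  induction w with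
  | singleton x hx =>
    refine ⟨.singleton (f _ x) ?_, ?_⟩
    · intro h; exact hx (hf _ (h.trans (map_one _).symm))
    · rw [CoprodI.NeWord.prod_singleton, CoprodI.NeWord.prod_singleton, cmap_of]
  | append w₁ hne w₂ h1 h2 =>
    obtain ⟨a, ha⟩ := h1
    obtain ⟨b, hb⟩ := h2
    exact ⟨a.append hne b, by rw [CoprodI.NeWord.append_prod, map_mul, ha, hb, CoprodI.NeWord.append_prod]⟩

theorem exists_neWord {g : CoprodI M} (hg : g ≠ 1) :
    ∃ (i j : ι) (w : CoprodI.NeWord M i j), w.prod = g := by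
  classical
  have h1 : CoprodI.Word.equiv g ≠ CoprodI.Word.empty := by
    intro h
    apply hg
    have := congrArg CoprodI.Word.prod h
    rw [CoprodI.Word.prod_empty] at this
    rw [← this]
    exact (CoprodI.Word.equiv.symm_apply_apply g).symm
  obtain ⟨i, j, w, hw⟩ := CoprodI.NeWord.of_word _ h1
  refine ⟨i, j, w, ?_⟩
  unfold CoprodI.NeWord.prod
  rw [hw]
  exact CoprodI.Word.equiv.symm_apply_apply g

theorem cmap_injective (f : ∀ i, M i →* N i) (hf : ∀ i, Function.Injective (f i)) :
    Function.Injective (cmap f) := by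
  classical
  rw [injective_iff_map_eq_one]
  intro g hg
  by_contra h
  obtain ⟨i, j, w, rfl⟩ := exists_neWord h
  obtain ⟨w', hw'⟩ := cmap_neWord f hf w
  exact neWord_prod_ne_one w' (hw'.symm.trans hg)

/-- flattening an iterated free product -/
noncomputable def cflat {W κ : Type} (C : Type) [Group C] :
    CoprodI (fun _ : W => CoprodI (fun _ : κ => C)) →* CoprodI (fun _ : W × κ => C) :=
  CoprodI.lift fun w => CoprodI.lift fun i =>
    (CoprodI.of (M := fun _ : W × κ => C) (i := (w, i)))

theorem cflat_of {W κ : Type} (C : Type) [Group C] (w : W) (i : κ) (c : C) :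
    cflat C (CoprodI.of (M := fun _ : W => CoprodI (fun _ : κ => C)) (i := w)
      (CoprodI.of (M := fun _ : κ => C) (i := i) c)) =
      CoprodI.of (M := fun _ : W × κ => C) (i := (w, i)) c :=
  (CoprodI.lift_of _ _).trans (CoprodI.lift_of _ _)

theorem cflat_injective {W κ : Type} (C : Type) [Group C] :
    Function.Injective (cflat (W := W) (κ := κ) C) := by
  let g : CoprodI (fun _ : W × κ => C) →* CoprodI (fun _ : W => CoprodI (fun _ : κ => C)) :=
    CoprodI.lift fun p => (CoprodI.of (M := fun _ : W => CoprodI (fun _ : κ => C)) (i := p.1)).comp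
      (CoprodI.of (M := fun _ : κ => C) (i := p.2))
  have : g.comp (cflat C) = MonoidHom.id _ := by
    refine CoprodI.ext_hom _ _ fun w => CoprodI.ext_hom _ _ fun i => MonoidHom.ext fun c => ?_
    simp only [MonoidHom.comp_apply, MonoidHom.id_apply]
    rw [cflat_of]
    exact CoprodI.lift_of _ _
  exact Function.LeftInverse.injective (g := g) (fun x => DFunLike.congr_fun this x)
end coprod
end OneRel

namespace OneRel
open FreeGroup (of mk)
variable {X : Type}

section
variable (t x : X) (M : ℕ)

/-- letters which may be shifted up -/
abbrev Y0 : Type := {p : {c : X // c ≠ t} × ℤ // p.1.1 = x → 0 ≤ p.2 ∧ p.2 < M}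

/-- inclusion -/
def jA (p : Y0 t x M) : XM t x M := ⟨p.1, fun h => ⟨(p.2 h).1, (p.2 h).2.le⟩⟩
/-- shift -/
def jB (p : Y0 t x M) : XM t x M := ⟨(p.1.1, p.1.2 + 1), fun h => by
  have := p.2 h
  exact ⟨by simp only; omega, by simp only; omega⟩⟩

theorem jA_inj : Function.Injective (jA t x M) := by
  intro p q h
  simpa [jA, Subtype.ext_iff] using h

theorem jB_inj : Function.Injective (jB t x M) := by
  intro p q h
  simp only [jB, Subtype.mk.injEq, Prod.mk.injEq, add_left_inj] at h
  exact Subtype.ext (Prod.ext h.1 h.2)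

/-- letter at level zero -/
def lz (c : X) (h : c ≠ t) : XM t x M := ⟨(⟨c, h⟩, 0), fun _ => ⟨le_rfl, by simp⟩⟩

theorem omits_map_range {A B : Type} (e : A → B) (y : B) (hy : ∀ a, e a ≠ y) (w : FreeGroup A) :
    Omits (FreeGroup.map e w) y := by
  have : (kill y).comp (FreeGroup.map e) = FreeGroup.map e := by
    ext a
    simp [kill, hy]
  exact DFunLike.congr_fun this w

/-- the universal map -/
noncomputable def uh {Z : Type*} [Group Z] (a : FreeGroup (XM t x M) →* Z) (τ : Z) : FreeGroup X →* Z :=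
  open Classical in
  FreeGroup.lift fun z => if h : z = t then τ else a (of (lz t x M z h))

theorem uh_t {Z : Type*} [Group Z] (a : FreeGroup (XM t x M) →* Z) (τ : Z) :
    uh t x M a τ (of t) = τ := by simp [uh]

theorem uh_ne {Z : Type*} [Group Z] (a : FreeGroup (XM t x M) →* Z) (τ : Z) (z : X) (h : z ≠ t) :
    uh t x M a τ (of z) = a (of (lz t x M z h)) := by simp [uh, h]

theorem embM_lz (z : X) (h : z ≠ t) : embM t x M (of (lz t x M z h)) = of z := by
  simp [embM, lz]

theorem embM_AB (y : FreeGroup (Y0 t x M)) :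
    of t * embM t x M (FreeGroup.map (jA t x M) y) = embM t x M (FreeGroup.map (jB t x M) y) * of t := by
  have : (MulAut.conj (of t)).toMonoidHom.comp ((embM t x M).comp (FreeGroup.map (jA t x M))) =
      (embM t x M).comp (FreeGroup.map (jB t x M)) := by
    ext p
    simp only [MonoidHom.comp_apply, FreeGroup.map.of, embM, FreeGroup.lift_apply_of, jA, jB,
      MulEquiv.coe_toMonoidHom, MulAut.conj_apply]
    group
  have := DFunLike.congr_fun this y
  simp only [MonoidHom.comp_apply, MulEquiv.coe_toMonoidHom, MulAut.conj_apply] at this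
  rw [← this]; group

theorem uh_embM {Z : Type*} [Group Z] (a : FreeGroup (XM t x M) →* Z) (τ : Z)
    (h : ∀ y, τ * a (FreeGroup.map (jA t x M) y) = a (FreeGroup.map (jB t x M) y) * τ)
    (k : FreeGroup (XM t x M)) : uh t x M a τ (embM t x M k) = a k := by
  have key : ∀ (c : X) (hc : c ≠ t) (i : ℤ) (h1 : c = x → 0 ≤ i ∧ i ≤ M) (h2 : c = x → 0 ≤ i + 1 ∧ i + 1 ≤ M),
      τ * a (of ⟨(⟨c, hc⟩, i), h1⟩) * τ⁻¹ = a (of ⟨(⟨c, hc⟩, i + 1), h2⟩) := by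
    intro c hc i h1 h2
    have := h (of ⟨(⟨c, hc⟩, i), fun h => ⟨(h1 h).1, by have := (h2 h).2; simp only; omega⟩⟩)
    simp only [FreeGroup.map.of, jA, jB] at this
    rw [this]; group
  have key2 : ∀ (c : X) (hc : c ≠ t) (m : ℕ) (h1 : c = x → 0 ≤ (m : ℤ) ∧ (m : ℤ) ≤ M),
      τ ^ (m : ℤ) * a (of (lz t x M c hc)) * (τ ^ (m : ℤ))⁻¹ = a (of ⟨(⟨c, hc⟩, m), h1⟩) := by
    intro c hc m
    induction m with
    | zero => intro h1; simp [lz]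
    | succ m ih =>
      intro h1
      have h2 : c = x → 0 ≤ (m : ℤ) ∧ (m : ℤ) ≤ M := fun h => by have := h1 h; push_cast at this; omega
      have := key c hc m h2 (by push_cast at h1; exact h1)
      rw [← ih h2] at this
      push_cast
      rw [← this]
      group
  have key3 : ∀ (c : X) (hc : c ≠ t) (m : ℕ) (hx : c ≠ x) ,
      τ ^ (-(m : ℤ)) * a (of (lz t x M c hc)) * (τ ^ (-(m : ℤ)))⁻¹ =
        a (of ⟨(⟨c, hc⟩, -(m : ℤ)), fun h => absurd h hx⟩) := by
    intro c hc m hx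
    induction m with
    | zero => simp [lz]
    | succ m ih =>
      have := key c hc (-(m + 1 : ℤ)) (fun h => absurd h hx) (fun h => absurd h hx)
      have e : -(m + 1 : ℤ) + 1 = - (m : ℤ) := by ring
      simp only [e] at this
      rw [← ih] at this
      push_cast
      have e2 : a (of ⟨(⟨c, hc⟩, -(m + 1 : ℤ)), fun h => absurd h hx⟩) =
        τ⁻¹ * (τ * a (of ⟨(⟨c, hc⟩, -(m + 1 : ℤ)), fun h => absurd h hx⟩) * τ⁻¹) * τ := by group
      rw [e2, this]
      group
  have : (uh t x M a τ).comp (embM t x M) = a := by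
    ext ⟨⟨⟨c, hc⟩, i⟩, hi⟩
    simp only [MonoidHom.comp_apply, embM, FreeGroup.lift_apply_of, map_mul, map_inv, map_zpow, uh_t]
    rw [uh_ne _ _ _ _ _ c hc]
    rcases Int.eq_nat_or_neg i with ⟨m, rfl | rfl⟩
    · exact key2 c hc m hi
    · by_cases hx : c = x
      · have := (hi hx).1
        have hm : m = 0 := by simp only at this; omega
        subst hm
        simp [lz]
      · exact key3 c hc m hx
  exact DFunLike.congr_fun this k
end
end OneRel

namespace OneRel
open FreeGroup (of mk)
open HNNExtension.NormalWord (TransversalPair)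
variable {X : Type}

theorem core_I3 {X K L Y : Type} [Group K] [Group L] [Group Y] (n : ℕ) (R : FreeGroup X) (S : K)
    {A B : Subgroup L}
    (pL : K →* L) (hker : pL.ker = NC S) (hpL : Function.Surjective pL)
    (iA iB : Y →* K) (eA : Y ≃* A) (eB : Y ≃* B) (hA : ∀ y, (eA y : L) = pL (iA y))
    (hB : ∀ y, (eB y : L) = pL (iB y))
    (e : K →* FreeGroup X) (hR : e S = R) (tt : FreeGroup X)
    (ht : ∀ y, tt * e (iA y) = e (iB y) * tt)
    (hgen : ∀ a : X, of a = tt ∨ ∃ k, of a = e k)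
    (huniv : ∀ (Z : Type) [Group Z] (a : K →* Z) (τ : Z), (∀ y, τ * a (iA y) = a (iB y) * τ) →
      ∃ f : FreeGroup X →* Z, (∀ k, f (e k) = a k) ∧ f tt = τ)
    (lam : FreeGroup X →* HNNExtension L A B (eA.symm.trans eB))
    (hlam : ∀ w, lam w = 1 ↔ w ∈ NC R) (hlame : ∀ k, lam (e k) = HNNExtension.of (pL k))
    (hlamt : lam tt = HNNExtension.t)
    {ι : Type} (idx : K → ι)
    (Ψ : NC S →* Monoid.CoprodI (fun _ : ι => Multiplicative (ZMod n)))
    (h1 : ∀ h h', idx h = idx h' → h⁻¹ * h' ∈ NC S)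
    (h2 : ∀ k, Ψ k = 1 ↔ (k : K) ∈ NC (S ^ n))
    (h3 : ∀ h : K, ∃ (c : Monoid.CoprodI (fun _ : ι => Multiplicative (ZMod n)))
      (a : Multiplicative (ZMod n)), Ψ ⟨h * S * h⁻¹, conj_mem_NC (mem_NC S) h⟩ =
      c * Monoid.CoprodI.of (M := fun _ : ι => Multiplicative (ZMod n)) (i := idx h) a * c⁻¹) :
    I3 n R := by
  -- work with the range
  have hsub : ∀ ν : pL.ker, (ν : K) ∈ NC S := fun ν => hker ▸ ν.2
  obtain ⟨ψ0, hψ0⟩ : ∃ ψ0 : pL.ker →* Monoid.CoprodI (fun _ : ι => Multiplicative (ZMod n)),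
      ∀ ν, ψ0 ν = Ψ ⟨ν, hsub ν⟩ :=
    ⟨Ψ.comp (MulEquiv.subgroupCongr hker).toMonoidHom, fun _ => rfl⟩
  obtain ⟨ρ, hρ⟩ : ∃ ρ : K →* FreeGroup X ⧸ NC (R ^ n), ∀ k, ρ k = QuotientGroup.mk' _ (e k) :=
    ⟨(QuotientGroup.mk' _).comp e, fun _ => rfl⟩
  have hle : NC (S ^ n) ≤ (NC (R ^ n)).comap e := by
    refine NC_le ?_
    rw [Subgroup.mem_comap, map_pow, hR]
    exact mem_NC _
  obtain ⟨d, a, T, σ, ev, hσ, hap, hTp, hTa, hac, hev1, hev2⟩ := hnn_wr pL ψ0.rangeRestrict iA iB eA eB hA hB hpL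
    ψ0.rangeRestrict_surjective ρ (by
      intro ν hν
      have h5 : ψ0 ν = 1 := by
        have := congrArg Subtype.val hν
        simpa using this
      rw [hψ0, h2] at h5
      rw [hρ]
      simpa using hle h5) (QuotientGroup.mk' _ tt) (by
      intro y
      rw [hρ, hρ, ← map_mul, ht, map_mul])
  obtain ⟨f, hfe, hft⟩ := huniv _ a T hTa
  have hfp : ∀ w q, (f w).p q = lam w • q := by
    have : (Wr.pHom).comp f = (MulAction.toPermHom _ _).comp lam := by
      ext z q : 2
      simp only [MonoidHom.comp_apply]
      rcases hgen z with h | ⟨k, h⟩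
      · rw [h, hft, hlamt]; exact hTp q
      · rw [h, hfe, hlame]; exact hap k q
    intro w q
    exact DFunLike.congr_fun (DFunLike.congr_fun this w) q
  have hSker : S ∈ pL.ker := hker ▸ mem_NC S
  have hconj : ∀ k : K, ∀ ν ∈ pL.ker, k⁻¹ * ν * k ∈ pL.ker := by
    intro k ν hν
    have := (inferInstance : pL.ker.Normal).conj_mem ν hν k⁻¹
    simpa using this
  have hRc : ∀ q, (f R).c q = JJ pL ψ0.rangeRestrict q.toList ((σ q.head)⁻¹ * S * σ q.head) := by
    intro q
    rw [← hR, hfe, hac _ _ hSker]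
  obtain ⟨Ψ', hΨ1, hΨ2⟩ := wr_i3 f HNNExtension.NormalWord.empty R n (by
      intro k hk
      rw [hfp, (hlam k).2 hk, one_smul]) (by
      rw [← hR, ← map_pow, hfe]
      refine Wr.ext (Equiv.ext fun q => ?_) (funext fun q => ?_)
      · rw [hap, map_pow, MonoidHom.mem_ker.1 hSker]
        simp
      · rw [hac _ _ (pow_mem hSker n), JJ_eq _ _ _ (hconj _ _ (pow_mem hSker n))]
        have : ψ0.rangeRestrict ⟨(σ q.head)⁻¹ * S ^ n * σ q.head, hconj _ _ (pow_mem hSker n)⟩ = 1 := by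
          apply Subtype.ext
          simp only [MonoidHom.coe_rangeRestrict, OneMemClass.coe_one]
          rw [hψ0, h2]
          simpa using conj_mem_NC (mem_NC (S ^ n)) (σ q.head)⁻¹
        rw [this, map_one]
        rfl) ev (by
      intro z q π
      rcases hgen z with h | ⟨k, h⟩
      · rw [h, hft]; exact hev2 q π
      · rw [h, hfe, hev1, hρ])
  refine ⟨List (ℤˣ × L) × ι, fun h => ((lam h⁻¹ • (HNNExtension.NormalWord.empty :
      HNNExtension.NormalWord d)).toList,
    idx (σ (lam h⁻¹ • (HNNExtension.NormalWord.empty : HNNExtension.NormalWord d)).head)⁻¹),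
    ((cflat _).comp (cmap fun _ => ψ0.range.subtype)).comp Ψ', ?_, ?_, ?_⟩
  · intro h h' hh
    simp only [Prod.mk.injEq] at hh
    have e1 := h1 _ _ hh.2
    rw [inv_inv, ← hker, MonoidHom.mem_ker, map_mul, map_inv pL, hσ, hσ, mul_inv_eq_one] at e1
    have e2 : lam h⁻¹ • (HNNExtension.NormalWord.empty : HNNExtension.NormalWord d) = lam h'⁻¹ • (HNNExtension.NormalWord.empty : HNNExtension.NormalWord d) :=
      HNNExtension.NormalWord.ext e1 hh.1
    have e3 := congrArg (fun w => w.toReducedWord.prod (eA.symm.trans eB)) e2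
    rw [HNNExtension.NormalWord.prod_smul, HNNExtension.NormalWord.prod_smul,
      HNNExtension.NormalWord.prod_empty, mul_one, mul_one] at e3
    rw [← hlam, map_mul, e3, map_inv, inv_mul_cancel]
  · intro k
    rw [← hΨ1]
    have hinj : Function.Injective ((cflat (W := List (ℤˣ × L)) (κ := ι) (Multiplicative (ZMod n))).comp
        (cmap fun _ => ψ0.range.subtype)) := by
      rw [MonoidHom.coe_comp]
      exact (cflat_injective _).comp (cmap_injective _ fun _ => Subtype.val_injective)
    exact map_eq_one_iff _ hinj
  · intro h
    obtain ⟨c, b, hc⟩ := h3 (σ (lam h⁻¹ • (HNNExtension.NormalWord.empty : HNNExtension.NormalWord d)).head)⁻¹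
    rw [MonoidHom.comp_apply, hΨ2, hfp, hRc]
    obtain ⟨q, hq⟩ : ∃ q, q = lam h⁻¹ • (HNNExtension.NormalWord.empty : HNNExtension.NormalWord d) := ⟨_, rfl⟩
    rw [← hq] at hc ⊢
    rw [JJ_eq _ _ _ (hconj _ _ hSker)]
    have e4 : ψ0 ⟨(σ q.head)⁻¹ * S * σ q.head, hconj _ _ hSker⟩ = c * Monoid.CoprodI.of (M := fun _ : ι => Multiplicative (ZMod n)) (i := idx (σ q.head)⁻¹) b * c⁻¹ := by
      rw [hψ0, ← hc]
      congr 2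
      simp
    obtain ⟨v, hv⟩ : ∃ v, v = (f h⁻¹).c HNNExtension.NormalWord.empty := ⟨_, rfl⟩
    rw [← hv]
    refine ⟨((cflat _).comp (cmap fun _ => ψ0.range.subtype)) v⁻¹ *
      cflat _ (Monoid.CoprodI.of (M := fun _ : List (ℤˣ × L) => Monoid.CoprodI (fun _ : ι => Multiplicative (ZMod n))) (i := q.toList) c), b, ?_⟩
    rw [map_mul, map_mul, MonoidHom.comp_apply, MonoidHom.comp_apply, MonoidHom.comp_apply, cmap_of]
    simp only [Subgroup.coe_subtype, MonoidHom.coe_rangeRestrict]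
    rw [e4, map_mul, map_mul, map_mul, map_mul, cflat_of]
    simp only [map_inv, mul_inv_rev, inv_inv, mul_assoc]
    first | rfl | (subst hq; rfl) | (subst hq; simp)
end OneRel

namespace OneRel
open FreeGroup (of mk)
variable {X : Type}

theorem core_main {t x : X} (htx : x ≠ t) (M n : ℕ) (S : FreeGroup (XM t x M)) (hS : Good n S)
    (h0 : ∀ h, Ess S ⟨(⟨x, htx⟩, 0), h⟩) (hM : ∀ h, Ess S ⟨(⟨x, htx⟩, M), h⟩) :
    I1 (embM t x M S) x ∧ I2 (embM t x M S) ∧ I3 n (embM t x M S) ∧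
    ((∃ p : XM t x M, p.1.2 ≠ 0 ∧ Ess S p) → I1 (embM t x M S) t) := by
  obtain ⟨R, hR⟩ : ∃ R, R = embM t x M S := ⟨_, rfl⟩
  rw [← hR]
  obtain ⟨pL, hpLd⟩ : ∃ pL, pL = QuotientGroup.mk' (NC S) := ⟨_, rfl⟩
  have hker : pL.ker = NC S := by rw [hpLd, QuotientGroup.ker_mk']
  have hpL : Function.Surjective pL := by rw [hpLd]; exact QuotientGroup.mk'_surjective _
  have hAinj : Function.Injective (pL.comp (FreeGroup.map (jA t x M))) := by
    rw [injective_iff_map_eq_one]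
    intro y hy
    rw [MonoidHom.comp_apply, ← MonoidHom.mem_ker, hker] at hy
    have := hS.i1 _ (hM (fun _ => ⟨by simp, by simp⟩)) _ (omits_map_range _ _ (by
      rintro ⟨p, hp⟩ hh
      simp only [jA, Subtype.mk.injEq] at hh
      subst hh
      have := (hp rfl).2
      simp at this) y) hy
    exact (map_eq_one_iff _ (FreeGroup.map_injective (jA_inj t x M))).1 this
  have hBinj : Function.Injective (pL.comp (FreeGroup.map (jB t x M))) := by
    rw [injective_iff_map_eq_one]
    intro y hy
    rw [MonoidHom.comp_apply, ← MonoidHom.mem_ker, hker] at hy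
    have := hS.i1 _ (h0 (fun _ => ⟨by simp, by simp⟩)) _ (omits_map_range _ _ (by
      rintro ⟨p, hp⟩ hh
      simp only [jB, Subtype.mk.injEq, Prod.mk.injEq] at hh
      have := (hp (by rw [hh.1])).1
      have := hh.2
      simp at this
      omega) y) hy
    exact (map_eq_one_iff _ (FreeGroup.map_injective (jB_inj t x M))).1 this
  obtain ⟨eA, hA⟩ : ∃ eA : FreeGroup (Y0 t x M) ≃* (pL.comp (FreeGroup.map (jA t x M))).range,
    ∀ y, (eA y : _) = pL (FreeGroup.map (jA t x M) y) := ⟨MonoidHom.ofInjective hAinj, fun y => rfl⟩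
  obtain ⟨eB, hB⟩ : ∃ eB : FreeGroup (Y0 t x M) ≃* (pL.comp (FreeGroup.map (jB t x M))).range,
    ∀ y, (eB y : _) = pL (FreeGroup.map (jB t x M) y) := ⟨MonoidHom.ofInjective hBinj, fun y => rfl⟩
  have hrel : ∀ y, (HNNExtension.t : HNNExtension _ _ _ (eA.symm.trans eB)) *
      (HNNExtension.of.comp pL) (FreeGroup.map (jA t x M) y) =
      (HNNExtension.of.comp pL) (FreeGroup.map (jB t x M) y) * HNNExtension.t := by
    intro y
    rw [MonoidHom.comp_apply, MonoidHom.comp_apply, ← hA, HNNExtension.t_mul_of, ← hB]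
    simp
  obtain ⟨lam, hlame, hlamt⟩ : ∃ lam : FreeGroup X →* HNNExtension _ _ _ (eA.symm.trans eB),
      (∀ k, lam (embM t x M k) = HNNExtension.of (pL k)) ∧ lam (of t) = HNNExtension.t :=
    ⟨uh t x M (HNNExtension.of.comp pL) HNNExtension.t, fun k => uh_embM t x M _ _ hrel k,
      uh_t t x M _ _⟩
  have hgen : ∀ a : X, of a = of t ∨ ∃ k, of a = embM t x M k := by
    intro a
    by_cases h : a = t
    · left; rw [h]
    · right; exact ⟨_, (embM_lz t x M a h).symm⟩
  have hpS : pL S = 1 := by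
    rw [← MonoidHom.mem_ker, hker]; exact mem_NC S
  have hlam : ∀ w, lam w = 1 ↔ w ∈ NC R := by
    have hle : NC R ≤ lam.ker := NC_le (by rw [MonoidHom.mem_ker, hR, hlame, hpS, map_one])
    intro w
    refine ⟨fun hw => ?_, fun hw => hle hw⟩
    obtain ⟨g, hg⟩ : ∃ g : (FreeGroup (XM t x M) ⧸ NC S) →* (FreeGroup X ⧸ NC R), ∀ k, g (pL k) =
        QuotientGroup.mk' (NC R) (embM t x M k) := by
      refine ⟨QuotientGroup.lift (NC S) ((QuotientGroup.mk' (NC R)).comp (embM t x M)) ?_, ?_⟩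
      · have : NC S ≤ ((QuotientGroup.mk' (NC R)).comp (embM t x M)).ker := NC_le (by
          rw [MonoidHom.mem_ker, MonoidHom.comp_apply, ← hR]
          simpa using mem_NC R)
        intro a ha
        exact this ha
      · intro k; rw [hpLd]; rfl
    obtain ⟨μ, hμ1, hμ2⟩ : ∃ μ : HNNExtension _ _ _ (eA.symm.trans eB) →* FreeGroup X ⧸ NC R,
        (∀ l, μ (HNNExtension.of l) = g l) ∧ μ HNNExtension.t = QuotientGroup.mk' (NC R) (of t) := by
      refine ⟨HNNExtension.lift g (QuotientGroup.mk' (NC R) (of t)) ?_, fun l => ?_, ?_⟩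
      · intro a
        obtain ⟨y, rfl⟩ := eA.surjective a
        rw [hA, MulEquiv.trans_apply, MulEquiv.symm_apply_apply, hB, hg, hg, ← map_mul, embM_AB, map_mul]
      · rw [HNNExtension.lift_of]
      · rw [HNNExtension.lift_t]
    have hc : μ.comp lam = QuotientGroup.mk' (NC R) := by
      ext a
      rw [MonoidHom.comp_apply]
      rcases hgen a with h | ⟨k, h⟩
      · rw [h, hlamt, hμ2]
      · rw [h, hlame, hμ1, hg]
    have := DFunLike.congr_fun hc w
    rw [MonoidHom.comp_apply, hw, map_one] at this
    simpa using this.symm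
  have hdown : ∀ u, embM t x M u ∈ NC R → u ∈ NC S := by
    intro u hu
    rw [← hlam, hlame] at hu
    rw [← hker]
    exact HNNExtension.of_injective _ (hu.trans (map_one _).symm)
  refine ⟨?_, ?_, ?_, ?_⟩
  · intro w hw hwR
    have hext : ex t w = 1 := by
      have h1 : (ex t).comp (embM t x M) = 1 := by
        ext p
        simp only [MonoidHom.comp_apply, embM, FreeGroup.lift_apply_of, map_mul, map_inv, map_zpow]
        rw [mul_inv_cancel_comm]
        simp [ex, p.1.1.2]
      have h2 : NC R ≤ (ex t).ker := NC_le (by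
        rw [MonoidHom.mem_ker, hR]; exact DFunLike.congr_fun h1 S)
      exact h2 hwR
    classical
    let r : FreeGroup ({c : X // c ≠ t} × ℤ) →* FreeGroup (XM t x M) :=
      FreeGroup.lift fun p => if h : p.1.1 = x then 1 else of ⟨p, fun h' => absurd h' h⟩
    have h1 : (kill x).comp (emb t) = (embM t x M).comp r := by
      ext p
      by_cases h : p.1.1 = x
      · simp [r, h, emb, kill]
      · simp [r, h, emb, kill, embM, htx.symm]
    have h2 : (kill (⟨(⟨x, htx⟩, 0), fun _ => ⟨by simp, by simp⟩⟩ : XM t x M)).comp r = r := by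
      ext p
      by_cases h : p.1.1 = x
      · simp [r, h, kill]
      · have : p ≠ (⟨x, htx⟩, 0) := by rintro rfl; exact h rfl
        simp [r, h, kill, this]
    have h3 : embM t x M (r ((rwh t w).c 0)) = w := by
      have := DFunLike.congr_fun h1 ((rwh t w).c 0)
      rw [MonoidHom.comp_apply, MonoidHom.comp_apply, rwh_emb t w hext] at this
      rw [← this]; exact hw
    have h4 : r ((rwh t w).c 0) = 1 := by
      refine hS.i1 _ (h0 _) _ (DFunLike.congr_fun h2 _) (hdown _ ?_)
      rw [h3]; exact hwR
    rw [← h3, h4, map_one]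
  · intro w k hk hw
    rw [← hlam] at hw ⊢
    rw [map_pow] at hw
    refine hnn_torsionFree _ ?_ _ k hk hw
    intro l k hk hl
    obtain ⟨v, rfl⟩ := hpL l
    rw [← map_pow, ← MonoidHom.mem_ker, hker] at hl
    rw [← MonoidHom.mem_ker, hker]
    exact hS.i2 v k hk hl
  · obtain ⟨ι, idx, Ψ, h1, h2, h3⟩ := hS.i3
    exact core_I3 n R S pL hker hpL _ _ eA eB hA hB (embM t x M) hR.symm (of t) (embM_AB t x M) hgen
      (fun Z _ a τ h => ⟨uh t x M a τ, fun k => uh_embM t x M _ _ h k, uh_t t x M _ _⟩)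
      lam hlam hlame hlamt idx Ψ h1 h2 h3
  · rintro ⟨p, hp0, hp⟩ w hw hwR
    have h1 : (embM t x M).comp (uh t x M (MonoidHom.id _) 1) = kill t := by
      ext a
      by_cases h : a = t
      · subst h
        simp [uh_t, kill]
      · simp [uh_ne t x M _ _ a h, embM_lz, kill, h]
    have h2 : (kill p).comp (uh t x M (MonoidHom.id _) 1) = (uh t x M (MonoidHom.id _) 1) := by
      ext a
      by_cases h : a = t
      · subst h
        simp [uh_t]
      · have : lz t x M a h ≠ p := by rintro rfl; exact hp0 rfl
        simp [uh_ne t x M _ _ a h, kill, this]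
    have h3 : embM t x M (uh t x M (MonoidHom.id _) 1 w) = w := (DFunLike.congr_fun h1 w).trans hw
    have h4 : uh t x M (MonoidHom.id _) 1 w = 1 := by
      refine hS.i1 p hp _ (DFunLike.congr_fun h2 _) (hdown _ ?_)
      rw [h3]; exact hwR
    rw [← h3, h4, map_one]
end OneRel

namespace OneRel
open FreeGroup (of mk)
variable {X : Type}

theorem I1_of_conj {R : FreeGroup X} {y : X} (g : FreeGroup X) (h : I1 (g * R * g⁻¹) y) : I1 R y := by
  intro w hw hw2
  exact h w hw (by rwa [NC_conj])

theorem I2_of_conj {R : FreeGroup X} (g : FreeGroup X) (h : I2 (g * R * g⁻¹)) : I2 R := by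
  intro w k hk hw
  rw [← NC_conj R g] at *
  exact h w k hk hw

theorem I3_of_conj {n : ℕ} {R : FreeGroup X} (g : FreeGroup X) (h : I3 n (g * R * g⁻¹)) :
    I3 n R := by
  have e := NC_conj R g
  have e2 : NC ((g * R * g⁻¹) ^ n) = NC (R ^ n) := by rw [conj_pow, NC_conj]
  obtain ⟨ι, idx, Ψ, h1, h2, h3⟩ := h
  refine ⟨ι, fun k => idx (k * g⁻¹), Ψ.comp (MulEquiv.subgroupCongr e.symm).toMonoidHom, ?_, ?_, ?_⟩
  · intro a b hab
    have := h1 _ _ hab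
    rw [e] at this
    have := conj_mem_NC this g⁻¹
    convert this using 1; group
  · intro k
    rw [← e2]
    exact h2 _
  · intro k
    obtain ⟨c, a, hc⟩ := h3 (k * g⁻¹)
    refine ⟨c, a, ?_⟩
    rw [← hc]
    simp only [MonoidHom.comp_apply]
    congr 1
    ext
    simp [mul_assoc]

theorem core_step {t x : X} (htx : x ≠ t) {R : FreeGroup X} (n : ℕ) (hR : NotPow R) (hex : ex t R = 1)
    (hx : Ess R x) (N : ℕ) (hN : nrm ((rwh t R).c 0) ≤ N)
    (ih : ∀ (Y : Type) (S : FreeGroup Y), nrm S ≤ N → NotPow S → Good n S) :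
    I1 R x ∧ I2 R ∧ I3 n R ∧ (Ess R t → I1 R t) := by
  obtain ⟨M, S, h1, h2, h3, h4, ⟨g, hg⟩, h6⟩ := core_setup htx hR hex hx N hN
  obtain ⟨c1, c2, c3, c4⟩ := core_main htx M n S (ih _ S h1 h2) (fun _ => h3) (fun _ => h4)
  rw [← hg] at c1 c2 c3 c4
  exact ⟨I1_of_conj g c1, I2_of_conj g c2, I3_of_conj g c3, fun h => I1_of_conj g (c4 (h6 h))⟩

theorem rwh_c_one (t : X) (m : ℕ) (k : ℤ) : (rwh t (of t ^ m)).c k = 1 := by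
  induction m generalizing k with
  | zero => simp
  | succ m ih => rw [pow_succ, map_mul, Wr.mul_c, ih]; simp [rwh]

theorem rwh_c_one' (t : X) (m : ℤ) (k : ℤ) : (rwh t (of t ^ m)).c k = 1 := by
  obtain ⟨m, rfl | rfl⟩ := m.eq_nat_or_neg
  · rw [zpow_natCast, rwh_c_one]
  · rw [zpow_neg, zpow_natCast, map_inv, Wr.inv_c, rwh_c_one, inv_one]

theorem good_step (n k : ℕ) (ih : ∀ j < k, ∀ (Y : Type) (S : FreeGroup Y), nrm S ≤ j → NotPow S → Good n S)
    (R : FreeGroup X) (hk : nrm R ≤ k) (hR : NotPow R) (hmin : MinConj R) : Good n R := by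
  classical
  have hess : ∀ y, Ess R y ↔ ¬ Omits R y := fun y => ⟨fun h => by simpa using h 1, hmin.ess⟩
  obtain ⟨t, ht⟩ : ∃ t, Ess R t := by
    by_contra hc
    push Not at hc
    simp only [hess, not_not] at hc
    exact hR.ne_one (eq_one_of_omits hc)
  by_cases hone : ∀ x, Ess R x → x = t
  · -- only one letter
    have h1 : R = of t ^ (ex t R).toAdd := by
      have := hom_eq_of_letters (MonoidHom.id _) ((zpowersHom (FreeGroup X) (of t)).comp (ex t)) R ?_
      · simpa using this
      · intro l hl
        have : l.1 = t := hone _ (by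
          rw [hess, omits_iff]; intro h; exact h l hl rfl)
        rw [this]; simp [ex]
    rcases le_total 0 (ex t R).toAdd with h | h
    · obtain ⟨m, hm⟩ := Int.eq_ofNat_of_zero_le h
      rw [hm, zpow_natCast] at h1
      have hm1 : m = 1 := hR _ m (by
        rcases Nat.eq_zero_or_pos m with h0 | h0
        · subst h0; exact absurd h1 (by simpa using hR.ne_one)
        · exact h0) h1
      rw [h1, hm1, pow_one]; exact good_base n t
    · obtain ⟨m, hm⟩ := Int.eq_ofNat_of_zero_le (neg_nonneg.2 h)
      rw [← neg_neg (ex t R).toAdd, hm, zpow_neg, zpow_natCast, ← inv_pow] at h1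
      have hm1 : m = 1 := hR _ m (by
        rcases Nat.eq_zero_or_pos m with h0 | h0
        · subst h0; exact absurd h1 (by simpa using hR.ne_one)
        · exact h0) h1
      rw [h1, hm1, pow_one]; exact Good.of_inv (by rw [inv_inv]; exact good_base n t)
  push Not at hone
  obtain ⟨x, hx, hxt⟩ := hone
  have ih' : ∀ t, Ess R t → ∀ (Y : Type) (S : FreeGroup Y), nrm S ≤ cnt t R → NotPow S → Good n S := by
    intro t ht Y S
    exact ih _ (lt_of_lt_of_le (cnt_lt t R ((hess t).1 ht)) hk) Y S
  by_cases hz : ∃ t, Ess R t ∧ ex t R = 1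
  · obtain ⟨s, hs, hsx⟩ := hz
    have key : ∀ y, y ≠ s → Ess R y → I1 R y ∧ I2 R ∧ I3 n R ∧ (Ess R s → I1 R s) := by
      intro y hys hy
      refine core_step hys n hR hsx hy (cnt s R) ?_ (ih' s hs)
      refine norm_rwh_le s (MonoidHom.id _) ?_ R 0
      intro z k
      by_cases h : z = s <;> simp [rwh, h]
    obtain ⟨y, hys, hy⟩ : ∃ y, y ≠ s ∧ Ess R y := by
      by_cases h : x = s
      · exact ⟨t, by rintro rfl; exact hxt h, ht⟩
      · exact ⟨x, h, hx⟩
    obtain ⟨-, h2, h3, h4⟩ := key y hys hy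
    refine ⟨fun z hz => ?_, h2, h3⟩
    by_cases h : z = s
    · subst h; exact h4 hz
    · exact (key z h hz).1
  · push Not at hz
    have key : ∀ b s, b ≠ s → Ess R b → Ess R s → I1 R b ∧ I2 R ∧ I3 n R := by
      intro b s hbs hb hs
      have hm : 0 < (ex b R).toAdd.natAbs := by
        rw [Int.natAbs_pos]
        intro h
        exact hz b hb (by simpa using h)
      obtain ⟨m, hm0⟩ : ∃ m, m = (ex b R).toAdd.natAbs := ⟨_, rfl⟩
      obtain ⟨a, ha⟩ : ∃ a, a = (ex s R).toAdd * (ex b R).toAdd.sign := ⟨_, rfl⟩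
      rw [← hm0] at hm
      have hS : ex s (theta s b m a R) = 1 := by
        rw [ex_t_theta hbs]
        apply Multiplicative.toAdd.injective
        simp only [toAdd_mul, toAdd_pow, toAdd_zpow, toAdd_one, smul_eq_mul, nsmul_eq_mul]
        rw [hm0, ha, Int.natCast_natAbs]
        have := Int.sign_mul_self_eq_abs (ex b R).toAdd
        linear_combination (- (ex s R).toAdd) * this
      have hEss : Ess (theta s b m a R) b := ess_of_ex (by rw [ex_b_theta hbs]; exact hz b hb)
      obtain ⟨c1, c2, c3, -⟩ := core_step hbs n (theta_notPow hbs hm a hS hR) hS hEss (cnt s R) (by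
        refine norm_rwh_le s (theta s b m a) ?_ R 0
        intro z k
        by_cases h : z = s
        · subst h; simp [theta, ← map_pow, rwh_c_one]
        · by_cases h2 : z = b
          · subst h2
            simp only [theta, FreeGroup.lift_apply_of, h, if_false, if_true]
            rw [map_mul, Wr.mul_c, rwh_c_one']
            simp [rwh, h]
          · simp [theta, rwh, h, h2]) (ih' s hs)
      exact ⟨theta_I1 hbs hm a c1 hS, theta_I2 hbs hm a c2 hS, theta_I3 hbs hm a c3 hS⟩
    refine ⟨fun z hz => ?_, (key x t hxt hx ht).2.1, (key x t hxt hx ht).2.2⟩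
    by_cases h : z = t
    · subst h; exact (key z x hxt.symm hz hx).1
    · exact (key z t h hz ht).1

theorem good_aux (n k : ℕ) : ∀ (X : Type) (R : FreeGroup X), nrm R ≤ k → NotPow R → Good n R := by
  induction k using Nat.strong_induction_on with
  | _ k ih =>
    intro X R hk hR
    obtain ⟨g, hg⟩ := exists_minConj R
    refine Good.of_conj g (good_step n k ih _ ?_ (NotPow.conj hR g) hg)
    refine le_trans ?_ hk
    have := hg g⁻¹
    simpa [mul_assoc] using this

theorem good_all (n : ℕ) (R : FreeGroup X) (hR : NotPow R) : Good n R :=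
  good_aux n _ X R le_rfl hR

end OneRel

namespace OneRel
open FreeGroup (of mk)

section rlemma
variable {Q : Type*} [Group Q]

/-- left translation on finitely supported functions -/
noncomputable def act {M : Type*} [AddCommGroup M] (g : Q) : (Q →₀ M) →+ (Q →₀ M) :=
  Finsupp.mapDomain.addMonoidHom (fun q => g * q)

@[simp] theorem act_single {M : Type*} [AddCommGroup M] (g q : Q) (m : M) :
    act g (Finsupp.single q m) = Finsupp.single (g * q) m := by
  simp [act, Finsupp.mapDomain.addMonoidHom]

open Classical in
/-- sum of values over a subset -/
noncomputable def sg {M : Type*} [AddCommGroup M] (O : Set Q) : (Q →₀ M) →+ M :=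
  Finsupp.liftAddHom (fun p => if p ∈ O then AddMonoidHom.id M else 0)

theorem sg_single {M : Type*} [AddCommGroup M] (O : Set Q) (q : Q) (m : M) [Decidable (q ∈ O)] :
    sg O (Finsupp.single q m) = if q ∈ O then m else 0 := by
  simp only [sg, Finsupp.liftAddHom_apply_single]
  by_cases h : q ∈ O <;> simp [h]

theorem sg_act {M : Type*} [AddCommGroup M] (O : Set Q) (g : Q) (u : Q →₀ M) :
    sg O (act g u) = sg {q | g * q ∈ O} u := by
  classical
  have : (sg O).comp (act g) = sg (M := M) {q | g * q ∈ O} := by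
    ext q m
    simp [sg_single]
  exact DFunLike.congr_fun this u

theorem exists_of_sg_ne {M : Type*} [AddCommGroup M] (O : Set Q) (u : Q →₀ M) (h : sg O u ≠ 0) :
    ∃ q ∈ O, q ∈ u.support := by
  classical
  by_contra hc
  push Not at hc
  apply h
  rw [sg, Finsupp.liftAddHom_apply]
  refine Finset.sum_eq_zero fun q hq => ?_
  have : q ∉ O := fun h => hc q h hq
  simp [this]

/-- orbit of left multiplication by `z` -/
def orb (z q : Q) : Set Q := {p | ∃ m : ℤ, p = z ^ m * q}

theorem orb_mul (z q : Q) : {p | z * p ∈ orb z q} = orb z q := by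
  ext p
  constructor
  · rintro ⟨m, hm⟩
    exact ⟨m - 1, by rw [zpow_sub_one, eq_comm, ← mul_right_inj z, hm, ← mul_assoc, ← mul_assoc]; 
                     group⟩
  · rintro ⟨m, rfl⟩
    exact ⟨m + 1, by rw [zpow_add_one]; group⟩

theorem sg_orb_pow {M : Type*} [AddCommGroup M] (z q : Q) (hz : ∀ k : ℤ, k ≠ 0 → z ^ k ≠ 1)
    (i : ℕ) (hi : 0 < i) (u : Q →₀ M) :
    ∑ k ∈ Finset.range i, sg (orb (z ^ i) q) (act (z ^ k) u) = sg (orb z q) u := by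
  classical
  have hinj : ∀ a b : ℤ, z ^ a = z ^ b → a = b := by
    intro a b hab
    by_contra h
    exact hz (a - b) (by omega) (by rw [zpow_sub, hab, mul_inv_cancel])
  have : ∑ k ∈ Finset.range i, (sg (orb (z ^ i) q)).comp (act (M := M) (z ^ k)) = sg (orb z q) := by
    ext p m
    simp only [AddMonoidHom.comp_apply, Finsupp.singleAddHom_apply, AddMonoidHom.finset_sum_apply,
      act_single, sg_single]
    by_cases hp : p ∈ orb z q
    · obtain ⟨l, rfl⟩ := hp
      rw [if_pos ⟨l, rfl⟩]
      rw [Finset.sum_eq_single ((-l) % i).toNat]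
      · rw [if_pos]
        refine ⟨-((-l) / i), ?_⟩
        rw [← mul_assoc, ← zpow_natCast z i, ← zpow_natCast z, ← zpow_mul, ← zpow_add]
        congr 2
        rw [Int.toNat_of_nonneg (Int.emod_nonneg _ (by omega))]
        have := Int.emod_add_mul_ediv (-l) i
        linarith
      · intro k hk hne
        rw [if_neg]
        rintro ⟨m, hm⟩
        rw [← mul_assoc, ← zpow_natCast z i, ← zpow_natCast z, ← zpow_mul, ← zpow_add,
          mul_left_inj] at hm
        have := hinj _ _ hm
        apply hne
        have h2 : -l = k + i * (-m) := by linarith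
        rw [h2, Int.add_mul_emod_self_left, Int.emod_eq_of_lt (by omega)
          (by simpa using hk)]
        simp
      · intro h
        exfalso; apply h
        rw [Finset.mem_range]
        have := Int.emod_lt_of_pos (-l) (show (0:ℤ) < i by omega)
        have := Int.emod_nonneg (-l) (show (i:ℤ) ≠ 0 by omega)
        omega
    · rw [if_neg hp]
      refine Finset.sum_eq_zero fun k _ => ?_
      rw [if_neg]
      rintro ⟨l, hl⟩
      apply hp
      refine ⟨i * l - k, ?_⟩
      rw [zpow_sub, zpow_natCast, zpow_mul, zpow_natCast, eq_comm, ← mul_right_inj (z ^ k), hl]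
      rw [← mul_assoc, ← zpow_natCast z k, ← zpow_natCast z i, ← zpow_neg, ← zpow_mul, ← zpow_add, ← zpow_add]
      congr 2; ring
  have h := DFunLike.congr_fun this u
  rw [← h]; simp

variable {G : Type*} [Group G] (p : G →* Q) {M : Type*} [AddCommGroup M] (v : G → (Q →₀ M))
  (hv : ∀ g h, v (g * h) = v g + act (p g) (v h))

theorem act_one (u : Q →₀ M) : act (1 : Q) u = u := by
  simp only [act, Finsupp.mapDomain.addMonoidHom, one_mul, AddMonoidHom.coe_mk, ZeroHom.coe_mk]
  exact Finsupp.mapDomain_id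

theorem act_mul (g h : Q) (u : Q →₀ M) : act g (act h u) = act (g * h) u := by
  have : (act (M := M) g).comp (act h) = act (g * h) := by
    ext q m : 2
    simp [mul_assoc]
  exact DFunLike.congr_fun this u

include hv

theorem v_one : v 1 = 0 := by
  have := hv 1 1
  rw [map_one, act_one, mul_one] at this
  simpa using this

theorem v_inv (g : G) : v g⁻¹ = - act (p g)⁻¹ (v g) := by
  have := hv g⁻¹ g
  rw [inv_mul_cancel, v_one p v hv, map_inv] at this
  exact eq_neg_of_add_eq_zero_left this.symm

theorem v_pow (g : G) (i : ℕ) : v (g ^ i) = ∑ k ∈ Finset.range i, act (p g ^ k) (v g) := by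
  induction i with
  | zero => simp [v_one p v hv]
  | succ i ih => rw [pow_succ, hv, ih, Finset.sum_range_succ, map_pow]

theorem sg_orb_act (z q : Q) (u : Q →₀ M) : sg (orb z q) (act z u) = sg (orb z q) u := by
  rw [sg_act, orb_mul]

/-- the r-function -/
noncomputable def rf (w : G) (q : Q) : M := sg (orb (p w) q) (v w)

omit hv in
theorem orb_inv (z q : Q) : orb z⁻¹ q = orb z q := by
  ext p
  constructor
  · rintro ⟨m, rfl⟩; exact ⟨-m, by rw [inv_zpow']⟩
  · rintro ⟨m, rfl⟩; exact ⟨-m, by rw [inv_zpow', neg_neg]⟩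

theorem rf_inv (w : G) (q : Q) : rf p v w⁻¹ q = - rf p v w q := by
  rw [rf, v_inv p v hv, map_neg, map_inv, sg_orb_act p v hv, orb_inv, rf]

theorem rf_pow (w : G) (hw : ∀ k : ℤ, k ≠ 0 → p w ^ k ≠ 1) (q : Q) (i : ℕ) (hi : 0 < i) :
    rf p v (w ^ i) q = rf p v w q := by
  rw [rf, v_pow p v hv, map_sum, map_pow, sg_orb_pow _ _ hw i hi, rf]

theorem rf_conj (w x : G) (q : Q) : rf p v (x⁻¹ * w * x) q = rf p v w (p x * q) := by
  have e : v (x⁻¹ * w * x) = act (p x)⁻¹ (v w) + (act (p (x⁻¹ * w * x)) (act (p x)⁻¹ (v x))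
      - act (p x)⁻¹ (v x)) := by
    rw [hv, hv, v_inv p v hv, act_mul, map_inv]
    simp only [map_mul, map_inv]
    rw [show (p x)⁻¹ * p w * p x * (p x)⁻¹ = (p x)⁻¹ * p w by group]
    abel
  rw [rf, e, map_add, map_sub, sg_orb_act p v hv, sub_self, add_zero, sg_act, rf]
  congr 2
  ext r
  simp only [orb, Set.mem_setOf_eq, map_mul, map_inv]
  refine exists_congr fun m => ?_
  rw [show (p x)⁻¹ * p w * p x = (p x)⁻¹ * p w * ((p x)⁻¹)⁻¹ by group, conj_zpow]
  constructor
  · intro h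
    rw [← mul_right_inj (p x)⁻¹, h]; group
  · rintro rfl; group

end rlemma
end OneRel

namespace OneRel
open FreeGroup (of mk)

section
variable {Q : Type*} [Group Q] {X : Type*} {n : ℕ}

/-- pairing with the differential of `f` -/
noncomputable def pr (s : X → Q) (f : Q → ZMod n) : (Q →₀ X →₀ ZMod n) →+ ZMod n :=
  Finsupp.liftAddHom (fun q => Finsupp.liftAddHom
    (fun a => AddMonoidHom.mulRight (f (q * s a) - f q)))

theorem pr_single (s : X → Q) (f : Q → ZMod n) (q : Q) (a : X) (c : ZMod n) :
    pr s f (Finsupp.single q (Finsupp.single a c)) = c * (f (q * s a) - f q) := by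
  rw [pr, Finsupp.liftAddHom_apply_single, Finsupp.liftAddHom_apply_single]; rfl

theorem pr_act (s : X → Q) (f : Q → ZMod n) (g : Q) (u) :
    pr s f (act g u) = pr s (fun q => f (g * q)) u := by
  have : (pr s f).comp (act g) = pr s (fun q => f (g * q)) := by
    ext q a : 4
    simp [pr_single, mul_assoc]
  exact DFunLike.congr_fun this u

theorem pr_add_const (s : X → Q) (f : Q → ZMod n) (c : ZMod n) : pr s (fun q => f q + c) = pr s f := by
  ext q a : 4
  simp [pr_single]

/-- if all orbit sums vanish then invariant pairings vanish -/
theorem pr_eq_zero (s : X → Q) (f : Q → ZMod n) (z : Q) (hf : ∀ q, f (z * q) = f q + 1)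
    (u : Q →₀ X →₀ ZMod n) (hu : ∀ q, sg (orb z q) u = 0) : pr s f u = 0 := by
  classical
  have hfz : ∀ (m : ℤ) q, f (z ^ m * q) = f q + m := by
    intro m
    induction m using Int.induction_on with
    | zero => simp
    | succ m ih => intro q; rw [zpow_add_one, mul_assoc, ih, hf]; push_cast; ring
    | pred m ih =>
      intro q
      have := hf (z⁻¹ * q)
      rw [mul_inv_cancel_left] at this
      rw [zpow_sub_one, mul_assoc, ih, this]; push_cast; ring
  let st : Setoid Q := QuotientGroup.rightRel (Subgroup.zpowers z)
  have hst : ∀ a b : Q, (⟦a⟧ : Quotient st) = ⟦b⟧ ↔ a ∈ orb z b := by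
    intro a b
    rw [Quotient.eq]
    change QuotientGroup.rightRel _ a b ↔ _
    rw [QuotientGroup.rightRel_apply, Subgroup.mem_zpowers_iff]
    constructor
    · rintro ⟨k, hk⟩
      exact ⟨-k, by rw [zpow_neg, hk]; group⟩
    · rintro ⟨k, rfl⟩
      exact ⟨-k, by rw [zpow_neg]; group⟩
  have h0 : Finsupp.mapDomain (fun q => (⟦q⟧ : Quotient st)) u = 0 := by
    ext1 b
    induction b using Quotient.inductionOn with
    | _ b =>
    rw [Finsupp.zero_apply, ← hu b]
    have : (Finsupp.applyAddHom (⟦b⟧ : Quotient st)).comp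
        (Finsupp.mapDomain.addMonoidHom (fun q => (⟦q⟧ : Quotient st))) =
        sg (M := X →₀ ZMod n) (orb z b) := by
      ext q a : 3
      simp [Finsupp.mapDomain.addMonoidHom, sg_single, Finsupp.single_apply, hst]
    exact DFunLike.congr_fun this u
  have hd : ∀ q a, f (z * q * s a) - f (z * q) = f (q * s a) - f q := by
    intro q a; rw [mul_assoc, hf, hf]; ring
  let F : Quotient st → (X →₀ ZMod n) →+ ZMod n := fun b => Quotient.lift
    (fun q => Finsupp.liftAddHom (fun a => AddMonoidHom.mulRight (f (q * s a) - f q))) (by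
      intro a b hab
      obtain ⟨m, rfl⟩ := (hst a b).1 (Quotient.sound hab)
      ext x : 2
      simp [mul_assoc, hfz]) b
  have : pr s f = (Finsupp.liftAddHom F).comp
      (Finsupp.mapDomain.addMonoidHom (fun q => (⟦q⟧ : Quotient st))) := by
    ext q a : 4
    simp only [AddMonoidHom.comp_apply, Finsupp.singleAddHom_apply, Finsupp.mapDomain.addMonoidHom,
      AddMonoidHom.coe_mk, ZeroHom.coe_mk, Finsupp.mapDomain_single]
    rw [pr, Finsupp.liftAddHom_apply_single, Finsupp.liftAddHom_apply_single]
    refine Eq.trans ?_ (Finsupp.liftAddHom_apply_single F _ _).symm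
    change _ = (Finsupp.liftAddHom (fun a => AddMonoidHom.mulRight (f (q * s a) - f q)))
      (Finsupp.single a _)
    rw [Finsupp.liftAddHom_apply_single]
  rw [this, AddMonoidHom.comp_apply]
  change (Finsupp.liftAddHom F) (Finsupp.mapDomain _ u) = 0
  rw [h0, map_zero]

theorem exists_height (n : ℕ) (z : Q) (hz : ∀ k : ℤ, k ≠ 0 → z ^ k ≠ 1) :
    ∃ f : Q → ZMod n, ∀ q, f (z * q) = f q + 1 := by
  classical
  have hinj : ∀ a b : ℤ, z ^ a = z ^ b → a = b := by
    intro a b hab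
    by_contra h
    exact hz (a - b) (by omega) (by rw [zpow_sub, hab, mul_inv_cancel])
  let st : Setoid Q := QuotientGroup.rightRel (Subgroup.zpowers z)
  have hst : ∀ a b : Q, (⟦a⟧ : Quotient st) = ⟦b⟧ ↔ a ∈ orb z b := by
    intro a b
    rw [Quotient.eq]
    change QuotientGroup.rightRel _ a b ↔ _
    rw [QuotientGroup.rightRel_apply, Subgroup.mem_zpowers_iff]
    constructor
    · rintro ⟨k, hk⟩
      exact ⟨-k, by rw [zpow_neg, hk]; group⟩
    · rintro ⟨k, rfl⟩
      exact ⟨-k, by rw [zpow_neg]; group⟩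
  have hex : ∀ q : Q, ∃ m : ℤ, q = z ^ m * (⟦q⟧ : Quotient st).out := fun q =>
    (hst q _).1 (Quotient.out_eq _).symm
  choose h hh using hex
  refine ⟨fun q => h q, fun q => ?_⟩
  have e : (⟦z * q⟧ : Quotient st) = ⟦q⟧ := (hst _ _).2 ⟨1, by simp⟩
  have h1 := hh (z * q)
  rw [e] at h1
  have h2 := hh q
  have h3 : z ^ (h (z * q)) = z ^ (h q + 1) := by
    have : z * (z ^ h q * (⟦q⟧ : Quotient st).out) = z ^ h (z * q) * (⟦q⟧ : Quotient st).out := by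
      rw [← h2, ← h1]
    rw [← mul_assoc, mul_left_inj] at this
    rw [← this, zpow_add_one]; group
  have := hinj _ _ h3
  simp only [this]; push_cast; ring

variable {G : Type*} [Group G] (p : G →* Q)

theorem rlemma (hn : 1 < n) (gen : X → G) (hgen : Subgroup.closure (Set.range gen) = ⊤)
    (v : G → (Q →₀ X →₀ ZMod n)) (hv : ∀ g h, v (g * h) = v g + act (p g) (v h))
    (hvg : ∀ a, v (gen a) = Finsupp.single 1 (Finsupp.single a 1))
    (y : G) (hy : ∀ k : ℤ, k ≠ 0 → p y ^ k ≠ 1) (S : Subgroup G)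
    (hS : ∀ x ∈ S, ∃ i j : ℤ, i ≠ 0 ∧ j ≠ 0 ∧ x⁻¹ * y ^ i * x = y ^ j) :
    ∃ B : Set Q, B.Finite ∧ ∀ x ∈ S, ∃ m : ℤ, ∃ b ∈ B, p x = p y ^ m * b := by
  classical
  have : Fact (1 < n) := ⟨hn⟩
  have hD : ∀ w : G, ∀ f : Q → ZMod n, pr (fun a => p (gen a)) f (v w) = f (p w) - f 1 := by
    intro w
    have hw : w ∈ Subgroup.closure (Set.range gen) := by rw [hgen]; trivial
    induction hw using Subgroup.closure_induction with
    | mem w hw =>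
      obtain ⟨a, rfl⟩ := hw
      intro f; rw [hvg, pr_single]; simp
    | one => intro f; rw [v_one p v hv]; simp
    | mul a b _ _ ha hb =>
      intro f
      rw [hv, map_add, pr_act, ha, hb]; simp
    | inv a _ ha =>
      intro f
      have hneg : ∀ u, pr (fun a => p (gen a)) f (-u) = - pr (fun a => p (gen a)) f u := fun u =>
        eq_neg_of_add_eq_zero_left (by
          have h0 : -u + u = 0 := neg_add_cancel u
          rw [← map_add]
          exact (congrArg _ h0).trans (map_zero _))
      rw [v_inv p v hv, hneg, pr_act, ha]; simp
  obtain ⟨q0, hq0⟩ : ∃ q, rf p v y q ≠ 0 := by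
    by_contra hc
    push Not at hc
    obtain ⟨f, hf⟩ := exists_height n (p y) hy
    have h1 := pr_eq_zero (fun a => p (gen a)) f (p y) hf (v y) hc
    rw [hD, ← mul_one (p y), hf] at h1
    simp at h1
  have hrz : ∀ i : ℤ, i ≠ 0 → ∀ q, rf p v (y ^ i) q ≠ 0 ↔ rf p v y q ≠ 0 := by
    intro i hi q
    obtain ⟨k, rfl | rfl⟩ := i.eq_nat_or_neg
    · rw [zpow_natCast, rf_pow p v hv y hy q k (by omega)]
    · rw [zpow_neg, zpow_natCast, rf_inv p v hv, rf_pow p v hv y hy q k (by omega), neg_ne_zero]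
  refine ⟨(fun b => b * q0⁻¹) '' ((v y).support : Set Q), (Finset.finite_toSet _).image _, ?_⟩
  intro x hx
  have h1 : rf p v y (p x * q0) ≠ 0 := by
    obtain ⟨i, j, hi, hj, e⟩ := hS x hx
    rw [← hrz i hi, ← rf_conj p v hv, e, hrz j hj]; exact hq0
  obtain ⟨b, ⟨m, hm⟩, hb⟩ := exists_of_sg_ne _ _ h1
  refine ⟨-m, b * q0⁻¹, ⟨b, hb, rfl⟩, ?_⟩
  rw [hm, zpow_neg]; group

end
end OneRel

namespace OneRel
open FreeGroup (of mk)

theorem fi_of_cover {A : Type*} [Group A] (z : A) (B : Set A) (hB : B.Finite)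
    (h : ∀ a, ∃ m : ℤ, ∃ b ∈ B, a = z ^ m * b) : (Subgroup.zpowers z).FiniteIndex := by
  have := hB.to_subtype
  have hs : Function.Surjective (fun b : B => (QuotientGroup.mk (b : A)⁻¹ : A ⧸ Subgroup.zpowers z)) := by
    intro q
    obtain ⟨a, rfl⟩ := QuotientGroup.mk_surjective q
    obtain ⟨m, b, hb, e⟩ := h a⁻¹
    refine ⟨⟨b, hb⟩, ?_⟩
    rw [QuotientGroup.eq]
    have : a = b⁻¹ * z ^ (-m) := by rw [← inv_inv a, e]; group
    rw [this, inv_inv, ← mul_assoc, mul_inv_cancel, one_mul]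
    exact ⟨-m, rfl⟩
  have := Finite.of_surjective _ hs
  exact Subgroup.finiteIndex_of_finite_quotient

theorem fi_pow {A : Type*} [Group A] (z : A) (B : Set A) (hB : B.Finite)
    (h : ∀ a, ∃ m : ℤ, ∃ b ∈ B, a = z ^ m * b) (k : ℕ) (hk : 0 < k) :
    ∃ B' : Set A, B'.Finite ∧ ∀ a, ∃ m : ℤ, ∃ b ∈ B', a = (z ^ k) ^ m * b := by
  refine ⟨(fun p : ℕ × A => z ^ p.1 * p.2) '' ((Finset.range k : Set ℕ) ×ˢ B),
    ((Finset.finite_toSet _).prod hB).image _, fun a => ?_⟩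
  obtain ⟨m, b, hb, e⟩ := h a
  refine ⟨m / k, _, ⟨((m % k).toNat, b), ⟨?_, hb⟩, rfl⟩, ?_⟩
  · have := Int.emod_lt_of_pos m (show (0:ℤ) < k by omega)
    have := Int.emod_nonneg m (show (k:ℤ) ≠ 0 by omega)
    simp only [Finset.coe_range, Set.mem_Iio]; omega
  · rw [e, ← mul_assoc, ← zpow_natCast z k, ← zpow_natCast z, ← zpow_mul, ← zpow_add]
    congr 2
    rw [Int.toNat_of_nonneg (Int.emod_nonneg _ (by omega)), Int.mul_ediv_add_emod]

theorem cyc_of_cover {A : Type*} [Group A] (htf : ∀ (a : A) (k : ℕ), k ≠ 0 → a ^ k = 1 → a = 1)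
    (z : A) (B : Set A) (hB : B.Finite)
    (h : ∀ a, ∃ m : ℤ, ∃ b ∈ B, a = z ^ m * b) : IsCyclic A := by
  have hfi := fi_of_cover z B hB h
  have hzk : ∀ (k : ℤ) (a : A), k ≠ 0 → a ^ k = 1 → a = 1 := by
    intro k a hk hz1
    obtain ⟨l, rfl | rfl⟩ := k.eq_nat_or_neg
    · exact htf a l (by omega) (by simpa using hz1)
    · exact htf a l (by omega) (by simpa using hz1)
  obtain ⟨m, hm, hpow⟩ : ∃ m : ℕ, 0 < m ∧ ∀ a : A, a ^ m ∈ Subgroup.zpowers z :=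
    ⟨(Subgroup.zpowers z).index.factorial, Nat.factorial_pos _, fun a =>
      Subgroup.pow_mem_of_index_ne_zero_of_dvd hfi.index_ne_zero a
        (fun k hk hk2 => Nat.dvd_factorial hk hk2)⟩
  have hc : ∀ a, a⁻¹ * z ^ m * a = z ^ m := by
    intro a
    by_cases hz : z = 1
    · simp [hz]
    have hinj : ∀ a b : ℤ, z ^ a = z ^ b → a = b := by
      intro a b hab
      by_contra h
      exact hz (hzk (a - b) z (by omega) (by rw [zpow_sub, hab, mul_inv_cancel]))
    obtain ⟨l, hl⟩ := hpow (a⁻¹ * z * a)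
    simp only [] at hl
    have hl1 : a⁻¹ * z ^ m * a = z ^ l := by
      have := conj_pow (i := m) (a := a⁻¹) (b := z)
      rw [inv_inv] at this
      rw [← this, hl]
    have hiter : ∀ k : ℕ, (a ^ k)⁻¹ * z ^ ((m : ℤ) ^ k) * a ^ k = z ^ (l ^ k) := by
      intro k
      induction k with
      | zero => simp
      | succ k ih =>
        have : z ^ ((m : ℤ) ^ (k + 1)) = (z ^ ((m : ℤ) ^ k)) ^ m := by
          rw [pow_succ, zpow_mul, zpow_natCast]
        rw [this, pow_succ]
        have h2 : (a ^ k * a)⁻¹ * (z ^ ((m : ℤ) ^ k)) ^ m * (a ^ k * a) =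
          a⁻¹ * ((a ^ k)⁻¹ * (z ^ ((m : ℤ) ^ k)) * ((a ^ k)⁻¹)⁻¹) ^ m * a := by
          rw [conj_pow]; group
        rw [h2, inv_inv, ih, ← zpow_natCast, ← zpow_mul, mul_comm, zpow_mul, zpow_natCast]
        have h3 := conj_zpow (i := l ^ k) (a := a⁻¹) (b := z ^ m)
        rw [inv_inv] at h3
        rw [← h3, hl1, ← zpow_mul, pow_succ, mul_comm l]
    obtain ⟨s, hs⟩ := hpow a
    simp only [] at hs
    have h1 := hiter m
    rw [← hs, ← zpow_neg, ← zpow_add, ← zpow_add] at h1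
    have h2 := hinj _ _ h1
    have h3 : (m : ℤ) ^ m = l ^ m := by rw [← h2]; ring
    have h4 : |(m : ℤ)| = |l| := by
      have : |(m : ℤ)| ^ m = |l| ^ m := by rw [← abs_pow, ← abs_pow, h3]
      exact (pow_left_inj₀ (abs_nonneg _) (abs_nonneg _) hm.ne').1 this
    rcases abs_eq_abs.1 h4 with h5 | h5
    · rw [hl1, ← h5, zpow_natCast]
    · exfalso
      have h6 : a⁻¹ * (z ^ m) ^ s * a = (z ^ l) ^ s := by
        have := conj_zpow (i := s) (a := a⁻¹) (b := z ^ m)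
        rw [inv_inv] at this
        rw [← this, hl1]
      have h7 : a⁻¹ * (z ^ m) ^ s * a = (z ^ m) ^ s := by
        rw [← zpow_natCast z, ← zpow_mul, mul_comm, zpow_mul, hs]; group
      rw [h7, ← zpow_natCast z, ← zpow_mul, ← zpow_mul] at h6
      have h8 := hinj _ _ h6
      have h9 : s = 0 := by
        rw [h5] at h8
        have h10 : l ≠ 0 := by omega
        have : l * s = 0 := by linarith
        exact (mul_eq_zero.1 this).resolve_left h10
      rw [h9, zpow_zero] at hs
      have ha : a = 1 := htf a m hm.ne' hs.symm
      rw [ha] at hl1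
      have : z ^ (m : ℤ) = z ^ l := by simpa using hl1
      have := hinj _ _ this
      omega
  have hcen : z ^ m ∈ Subgroup.center A := by
    rw [Subgroup.mem_center_iff]
    intro g
    conv_lhs => rw [← hc g]
    group
  obtain ⟨B', hB', hcov⟩ := fi_pow z B hB h m hm
  have hfi2 := fi_of_cover _ B' hB' hcov
  have hfic : (Subgroup.center A).FiniteIndex := Subgroup.finiteIndex_of_le
    (H := Subgroup.zpowers (z ^ m)) (by rwa [Subgroup.zpowers_le])
  have hinj : Function.Injective (MonoidHom.transferCenterPow A) := by
    rw [injective_iff_map_eq_one]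
    intro a ha
    refine htf a _ hfic.index_ne_zero ?_
    rw [← MonoidHom.transferCenterPow_apply, ha]; rfl
  have hcomm : ∀ a b : A, a * b = b * a := fun a b => hinj (by 
    rw [map_mul, map_mul]
    exact Subtype.ext (Subgroup.mem_center_iff.1 (MonoidHom.transferCenterPow A b).2 _))
  let f : A →* Subgroup.zpowers z := MonoidHom.mk' (fun a => ⟨a ^ m, hpow a⟩) (by
    intro a b; ext; exact (show Commute a b from hcomm a b).mul_pow m)
  refine isCyclic_of_injective f ?_
  rw [injective_iff_map_eq_one]
  intro a ha
  exact htf a m hm.ne' (congrArg Subtype.val ha)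

end OneRel

namespace OneRel
open FreeGroup (of mk)

section
variable {Q : Type*} [Group Q]

/-- action on finitely supported functions -/
noncomputable def actHom (Q M : Type*) [Group Q] [AddCommGroup M] :
    Q →* MulAut (Multiplicative (Q →₀ M)) where
  toFun g := AddEquiv.toMultiplicative (Finsupp.domCongr (Equiv.mulLeft g))
  map_one' := by
    refine MulEquiv.ext fun u => ?_
    apply Multiplicative.toAdd.injective
    refine Finsupp.ext fun q => ?_
    simp [Finsupp.domCongr]
    rfl
  map_mul' g h := by
    refine MulEquiv.ext fun u => ?_
    apply Multiplicative.toAdd.injective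
    refine Finsupp.ext fun q => ?_
    simp [Finsupp.domCongr, mul_assoc]
    congr 1

theorem actHom_apply {M : Type*} [AddCommGroup M] (g : Q) (u : Q →₀ M) :
    (actHom Q M g (Multiplicative.ofAdd u)).toAdd = act g u := by
  simp only [actHom, act, Finsupp.mapDomain.addMonoidHom]
  exact Finsupp.equivMapDomain_eq_mapDomain _ _

variable {X : Type*} {n : ℕ}

/-- Fox-type homomorphism -/
noncomputable def fox (n : ℕ) (s : X → Q) :
    FreeGroup X →* Multiplicative (Q →₀ X →₀ ZMod n) ⋊[actHom Q (X →₀ ZMod n)] Q :=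
  FreeGroup.lift (fun a => ⟨Multiplicative.ofAdd (Finsupp.single 1 (Finsupp.single a 1)), s a⟩)

theorem fox_right (s : X → Q) (w : FreeGroup X) : (fox n s w).right = FreeGroup.lift s w := by
  have : SemidirectProduct.rightHom.comp (fox n s) = FreeGroup.lift s := by
    ext a; simp [fox]
  exact DFunLike.congr_fun this w

theorem fox_pow_eq_one (s : X → Q) (w : FreeGroup X) (hw : FreeGroup.lift s w = 1) :
    fox n s (w ^ n) = 1 := by
  obtain ⟨u, hu⟩ : ∃ u, fox n s w = SemidirectProduct.inl u := ⟨(fox n s w).left, by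
    ext1
    · simp
    · simp [fox_right, hw]⟩
  rw [map_pow, hu, ← map_pow]
  have : u ^ n = 1 := by
    apply Multiplicative.toAdd.injective
    ext q a
    simp
  rw [this, map_one]

variable {G : Type*} [Group G]

theorem rlemma_fox (hn : 1 < n) (p : G →* Q) (gen : X → G)
    (hgen : Subgroup.closure (Set.range gen) = ⊤)
    (D : G →* Multiplicative (Q →₀ X →₀ ZMod n) ⋊[actHom Q (X →₀ ZMod n)] Q)
    (hD : ∀ a, D (gen a) = fox n (fun a => p (gen a)) (of a))
    (htf : ∀ (a : Q) (k : ℕ), k ≠ 0 → a ^ k = 1 → a = 1)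
    (y : G) (hy : p y ≠ 1) (S : Subgroup G) 
    (hS : ∀ x ∈ S, ∃ i j : ℤ, i ≠ 0 ∧ j ≠ 0 ∧ x⁻¹ * y ^ i * x = y ^ j) :
    ∃ B : Set Q, B.Finite ∧ ∀ x ∈ S, ∃ m : ℤ, ∃ b ∈ B, p x = p y ^ m * b := by
  have hr : ∀ g, (D g).right = p g := by
    have : SemidirectProduct.rightHom.comp D = p := by
      refine MonoidHom.eq_of_eqOn_dense hgen ?_
      rintro _ ⟨a, rfl⟩
      simp [hD, fox]
    exact fun g => DFunLike.congr_fun this g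
  refine rlemma p hn gen hgen (fun g => (D g).left.toAdd) ?_ ?_ y ?_ S hS
  · intro g h
    rw [map_mul, SemidirectProduct.mul_left, toAdd_mul, hr, ← actHom_apply, ofAdd_toAdd]
  · intro a
    simp only [hD, fox, FreeGroup.lift_apply_of, toAdd_ofAdd]
  · intro k hk h
    obtain ⟨l, rfl | rfl⟩ := k.eq_nat_or_neg
    · exact hy (htf _ l (by omega) (by simpa using h))
    · exact hy (htf _ l (by omega) (by simpa using h))

/-- restriction to the image when `y ∈ S` -/
theorem cyc_fox (hn : 1 < n) (p : G →* Q) (gen : X → G)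
    (hgen : Subgroup.closure (Set.range gen) = ⊤)
    (D : G →* Multiplicative (Q →₀ X →₀ ZMod n) ⋊[actHom Q (X →₀ ZMod n)] Q)
    (hD : ∀ a, D (gen a) = fox n (fun a => p (gen a)) (of a))
    (htf : ∀ (a : Q) (k : ℕ), k ≠ 0 → a ^ k = 1 → a = 1)
    (y : G) (hy : p y ≠ 1) (S : Subgroup G) (hyS : y ∈ S)
    (hS : ∀ x ∈ S, ∃ i j : ℤ, i ≠ 0 ∧ j ≠ 0 ∧ x⁻¹ * y ^ i * x = y ^ j) :
    IsCyclic (S.map p) := by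
  obtain ⟨B, hB, h⟩ := rlemma_fox hn p gen hgen D hD htf y hy S hS
  refine cyc_of_cover (A := S.map p) ?_ ⟨p y, Subgroup.mem_map_of_mem p hyS⟩
    (Subtype.val ⁻¹' B) (hB.preimage Subtype.val_injective.injOn) ?_
  · intro a k hk ha
    ext
    exact htf _ k hk (congrArg Subtype.val ha)
  · rintro ⟨_, x, hx, rfl⟩
    obtain ⟨m, b, hb, e⟩ := h x hx
    have hbm : b ∈ S.map p := by
      have : b = p (y ^ (-m) * x) := by rw [map_mul, e, map_zpow, zpow_neg]; group
      rw [this]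
      exact Subgroup.mem_map_of_mem p (mul_mem (zpow_mem hyS _) hx)
    exact ⟨m, ⟨b, hbm⟩, hb, by ext; simpa using e⟩

end

/-- the commensuration relation is preserved under products -/
theorem rel_closure {G : Type*} [Group G] (x y : G) (i j : ℤ) (hi : i ≠ 0) (hj : j ≠ 0)
    (h : x⁻¹ * y ^ i * x = y ^ j) :
    ∀ g ∈ Subgroup.closure {x, y}, ∃ i j : ℤ, i ≠ 0 ∧ j ≠ 0 ∧ g⁻¹ * y ^ i * g = y ^ j := by
  intro g hg
  induction hg using Subgroup.closure_induction with
  | mem g hg =>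
    rcases hg with rfl | hg
    · exact ⟨i, j, hi, hj, h⟩
    · rw [Set.mem_singleton_iff] at hg
      subst hg
      exact ⟨1, 1, one_ne_zero, one_ne_zero, by group⟩
  | one => exact ⟨1, 1, one_ne_zero, one_ne_zero, by group⟩
  | mul a b _ _ ha hb =>
    obtain ⟨i, j, hi, hj, h⟩ := ha
    obtain ⟨i', j', hi', hj', h'⟩ := hb
    refine ⟨i * i', j * j', mul_ne_zero hi hi', mul_ne_zero hj hj', ?_⟩
    have e1 := conj_zpow (i := i') (a := a⁻¹) (b := y ^ i)
    have e2 := conj_zpow (i := j) (a := b⁻¹) (b := y ^ i')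
    rw [inv_inv] at e1 e2
    rw [h] at e1
    rw [h'] at e2
    calc (a * b)⁻¹ * y ^ (i * i') * (a * b) = b⁻¹ * (a⁻¹ * (y ^ i) ^ i' * a) * b := by
          rw [zpow_mul]; group
      _ = _ := by rw [← e1, ← zpow_mul, mul_comm j i', zpow_mul, ← e2, ← zpow_mul, mul_comm]
  | inv a _ ha =>
    obtain ⟨i, j, hi, hj, h⟩ := ha
    exact ⟨j, i, hj, hi, by rw [← h]; group⟩

end OneRel

namespace OneRel
open Monoid

section
variable {ι : Type*} {M : ι → Type*} [∀ i, Group (M i)]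

/-- product of a list of letters -/
def lp (L : List (Σ i, M i)) : CoprodI M := (L.map fun l => CoprodI.of l.2).prod

@[simp] theorem lp_nil : lp ([] : List (Σ i, M i)) = 1 := rfl
@[simp] theorem lp_cons (s : Σ i, M i) (L) : lp (s :: L) = CoprodI.of s.2 * lp L := by simp [lp]
@[simp] theorem lp_append (L L' : List (Σ i, M i)) : lp (L ++ L') = lp L * lp L' := by simp [lp]

theorem exists_lp (g : CoprodI M) : ∃ L, lp L = g := by
  classical
  exact ⟨(CoprodI.Word.equiv g).toList, CoprodI.Word.equiv.symm_apply_apply g⟩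

theorem merge (s s' : Σ i, M i) (h : s.1 = s'.1) :
    ∃ s'' : Σ i, M i, s''.1 = s.1 ∧ (CoprodI.of s''.2 : CoprodI M) = CoprodI.of s.2 * CoprodI.of s'.2 := by
  obtain ⟨i, a⟩ := s
  obtain ⟨j, b⟩ := s'
  obtain rfl : i = j := h
  exact ⟨⟨i, a * b⟩, rfl, map_mul _ _ _⟩

theorem exists_ne_of_reduced (L : List (Σ i, M i)) (hL : L ≠ [])
    (h1 : ∀ l ∈ L, l.2 ≠ 1) (h2 : L.IsChain (fun l l' => l.1 ≠ l'.1)) :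
    ∃ (i j : ι) (w : CoprodI.NeWord M i j), w.prod = lp L ∧ (∃ a, L.head? = some ⟨i, a⟩) ∧
      ∃ b, L.getLast? = some ⟨j, b⟩ := by
  obtain ⟨i, j, w, hw⟩ := CoprodI.NeWord.of_word (⟨L, h1, h2⟩ : CoprodI.Word M) (by
    intro h; exact hL (congrArg CoprodI.Word.toList h))
  have hl : w.toList = L := congrArg CoprodI.Word.toList hw
  refine ⟨i, j, w, ?_, ⟨w.head, ?_⟩, ⟨w.last, ?_⟩⟩
  · rw [CoprodI.NeWord.prod, hw]; rfl
  · rw [← hl, w.toList_head?]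
  · rw [← hl, w.toList_getLast?]

theorem neWord_pow {i j : ι} (hij : i ≠ j) (w : CoprodI.NeWord M i j) (k : ℕ) :
    ∃ w' : CoprodI.NeWord M i j, w'.prod = w.prod ^ (k + 1) := by
  induction k with
  | zero => exact ⟨w, by simp⟩
  | succ k ih =>
    obtain ⟨w', hw'⟩ := ih
    exact ⟨.append w' hij.symm w, by rw [CoprodI.NeWord.append_prod, hw', pow_succ _ (k + 1)]⟩

/-- torsion elements are conjugate into a factor -/
theorem torsion_conj (g : CoprodI M) (k : ℕ) (hk : k ≠ 0) (hg : g ^ k = 1) :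
    g = 1 ∨ ∃ (c : CoprodI M) (l : ι) (a : M l), g = c * CoprodI.of a * c⁻¹ := by
  classical
  have hex : ∃ m, ∃ L : List (Σ i, M i), L.length = m ∧ ∃ c, g = c * lp L * c⁻¹ := by
    obtain ⟨L, hL⟩ := exists_lp g
    exact ⟨_, L, rfl, 1, by simp [hL]⟩
  obtain ⟨L, hLm, c, hc⟩ := Nat.find_spec hex
  have hmin : ∀ L' : List (Σ i, M i), L'.length < L.length → ∀ c', g ≠ c' * lp L' * c'⁻¹ := by
    intro L' hlt c' h
    rw [hLm] at hlt
    exact Nat.find_min hex hlt ⟨L', rfl, c', h⟩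
  have hrot : ∀ A B : List (Σ i, M i), L = A ++ B → g = (c * lp A) * lp (B ++ A) * (c * lp A)⁻¹ := by
    rintro A B rfl
    rw [hc, lp_append, lp_append]; group
  have hadj : ∀ A s s' B, L = A ++ s :: s' :: B → s.1 ≠ s'.1 := by
    intro A s s' B h hs
    obtain ⟨s'', -, hs''⟩ := merge s s' hs
    refine hmin (s'' :: (B ++ A)) (by simp [h]; omega) (c * lp A) ?_
    rw [hrot _ _ h]
    simp [hs'', mul_assoc]
  rcases L with _ | ⟨s, L⟩
  · left; rw [hc]; simp
  rcases List.eq_nil_or_concat L with rfl | ⟨C, s', rfl⟩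
  · right; exact ⟨c, s.1, s.2, by rw [hc]; simp⟩
  exfalso
  rw [List.concat_eq_append] at *
  have hne : s'.1 ≠ s.1 := by
    intro hs
    obtain ⟨s'', -, hs''⟩ := merge s' s hs
    refine hmin (s'' :: C) (by simp) (c * lp (s :: C)) ?_
    rw [hrot (s :: C) [s'] (by simp)]
    simp [hs'', mul_assoc]
  obtain ⟨i, j, w, hw, ⟨a, ha⟩, ⟨b, hb⟩⟩ := exists_ne_of_reduced (s :: (C ++ [s'])) (by simp) (by
    intro l hl h1
    obtain ⟨A, B, hAB⟩ := List.append_of_mem hl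
    refine hmin (A ++ B) (by rw [hAB]; simp) c ?_
    rw [hc, hAB]; simp [h1]) (List.isChain_iff_forall_rel_of_append_cons_cons.2 (by
      intro a b A B h; exact hadj A a b B h))
  have hij : i ≠ j := by
    rw [← List.cons_append, List.getLast?_concat] at hb
    simp only [List.head?_cons, Option.some.injEq] at ha hb
    rw [ha, hb] at hne
    exact hne.symm
  obtain ⟨w', hw'⟩ := neWord_pow hij w (k - 1)
  refine neWord_prod_ne_one w' ?_
  rw [hw', hw, Nat.sub_add_cancel (Nat.pos_of_ne_zero hk)]
  rw [hc, conj_pow] at hg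
  simpa using hg

/-- factors are malnormal -/
theorem factor_malnormal (l : ι) (a b : M l) (ha : a ≠ 1) (g : CoprodI M)
    (h : g * CoprodI.of a * g⁻¹ = CoprodI.of b) : ∃ c : M l, g = CoprodI.of c := by
  classical
  have hex : ∃ m, ∃ L : List (Σ i, M i), L.length = m ∧ ∃ c d : M l,
      g = CoprodI.of c * lp L * CoprodI.of d := by
    obtain ⟨L, hL⟩ := exists_lp g
    exact ⟨_, L, rfl, 1, 1, by simp [hL]⟩
  obtain ⟨L, hLm, c, d, hc⟩ := Nat.find_spec hex
  have hmin : ∀ L' : List (Σ i, M i), L'.length < L.length → ∀ c d : M l,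
      g ≠ CoprodI.of c * lp L' * CoprodI.of d := by
    intro L' hlt c' d' h
    rw [hLm] at hlt
    exact Nat.find_min hex hlt ⟨L', rfl, c', d', h⟩
  by_cases hL : L = []
  · subst hL
    exact ⟨c * d, by rw [hc]; simp⟩
  exfalso
  obtain ⟨i, j, w, hw, ⟨a', ha'⟩, ⟨b', hb'⟩⟩ := exists_ne_of_reduced L hL (by
    intro l hl h1
    obtain ⟨A, B, hAB⟩ := List.append_of_mem hl
    refine hmin (A ++ B) (by rw [hAB]; simp) c d ?_
    rw [hc, hAB]; simp [h1]) (List.isChain_iff_forall_rel_of_append_cons_cons.2 (by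
      intro s s' A B h hs
      obtain ⟨s'', -, hs''⟩ := merge s s' hs
      refine hmin (A ++ s'' :: B) (by simp [h]) c d ?_
      rw [hc, h]
      simp [hs'', mul_assoc]))
  have hi : i ≠ l := by
    rintro rfl
    obtain ⟨L', rfl⟩ : ∃ L', L = ⟨i, a'⟩ :: L' := by
      rcases L with _ | ⟨s, L⟩
      · simp at ha'
      · simp only [List.head?_cons, Option.some.injEq] at ha'
        exact ⟨L, by rw [ha']⟩
    refine hmin L' (by simp) (c * a') d ?_
    rw [hc]; simp [mul_assoc]
  have hj : j ≠ l := by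
    rintro rfl
    obtain ⟨L', rfl⟩ : ∃ L', L = L' ++ [⟨j, b'⟩] := by
      rcases List.eq_nil_or_concat L with rfl | ⟨C, s', rfl⟩
      · simp at hb'
      · rw [List.concat_eq_append, List.getLast?_concat] at hb'
        simp only [Option.some.injEq] at hb'
        exact ⟨C, by rw [List.concat_eq_append, hb']⟩
    refine hmin L' (by simp) c (b' * d) ?_
    rw [hc]; simp [mul_assoc]
  have hb1 : b ≠ 1 := by
    rintro rfl
    rw [map_one, conj_eq_one_iff] at h
    exact ha (CoprodI.of_injective l (by rw [h, map_one]))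
  have hA : d * a * d⁻¹ ≠ 1 := by rwa [Ne, conj_eq_one_iff]
  have hB : c⁻¹ * b⁻¹ * c ≠ 1 := by
    intro h; apply hb1
    have : b⁻¹ = c * (c⁻¹ * b⁻¹ * c) * c⁻¹ := by group
    rw [h] at this; simpa using this
  refine neWord_prod_ne_one (.append (.append (.append w hj (.singleton _ hA)) hj.symm w.inv) hi
    (.singleton _ hB)) ?_
  simp only [CoprodI.NeWord.append_prod, CoprodI.NeWord.prod_singleton, CoprodI.NeWord.inv_prod, hw]
  have e : lp L = (CoprodI.of c)⁻¹ * g * (CoprodI.of d)⁻¹ := by rw [hc]; group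
  simp only [map_mul, map_inv, ← h, e]
  group

/-- an element of infinite order does not commute with nontrivial torsion, if factors are torsion -/
theorem no_comm_torsion (N : ℕ) (hN : N ≠ 0) (hM : ∀ i (a : M i), a ^ N = 1) (s z : CoprodI M)
    (hz : ∀ k : ℕ, k ≠ 0 → z ^ k ≠ 1) (hs : s * z = z * s) (k : ℕ) (hk : k ≠ 0) (hsk : s ^ k = 1) :
    s = 1 := by
  rcases torsion_conj s k hk hsk with h | ⟨c, l, a, rfl⟩
  · exact h
  by_contra hne
  have ha : a ≠ 1 := by rintro rfl; apply hne; simp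
  obtain ⟨d, hd⟩ := factor_malnormal l a a ha (c⁻¹ * z * c) (by
    have : z * (c * CoprodI.of a * c⁻¹) * z⁻¹ = c * CoprodI.of a * c⁻¹ := by rw [← hs]; group
    calc c⁻¹ * z * c * CoprodI.of a * (c⁻¹ * z * c)⁻¹ =
        c⁻¹ * (z * (c * CoprodI.of a * c⁻¹) * z⁻¹) * c := by group
      _ = _ := by rw [this]; group)
  apply hz N hN
  have : z = c * CoprodI.of d * c⁻¹ := by rw [← hd]; group
  rw [this, conj_pow, ← map_pow, hM]; simp

end
end OneRel

namespace OneRel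
open FreeGroup (of mk)
open Monoid

theorem free_torsionFree {Y : Type*} (a : FreeGroup Y) (k : ℕ) (hk : k ≠ 0) (h : a ^ k = 1) : a = 1 :=
  (pow_eq_one_iff_left hk).1 h

theorem free_cyc {Y : Type*} (y : FreeGroup Y) (hy : y ≠ 1) (S : Subgroup (FreeGroup Y)) (hyS : y ∈ S)
    (hS : ∀ x ∈ S, ∃ i j : ℤ, i ≠ 0 ∧ j ≠ 0 ∧ x⁻¹ * y ^ i * x = y ^ j) : IsCyclic S := by
  have := cyc_fox (n := 2) (by norm_num) (MonoidHom.id (FreeGroup Y)) of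
    (FreeGroup.closure_range_of Y)
    (fox 2 (fun a => MonoidHom.id (FreeGroup Y) (of a))) (fun a => rfl) free_torsionFree y hy S hyS hS
  rwa [Subgroup.map_id] at this

section
variable (n : ℕ) (ι : Type)

/-- abbreviation for the free product of cyclic groups of order `n` -/
abbrev CP := CoprodI (fun _ : ι => Multiplicative (ZMod n))

/-- shift -/
def shiftHom : Multiplicative (ZMod n) →* Wr (ZMod n) (FreeGroup (ι × ZMod n)) where
  toFun a := ⟨Equiv.addRight a.toAdd, fun _ => 1⟩
  map_one' := by
    refine Wr.ext (Equiv.ext fun q => ?_) (funext fun q => ?_) <;> simp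
  map_mul' a b := by
    refine Wr.ext (Equiv.ext fun q => ?_) (funext fun q => ?_) <;> simp [add_comm, add_assoc, add_left_comm]

/-- holonomy -/
noncomputable def hol : CP n ι →* Wr (ZMod n) (FreeGroup (ι × ZMod n)) :=
  CoprodI.lift fun l => (MulAut.conj (⟨1, fun q => (of (l, q))⁻¹⟩ :
    Wr (ZMod n) (FreeGroup (ι × ZMod n)))).toMonoidHom.comp (shiftHom n ι)

/-- total exponent -/
noncomputable def tot : CP n ι →* Multiplicative (ZMod n) := CoprodI.lift fun _ => MonoidHom.id _

/-- inverse of holonomy -/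
noncomputable def unhol : FreeGroup (ι × ZMod n) →* CP n ι :=
  FreeGroup.lift fun p => CoprodI.of (M := fun _ : ι => Multiplicative (ZMod n)) (i := p.1)
    (Multiplicative.ofAdd (-p.2))

variable {n ι}

theorem hol_of (l : ι) (a : Multiplicative (ZMod n)) :
    hol n ι (CoprodI.of (M := fun _ : ι => Multiplicative (ZMod n)) (i := l) a) =
    ⟨Equiv.addRight a.toAdd, fun q => (of (l, q + a.toAdd))⁻¹ * of (l, q)⟩ := by
  refine (CoprodI.lift_of _ _).trans ?_
  refine Wr.ext (Equiv.ext fun q => ?_) (funext fun q => ?_) <;> simp [shiftHom]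

theorem tot_of (l : ι) (a : Multiplicative (ZMod n)) :
    tot n ι (CoprodI.of (M := fun _ : ι => Multiplicative (ZMod n)) (i := l) a) = a :=
  CoprodI.lift_of _ _

theorem hol_spec (w : CP n ι) : ∀ q, (hol n ι w).p q = q + (tot n ι w).toAdd ∧
    unhol n ι ((hol n ι w).c q) = w := by
  induction w using CoprodI.induction_on with
  | one => intro q; simp
  | of l a =>
    intro q
    rw [hol_of, tot_of]
    refine ⟨rfl, ?_⟩
    simp only [map_mul, map_inv, unhol, FreeGroup.lift_apply_of]
    rw [← map_inv, ← map_mul]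
    congr 1
    apply Multiplicative.toAdd.injective
    simp
  | mul a b ha hb =>
    intro q
    rw [map_mul, map_mul, Wr.mul_p, Wr.mul_c]
    simp only [Equiv.Perm.mul_apply]
    rw [(hb q).1, (ha _).1, map_mul (unhol n ι), (ha _).2, (hb q).2]
    refine ⟨?_, rfl⟩
    rw [toAdd_mul]; ring

/-- the restriction of holonomy to the kernel -/
noncomputable def kap : (tot n ι).ker →* FreeGroup (ι × ZMod n) := MonoidHom.mk'
  (fun w => (hol n ι w).c 0) (by
    intro a b
    have := (hol_spec (b : CP n ι) 0).1
    rw [MonoidHom.mem_ker.1 b.2] at this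
    simp only [Subgroup.coe_mul, map_mul, Wr.mul_c, this, toAdd_one, add_zero])

theorem kap_inj : Function.Injective (kap (n := n) (ι := ι)) := by
  intro a b h
  have := congrArg (unhol n ι) h
  change unhol n ι ((hol n ι a).c 0) = unhol n ι ((hol n ι b).c 0) at this
  rw [(hol_spec _ 0).2, (hol_spec _ 0).2] at this
  exact Subtype.ext this

theorem ker_cyc (y : (tot n ι).ker) (hy : y ≠ 1) (S : Subgroup (tot n ι).ker) (hyS : y ∈ S)
    (hS : ∀ x ∈ S, ∃ i j : ℤ, i ≠ 0 ∧ j ≠ 0 ∧ x⁻¹ * y ^ i * x = y ^ j) : IsCyclic S := by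
  have := free_cyc (kap y) (fun h => hy (kap_inj (by rw [h, map_one]))) (S.map kap)
    (Subgroup.mem_map_of_mem _ hyS) (by
      rintro _ ⟨x, hx, rfl⟩
      obtain ⟨i, j, hi, hj, h⟩ := hS x hx
      exact ⟨i, j, hi, hj, by simp only [← map_zpow, ← map_inv, ← map_mul, h]⟩)
  exact isCyclic_of_injective (kap.subgroupMap S) (by
    intro a b h
    exact Subtype.ext (kap_inj (congrArg Subtype.val h)))

theorem pow_mem_ker (w : CP n ι) : w ^ n ∈ (tot n ι).ker := by
  rw [MonoidHom.mem_ker, map_pow]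
  apply Multiplicative.toAdd.injective
  simp

theorem cp_torsion (l : ι) (a : Multiplicative (ZMod n)) : a ^ n = 1 := by
  apply Multiplicative.toAdd.injective
  simp

/-- centralizers of elements of infinite order are cyclic -/
theorem centralizer_cyc (hn : n ≠ 0) (z : CP n ι) (hz : ∀ k : ℕ, k ≠ 0 → z ^ k ≠ 1) :
    IsCyclic (Subgroup.centralizer {z}) := by
  classical
  have : NeZero n := ⟨hn⟩
  obtain ⟨u, hu⟩ : ∃ u : CP n ι, u ∈ Subgroup.centralizer {z} ∧ ∀ d ∈ Subgroup.centralizer {z},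
      tot n ι d = 1 → ∃ m : ℤ, d = u ^ m := by
    obtain ⟨y, hy⟩ : ∃ y : (tot n ι).ker, y = ⟨z ^ n, pow_mem_ker z⟩ := ⟨_, rfl⟩
    obtain ⟨⟨⟨u, hu1⟩, hu2⟩, hu3⟩ := (ker_cyc y (by rw [hy]; intro h; exact hz n hn (congrArg Subtype.val h))
      ((Subgroup.centralizer {z}).comap (tot n ι).ker.subtype) (by
        rw [hy, Subgroup.mem_comap, Subgroup.mem_centralizer_singleton_iff]
        exact ((Commute.refl z).pow_left n).eq) (by
        intro x hx
        refine ⟨1, 1, one_ne_zero, one_ne_zero, ?_⟩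
        rw [Subgroup.mem_comap, Subgroup.mem_centralizer_singleton_iff] at hx
        have : x * y = y * x := by
          rw [hy]; ext
          exact ((show Commute (x : CP n ι) z from hx).pow_right n).eq
        rw [zpow_one, mul_assoc, ← this]; group)).exists_generator
    refine ⟨u, hu2, fun d hd hd1 => ?_⟩
    obtain ⟨m, hm⟩ := hu3 ⟨⟨d, hd1⟩, hd⟩
    refine ⟨m, ?_⟩
    have := congrArg (fun a => ((a : (tot n ι).ker) : CP n ι)) (congrArg Subtype.val hm)
    exact this.symm
  obtain ⟨hu1, hu2⟩ := hu
  refine cyc_of_cover (A := Subgroup.centralizer {z}) ?_ ⟨u, hu1⟩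
    (Set.range fun e : Multiplicative (ZMod n) =>
      if h : ∃ d : Subgroup.centralizer {z}, tot n ι d = e then h.choose else 1) (Set.finite_range _) ?_
  · rintro ⟨a, ha⟩ k hk h
    ext
    rw [Subgroup.mem_centralizer_singleton_iff] at ha
    exact no_comm_torsion n hn (fun i a => cp_torsion i a) a z hz ha k hk (congrArg Subtype.val h)
  · intro d
    have hex : ∃ d' : Subgroup.centralizer {z}, tot n ι d' = tot n ι d := ⟨d, rfl⟩
    obtain ⟨m, hm⟩ := hu2 (d * (hex.choose)⁻¹ : Subgroup.centralizer {z}) (Subtype.property _) (by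
      simp [hex.choose_spec])
    refine ⟨m, _, ⟨tot n ι d, rfl⟩, ?_⟩
    beta_reduce
    rw [dif_pos hex]
    ext
    simp only [Subgroup.coe_mul, Subgroup.coe_zpow, ← hm]
    simp

end

theorem rel_iter {G : Type*} [Group G] {x y : G} {i j : ℤ} (h : x⁻¹ * y ^ i * x = y ^ j) (k : ℕ) :
    (x ^ k)⁻¹ * y ^ (i ^ k) * x ^ k = y ^ (j ^ k) := by
  induction k with
  | zero => simp
  | succ k ih =>
    have e1 := conj_zpow (i := i) (a := (x ^ k)⁻¹) (b := y ^ (i ^ k))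
    have e2 := conj_zpow (i := j ^ k) (a := x⁻¹) (b := y ^ i)
    rw [inv_inv] at e1 e2
    calc (x ^ (k + 1))⁻¹ * y ^ (i ^ (k + 1)) * x ^ (k + 1) =
        x⁻¹ * ((x ^ k)⁻¹ * (y ^ (i ^ k)) ^ i * x ^ k) * x := by
          rw [← zpow_mul, ← pow_succ, pow_succ]; group
      _ = _ := by rw [← e1, ih, ← zpow_mul, mul_comm, zpow_mul, ← e2, h, ← zpow_mul, pow_succ, mul_comm]

/-- main alternative -/
def Alt {G : Type*} [Group G] (x y : G) : Prop := IsCyclic (Subgroup.closure {x, y}) ∨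
  (x ^ 2 = 1 ∧ x ≠ 1 ∧ x⁻¹ * y * x = y⁻¹ ∧ ∀ k : ℤ, k ≠ 0 → y ^ k ≠ 1)

theorem isCyclic_of_le {G : Type*} [Group G] {H K : Subgroup G} (h : H ≤ K) [IsCyclic K] : IsCyclic H :=
  isCyclic_of_injective (Subgroup.inclusion h) (Subgroup.inclusion_injective h)

end OneRel

namespace OneRel
open Monoid

theorem comm_of_cyc {G : Type*} [Group G] {S : Subgroup G} (hS : IsCyclic S) {a b : G} (ha : a ∈ S)
    (hb : b ∈ S) : a * b = b * a := by
  obtain ⟨⟨g, hg⟩, h⟩ := hS.exists_generator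
  obtain ⟨k, hk⟩ := h ⟨a, ha⟩
  obtain ⟨l, hl⟩ := h ⟨b, hb⟩
  have hk' : g ^ k = a := congrArg Subtype.val hk
  have hl' : g ^ l = b := congrArg Subtype.val hl
  rw [← hk', ← hl']
  exact ((Commute.refl g).zpow_zpow k l).eq

theorem zpow_inj_of {G : Type*} [Group G] {y : G} (hy : ∀ k : ℤ, k ≠ 0 → y ^ k ≠ 1) {a b : ℤ}
    (h : y ^ a = y ^ b) : a = b := by
  by_contra hab
  refine hy (a - b) (sub_ne_zero.2 hab) ?_
  rw [zpow_sub, h, mul_inv_cancel]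

theorem closure_pair_le {G : Type*} [Group G] {S : Subgroup G} {x y : G} (hx : x ∈ S) (hy : y ∈ S) :
    Subgroup.closure {x, y} ≤ S := by
  rw [Subgroup.closure_le]
  rintro g (rfl | hg)
  · exact hx
  · rw [Set.mem_singleton_iff] at hg; rwa [hg]

theorem rel_pow {G : Type*} [Group G] {x y z : G} (h : x⁻¹ * y * x = z) (k : ℤ) :
    x⁻¹ * y ^ k * x = z ^ k := by
  have e2 := conj_zpow (i := k) (a := x⁻¹) (b := y)
  rw [inv_inv, h] at e2
  exact e2.symm

theorem alt_torsion {n : ℕ} {ι : Type} (x y : CP n ι) (i j : ℤ)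
    (h : x⁻¹ * y ^ i * x = y ^ j) (hi : y ^ i ≠ 1) (k : ℕ) (hk : k ≠ 0)
    (hyk : y ^ k = 1) : IsCyclic (Subgroup.closure {x, y}) := by
  rcases torsion_conj y k hk hyk with rfl | ⟨c, l, a, rfl⟩
  · simp at hi
  rw [conj_zpow] at hi h
  rw [conj_zpow, ← map_zpow, ← map_zpow] at h
  obtain ⟨d, hd⟩ := factor_malnormal l (a ^ i) (a ^ j) (by
    intro h1; rw [← map_zpow, h1] at hi; simp at hi) (c⁻¹ * x⁻¹ * c) (by
      calc _ = c⁻¹ * (x⁻¹ * (c * CoprodI.of (M := fun _ : ι => Multiplicative (ZMod n)) (i := l) (a ^ i) * c⁻¹) * x) * c := by group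
        _ = _ := by rw [h]; group)
  obtain ⟨f, hf⟩ : ∃ f : Multiplicative (ZMod n) →* CP n ι, ∀ b, f b = c *
      CoprodI.of (M := fun _ : ι => Multiplicative (ZMod n)) (i := l) b * c⁻¹ :=
    ⟨(MulAut.conj c).toMonoidHom.comp (CoprodI.of (M := fun _ : ι => Multiplicative (ZMod n)) (i := l)),
      fun b => rfl⟩
  have hc : IsCyclic f.range := isCyclic_of_surjective f.rangeRestrict f.rangeRestrict_surjective
  refine isCyclic_of_le (closure_pair_le (S := f.range) ⟨d⁻¹, ?_⟩ ⟨a, hf a⟩)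
  rw [hf, map_inv, ← hd]; group

theorem alt_inf {n : ℕ} (hn : n ≠ 0) {ι : Type} (x y : CP n ι) (i j : ℤ)
    (h : x⁻¹ * y ^ i * x = y ^ j) (hi : i ≠ 0) (hj : j ≠ 0)
    (hy : ∀ k : ℤ, k ≠ 0 → y ^ k ≠ 1) : Alt x y := by
  have hn' : (n : ℤ) ≠ 0 := by exact_mod_cast hn
  have hyn : ∀ k : ℤ, k ≠ 0 → (y ^ n) ^ k ≠ 1 := by
    intro k hk
    rw [← zpow_natCast, ← zpow_mul]
    exact hy _ (mul_ne_zero hn' hk)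
  have hrel : (x ^ n)⁻¹ * (y ^ n) ^ (i ^ n) * x ^ n = (y ^ n) ^ (j ^ n) := by
    have := rel_pow (rel_iter h n) n
    rw [← zpow_mul, ← zpow_mul] at this
    rw [← zpow_natCast y n, ← zpow_mul, ← zpow_mul, mul_comm, this, mul_comm]
  have habs : i.natAbs = j.natAbs := by
    obtain ⟨x', hx'⟩ : ∃ x' : (tot n ι).ker, x' = ⟨x ^ n, pow_mem_ker x⟩ := ⟨_, rfl⟩
    obtain ⟨y', hy'⟩ : ∃ x' : (tot n ι).ker, x' = ⟨y ^ n, pow_mem_ker y⟩ := ⟨_, rfl⟩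
    have hrel' : x'⁻¹ * y' ^ (i ^ n) * x' = y' ^ (j ^ n) := by
      rw [hx', hy']; ext; exact hrel
    have hcy := ker_cyc y' (by
      intro h1
      rw [hy'] at h1
      refine hyn 1 one_ne_zero ?_
      rw [zpow_one]
      exact congrArg Subtype.val h1) (Subgroup.closure {x', y'}) (Subgroup.subset_closure (by simp))
      (rel_closure x' y' _ _ (pow_ne_zero _ hi) (pow_ne_zero _ hj) hrel')
    have hcomm : x' * y' = y' * x' := comm_of_cyc hcy (Subgroup.subset_closure (by simp))
      (Subgroup.subset_closure (by simp))
    have hcomm2 : x ^ n * y ^ n = y ^ n * x ^ n := by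
      rw [hx', hy'] at hcomm; exact congrArg Subtype.val hcomm
    have h3 : (x ^ n)⁻¹ * (y ^ n) ^ (i ^ n) * x ^ n = (y ^ n) ^ (i ^ n) := by
      rw [mul_assoc, ← ((show Commute (x ^ n) (y ^ n) from hcomm2).zpow_right _).eq]; group
    have h4 := zpow_inj_of hyn (h3.symm.trans hrel)
    have h5 := congrArg Int.natAbs h4
    rw [Int.natAbs_pow, Int.natAbs_pow] at h5
    exact Nat.pow_left_injective hn h5
  have hz : ∀ k : ℤ, k ≠ 0 → (y ^ i) ^ k ≠ 1 := by
    intro k hk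
    rw [← zpow_mul]; exact hy _ (mul_ne_zero hi hk)
  have hD := centralizer_cyc hn (y ^ i) (by
    intro k hk
    rw [← zpow_natCast]
    exact hz k (by exact_mod_cast hk))
  have hyD : y ∈ Subgroup.centralizer {y ^ i} := by
    rw [Subgroup.mem_centralizer_singleton_iff]
    exact ((Commute.refl y).zpow_right i).eq
  rcases Int.natAbs_eq_natAbs_iff.1 habs with e | e
  · left
    refine isCyclic_of_le (closure_pair_le (S := Subgroup.centralizer {y ^ i}) ?_ hyD)
    rw [Subgroup.mem_centralizer_singleton_iff]
    rw [← e] at h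
    calc x * y ^ i = x * (x⁻¹ * y ^ i * x) := by rw [h]
      _ = _ := by group
  · right
    obtain ⟨⟨u, hu⟩, hu2⟩ := hD.exists_generator
    have hgen : ∀ d ∈ Subgroup.centralizer {y ^ i}, ∃ k : ℤ, d = u ^ k := by
      intro d hd
      obtain ⟨k, hk⟩ := hu2 ⟨d, hd⟩
      exact ⟨k, (congrArg Subtype.val hk).symm⟩
    have h' : x⁻¹ * y ^ i * x = (y ^ i)⁻¹ := by rw [h, e, zpow_neg, inv_inv]
    have hui : ∀ k : ℤ, k ≠ 0 → u ^ k ≠ 1 := by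
      intro k hk hu1
      obtain ⟨l, hl⟩ := hgen y hyD
      refine hy k hk ?_
      rw [hl, ← zpow_mul, mul_comm, zpow_mul, hu1, one_zpow]
    obtain ⟨r, hr⟩ := hgen (y ^ i) (by
      rw [Subgroup.mem_centralizer_singleton_iff])
    have hr0 : r ≠ 0 := by
      rintro rfl
      rw [zpow_zero] at hr
      exact hy i hi hr
    obtain ⟨l, hl⟩ := hgen y hyD
    rw [Subgroup.mem_centralizer_singleton_iff] at hu
    obtain ⟨e', he'⟩ := hgen (x⁻¹ * u * x) (by
      rw [Subgroup.mem_centralizer_singleton_iff]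
      have : y ^ i = x⁻¹ * (y ^ i)⁻¹ * x := by
        calc y ^ i = ((y ^ i)⁻¹)⁻¹ := by group
          _ = (x⁻¹ * y ^ i * x)⁻¹ := by rw [h']
          _ = _ := by group
      rw [this]
      have hu' : u * (y ^ i)⁻¹ = (y ^ i)⁻¹ * u := ((show Commute u (y ^ i) from hu).inv_right).eq
      calc _ = x⁻¹ * (u * (y ^ i)⁻¹) * x := by group
        _ = _ := by rw [hu']; group)
    have he1 : e' = -1 := by
      have h1 := rel_pow he' r
      rw [← hr, h', hr, ← zpow_mul, ← zpow_neg] at h1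
      have h2 := zpow_inj_of hui h1
      have h3 : r * (e' + 1) = 0 := by linarith
      rcases mul_eq_zero.1 h3 with h4 | h4
      · exact absurd h4 hr0
      · linarith
    subst he1
    rw [zpow_neg, zpow_one] at he'
    obtain ⟨s, hs⟩ := hgen (x ^ 2) (by
      rw [Subgroup.mem_centralizer_singleton_iff]
      have h1 : x⁻¹ * (x⁻¹ * y ^ i * x) * x = y ^ i := by
        rw [h']
        calc _ = (x⁻¹ * y ^ i * x)⁻¹ := by group
          _ = _ := by rw [h', inv_inv]
      calc x ^ 2 * y ^ i = x ^ 2 * (x⁻¹ * (x⁻¹ * y ^ i * x) * x) := by rw [h1]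
        _ = _ := by rw [pow_two]; group)
    have hs0 : s = 0 := by
      have h1 := rel_pow he' s
      rw [← hs, inv_zpow, ← hs] at h1
      have h2 : x ^ 2 = (x ^ 2)⁻¹ := by rw [← h1]; group
      rw [hs, ← zpow_neg] at h2
      have h3 := zpow_inj_of hui h2
      omega
    refine ⟨by rw [hs, hs0, zpow_zero], ?_, ?_, hy⟩
    · rintro rfl
      have h1 := zpow_inj_of hz (a := 1) (b := -1) (by simpa using h')
      omega
    · rw [hl, rel_pow he' l, inv_zpow]

theorem alt_cp {n : ℕ} (hn : n ≠ 0) {ι : Type} (x y : CP n ι) (i j : ℤ)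
    (h : x⁻¹ * y ^ i * x = y ^ j) (hi : y ^ i ≠ 1) (hj : y ^ j ≠ 1) : Alt x y := by
  by_cases hy : ∀ k : ℤ, k ≠ 0 → y ^ k ≠ 1
  · exact alt_inf hn x y i j h (by rintro rfl; simp at hi) (by rintro rfl; simp at hj) hy
  · push Not at hy
    obtain ⟨k, hk, hy⟩ := hy
    refine Or.inl (alt_torsion x y i j h hi k.natAbs (Int.natAbs_ne_zero.2 hk) ?_)
    rcases Int.natAbs_eq k with e | e
    · rw [e, zpow_natCast] at hy; exact hy
    · rw [e, zpow_neg, zpow_natCast, inv_eq_one] at hy; exact hy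

theorem alt_of_inj {G H : Type*} [Group G] [Group H] (f : G →* H) (hf : Function.Injective f) {x y : G}
    (h : Alt (f x) (f y)) : Alt x y := by
  rcases h with h | ⟨h1, h2, h3, h4⟩
  · left
    have e : (Subgroup.closure {x, y}).map f = Subgroup.closure {f x, f y} := by
      rw [MonoidHom.map_closure, Set.image_pair]
    rw [← e] at h
    exact isCyclic_of_injective (f.subgroupMap _) (by
      intro a b h
      exact Subtype.ext (hf (congrArg Subtype.val h)))
  · right
    refine ⟨hf (by rw [map_pow, h1, map_one]), fun h => h2 (by rw [h, map_one]),
      hf (by simpa using h3), fun k hk h => h4 k hk (by rw [← map_zpow, h, map_one])⟩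

/-- elements of the infinite dihedral group -/
theorem dihedral {G : Type*} [Group G] (x y : G) (h1 : x ^ 2 = 1) (h2 : x ≠ 1) (h3 : x⁻¹ * y * x = y⁻¹)
    (h4 : ∀ k : ℤ, k ≠ 0 → y ^ k ≠ 1) : Nonempty (Subgroup.closure {x, y} ≃*
      CoprodI (fun _ : Bool => Multiplicative (ZMod 2))) := by
  have hxi : x⁻¹ = x := by
    rw [inv_eq_iff_mul_eq_one, ← pow_two, h1]
  have hxy : x * y * x = y⁻¹ := by rw [← h3, hxi]
  have hxyk : ∀ k : ℤ, x * y ^ k = y ^ (-k) * x := by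
    intro k
    have := rel_pow h3 k
    rw [hxi] at this
    rw [zpow_neg, ← inv_zpow, ← this, mul_assoc, ← pow_two, h1, mul_one]
  obtain ⟨f, hf⟩ : ∃ f : CoprodI (fun _ : Bool => Multiplicative (ZMod 2)) →* G, f = CoprodI.lift
      (fun b => if b then zhom 2 (x * y) (by rw [pow_two, ← mul_assoc, hxy, inv_mul_cancel])
        else zhom 2 x h1) := ⟨_, rfl⟩
  obtain ⟨a, ha⟩ : ∃ a, a = CoprodI.of (M := fun _ : Bool => Multiplicative (ZMod 2)) (i := false)
    (Multiplicative.ofAdd 1) := ⟨_, rfl⟩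
  obtain ⟨b, hb⟩ : ∃ a, a = CoprodI.of (M := fun _ : Bool => Multiplicative (ZMod 2)) (i := true)
    (Multiplicative.ofAdd 1) := ⟨_, rfl⟩
  have hfa : f a = x := by
    rw [hf, ha]; exact (CoprodI.lift_of _ _).trans (by simp)
  have hfb : f b = x * y := by
    rw [hf, hb]; exact (CoprodI.lift_of _ _).trans (by simp)
  have ha2 : a * a = 1 := by
    rw [ha, ← map_mul]; exact map_one _
  have hb2 : b * b = 1 := by
    rw [hb, ← map_mul]; exact map_one _
  have hai : a⁻¹ = a := inv_eq_of_mul_eq_one_left ha2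
  have hbi : b⁻¹ = b := inv_eq_of_mul_eq_one_left hb2
  have hab : a⁻¹ * (a * b) * a = (a * b)⁻¹ := by
    rw [mul_inv_rev, hai, hbi, ← mul_assoc, ha2, one_mul]
  have habk : ∀ k : ℤ, a * (a * b) ^ k = (a * b) ^ (-k) * a := by
    intro k
    have := rel_pow hab k
    rw [hai] at this
    rw [zpow_neg, ← inv_zpow, ← this, mul_assoc, ha2, mul_one]
  have hspan : ∀ w, ∃ k : ℤ, w = (a * b) ^ k ∨ w = (a * b) ^ k * a := by
    have hA : ∀ w, (∃ k : ℤ, w = (a * b) ^ k ∨ w = (a * b) ^ k * a) →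
        ∃ k : ℤ, a * w = (a * b) ^ k ∨ a * w = (a * b) ^ k * a := by
      rintro w ⟨k, rfl | rfl⟩
      · exact ⟨-k, Or.inr (habk k)⟩
      · exact ⟨-k, Or.inl (by rw [← mul_assoc, habk, mul_assoc, ha2, mul_one])⟩
    have hB : ∀ w, (∃ k : ℤ, w = (a * b) ^ k ∨ w = (a * b) ^ k * a) →
        ∃ k : ℤ, b * w = (a * b) ^ k ∨ b * w = (a * b) ^ k * a := by
      intro w hw
      obtain ⟨k, hk⟩ := hw
      have e : b = a * (a * b) := by rw [← mul_assoc, ha2, one_mul]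
      have := hA (a * b * w) ⟨1 + k, by
        rw [zpow_add, zpow_one]
        rcases hk with rfl | rfl
        · left; rfl
        · right; simp only [mul_assoc]⟩
      rwa [← mul_assoc, ← e] at this
    intro w
    induction w using CoprodI.induction_left with
    | one => exact ⟨0, Or.inl (by simp)⟩
    | mul c w ih =>
      rename_i l
      have hc : ∀ c : Multiplicative (ZMod 2), c = 1 ∨ c = Multiplicative.ofAdd 1 := by decide
      rcases hc c with rfl | rfl
      · rw [map_one, one_mul]; exact ih
      · cases l
        · rw [← ha]; exact hA _ ih
        · rw [← hb]; exact hB _ ih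
  have hinj : Function.Injective f := by
    rw [injective_iff_map_eq_one]
    intro w hw
    have hfab : f (a * b) = y := by rw [map_mul, hfa, hfb, ← mul_assoc, ← pow_two, h1, one_mul]
    obtain ⟨k, rfl | rfl⟩ := hspan w
    · rw [map_zpow, hfab] at hw
      by_cases hk : k = 0
      · simp [hk]
      · exact absurd hw (h4 k hk)
    · exfalso
      rw [map_mul, map_zpow, hfab, hfa] at hw
      have hx : x = y ^ (-k) := by
        rw [zpow_neg]; exact eq_inv_of_mul_eq_one_right hw
      by_cases hk : k = 0
      · rw [hk] at hx; simp at hx; exact h2 hx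
      · apply h4 (2 * -k) (by omega)
        rw [mul_comm, zpow_mul, ← hx]; exact_mod_cast h1
  have hrange : f.range = Subgroup.closure {x, y} := by
    apply le_antisymm
    · rintro _ ⟨w, rfl⟩
      have hx : x ∈ Subgroup.closure {x, y} := Subgroup.subset_closure (by simp)
      have hy : y ∈ Subgroup.closure {x, y} := Subgroup.subset_closure (by simp)
      obtain ⟨k, rfl | rfl⟩ := hspan w
      · rw [map_zpow, map_mul, hfa, hfb]
        exact Subgroup.zpow_mem _ (mul_mem hx (mul_mem hx hy)) _
      · rw [map_mul, map_zpow, map_mul, hfa, hfb]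
        exact mul_mem (Subgroup.zpow_mem _ (mul_mem hx (mul_mem hx hy)) _) hx
    · refine closure_pair_le ⟨a, hfa⟩ ⟨a * b, ?_⟩
      rw [map_mul, hfa, hfb, ← mul_assoc, ← pow_two, h1, one_mul]
  rw [← hrange]
  exact ⟨(MonoidHom.ofInjective hinj).symm⟩

end OneRel

namespace OneRel
open FreeGroup (of mk)
open Monoid

section
variable {n : ℕ} {ι : Type}

open Classical in
/-- retraction killing the factors outside `T` -/
noncomputable def ret (T : Set ι) : CP n ι →* CP n ι :=
  CoprodI.lift fun l => if l ∈ T then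
    CoprodI.of (M := fun _ : ι => Multiplicative (ZMod n)) (i := l) else 1

theorem ret_of_mem (T : Set ι) {l : ι} (h : l ∈ T) (a : Multiplicative (ZMod n)) :
    ret T (CoprodI.of (M := fun _ : ι => Multiplicative (ZMod n)) (i := l) a) =
    CoprodI.of (M := fun _ : ι => Multiplicative (ZMod n)) (i := l) a :=
  (CoprodI.lift_of _ _).trans (by rw [if_pos h])

theorem ret_of_not_mem (T : Set ι) {l : ι} (h : l ∉ T) (a : Multiplicative (ZMod n)) :
    ret T (CoprodI.of (M := fun _ : ι => Multiplicative (ZMod n)) (i := l) a) = 1 :=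
  (CoprodI.lift_of _ _).trans (by rw [if_neg h]; rfl)

theorem exists_ret (w : CP n ι) : ∃ T0 : Set ι, T0.Finite ∧ ∀ T, T0 ⊆ T → ret T w = w := by
  induction w using CoprodI.induction_on with
  | one => exact ⟨∅, Set.finite_empty, fun T _ => map_one _⟩
  | of l a => exact ⟨{l}, Set.finite_singleton l, fun T hT => ret_of_mem T (hT rfl) a⟩
  | mul a b ha hb =>
    obtain ⟨A, hA, ha⟩ := ha
    obtain ⟨B, hB, hb⟩ := hb
    refine ⟨A ∪ B, hA.union hB, fun T hT => ?_⟩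
    rw [map_mul, ha T (Set.subset_union_left.trans hT), hb T (Set.subset_union_right.trans hT)]

end

section
variable {X : Type} {n : ℕ} {R : FreeGroup X}

theorem core_free (h2 : I2 R) {ι : Type} (idx : FreeGroup X → ι)
    (Ψ : NC R →* CP n ι) (hidx : ∀ h h', idx h = idx h' → h⁻¹ * h' ∈ NC R)
    (hΨ : ∀ h : FreeGroup X, ∃ (c : CP n ι)
      (a : Multiplicative (ZMod n)), Ψ ⟨h * R * h⁻¹, conj_mem_NC (mem_NC R) h⟩ =
      c * CoprodI.of (M := fun _ : ι => Multiplicative (ZMod n)) (i := idx h) a * c⁻¹)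
    (z : FreeGroup X) (hz : z ∉ NC R) (T : Set ι) (hT : T.Finite) (ν : FreeGroup X) (hν : ν ∈ NC R) :
    ∀ᶠ m : ℕ in Filter.cofinite, ret T (Ψ ⟨z ^ m * ν * (z ^ m)⁻¹, conj_mem_NC hν _⟩) = 1 := by
  have hν' : ν ∈ Subgroup.closure (Group.conjugatesOfSet {R}) := hν
  revert hν
  induction hν' using Subgroup.closure_induction with
  | mem ν hmem =>
    intro hν
    rw [Group.mem_conjugatesOfSet_iff] at hmem
    obtain ⟨R', hR', hc⟩ := hmem
    rw [Set.mem_singleton_iff] at hR'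
    subst hR'
    obtain ⟨h, rfl⟩ := isConj_iff.1 hc
    have hinj : Function.Injective fun m : ℕ => idx (z ^ m * h) := by
      have key : ∀ a b : ℕ, idx (z ^ a * h) = idx (z ^ (a + b) * h) → b = 0 := by
        intro a b hab
        by_contra hb
        have h1 := conj_mem_NC (hidx _ _ hab) h
        refine hz (h2 z b hb ?_)
        convert h1 using 1
        rw [pow_add]; group
      intro a b hab
      rcases le_total a b with hle | hle
      · obtain ⟨c, rfl⟩ := Nat.exists_eq_add_of_le hle
        rw [key a c hab]; rfl
      · obtain ⟨c, rfl⟩ := Nat.exists_eq_add_of_le hle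
        rw [key b c hab.symm]; rfl
    have hfin : {m : ℕ | idx (z ^ m * h) ∈ T}.Finite := hT.preimage hinj.injOn
    filter_upwards [hfin.compl_mem_cofinite] with m hm
    have e : (⟨z ^ m * (h * R' * h⁻¹) * (z ^ m)⁻¹, conj_mem_NC hν _⟩ : NC R') =
        ⟨(z ^ m * h) * R' * (z ^ m * h)⁻¹, conj_mem_NC (mem_NC R') _⟩ := by
      ext1; simp only [mul_inv_rev, mul_assoc]
    obtain ⟨c, a, hca⟩ := hΨ (z ^ m * h)
    rw [e, hca, map_mul, map_mul, ret_of_not_mem T hm, mul_one, map_inv, mul_inv_cancel]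
  | one =>
    intro hν
    refine Filter.Eventually.of_forall fun m => ?_
    have e : (⟨z ^ m * 1 * (z ^ m)⁻¹, conj_mem_NC hν _⟩ : NC R) = 1 := by ext1; simp
    rw [e, map_one, map_one]
  | mul a b ha hb iha ihb =>
    intro hν
    filter_upwards [iha ha, ihb hb] with m h1 h2
    have e : (⟨z ^ m * (a * b) * (z ^ m)⁻¹, conj_mem_NC hν _⟩ : NC R) =
      ⟨z ^ m * a * (z ^ m)⁻¹, conj_mem_NC ha _⟩ * ⟨z ^ m * b * (z ^ m)⁻¹, conj_mem_NC hb _⟩ := by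
      ext1; simp [mul_assoc]
    rw [e, map_mul, map_mul, h1, h2, mul_one]
  | inv a ha iha =>
    intro hν
    filter_upwards [iha ha] with m h1
    have e : (⟨z ^ m * a⁻¹ * (z ^ m)⁻¹, conj_mem_NC hν _⟩ : NC R) =
      (⟨z ^ m * a * (z ^ m)⁻¹, conj_mem_NC ha _⟩)⁻¹ := by
      ext1; simp [mul_assoc]
    rw [e, map_inv, map_inv, h1, inv_one]

variable {G : Type} [Group G]

theorem core_G (h2 : I2 R) (h3 : I3 n R) (q : FreeGroup X →* G) (hq : Function.Surjective q)
    (hker : ∀ w, q w = 1 ↔ w ∈ NC (R ^ n)) (p : G →* FreeGroup X ⧸ NC R)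
    (hp : ∀ w, p (q w) = QuotientGroup.mk w) (z ν w : G) (hz : p z ≠ 1) (hν : p ν = 1) (hw : p w = 1) :
    ∃ m0 : ℕ, ∀ m ≥ m0, ∀ a b : ℤ, z ^ m * ν ^ a * (z ^ m)⁻¹ = w ^ b → w ^ b = 1 := by
  obtain ⟨ι, idx, Ψ, hidx, hΨ1, hΨ⟩ := h3
  obtain ⟨z, rfl⟩ := hq z
  obtain ⟨ν, rfl⟩ := hq ν
  obtain ⟨w, rfl⟩ := hq w
  rw [hp, QuotientGroup.eq_one_iff] at hν hw
  rw [hp, Ne, QuotientGroup.eq_one_iff] at hz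
  obtain ⟨T, hT, hTw⟩ := exists_ret (Ψ ⟨w, hw⟩)
  have := core_free h2 idx Ψ hidx hΨ z hz T hT ν hν
  rw [Nat.cofinite_eq_atTop, Filter.eventually_atTop] at this
  obtain ⟨m0, hm0⟩ := this
  refine ⟨m0, fun m hm a b hab => ?_⟩
  have h1 := hm0 m hm
  have e : Ψ (⟨z ^ m * ν * (z ^ m)⁻¹, conj_mem_NC hν _⟩ ^ a * (⟨w, hw⟩ ^ b)⁻¹) = 1 := by
    rw [hΨ1, ← hker]
    simp only [Subgroup.coe_mul, Subgroup.coe_zpow, Subgroup.coe_inv, map_mul, map_inv, map_zpow, map_pow]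
    rw [conj_zpow, hab, mul_inv_cancel]
  rw [map_mul, map_inv, mul_inv_eq_one, map_zpow, map_zpow] at e
  have e2 : Ψ (⟨w, hw⟩ ^ b) = 1 := by
    rw [map_zpow]
    calc Ψ ⟨w, hw⟩ ^ b = (ret T (Ψ ⟨w, hw⟩)) ^ b := by rw [hTw T subset_rfl]
      _ = ret T (Ψ ⟨w, hw⟩ ^ b) := by rw [map_zpow]
      _ = 1 := by rw [← e, map_zpow, h1, one_zpow]
  rw [hΨ1, ← hker] at e2
  simpa using e2

theorem embed (h3 : I3 n R) (q : FreeGroup X →* G) (hq : Function.Surjective q)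
    (hker : ∀ w, q w = 1 ↔ w ∈ NC (R ^ n)) (p : G →* FreeGroup X ⧸ NC R)
    (hp : ∀ w, p (q w) = QuotientGroup.mk w) :
    ∃ (ι : Type) (f : p.ker →* CP n ι), Function.Injective f := by
  obtain ⟨ι, idx, Ψ, hidx, hΨ1, hΨ⟩ := h3
  choose s hs using hq
  have hmem : ∀ g : p.ker, s g ∈ NC R := by
    intro g
    rw [← QuotientGroup.eq_one_iff, ← hp, hs]; exact g.2
  have hmul : ∀ a b c : NC R, q a * q b = q c → Ψ a * Ψ b = Ψ c := by
    intro a b c h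
    rw [← map_mul, ← mul_inv_eq_one, ← map_inv, ← map_mul, hΨ1, ← hker]
    simp [h]
  refine ⟨ι, MonoidHom.mk' (fun g => Ψ ⟨s g, hmem g⟩) (fun a b => ?_), ?_⟩
  · refine (hmul _ _ _ ?_).symm
    simp [hs]
  · rw [injective_iff_map_eq_one]
    intro g hg
    have : Ψ ⟨s g, hmem g⟩ = 1 := hg
    rw [hΨ1, ← hker] at this
    ext
    rw [← hs g]; exact this

theorem alt_map {G H : Type*} [Group G] [Group H] (f : G →* H) (hf : Function.Injective f) {x y : G}
    (h : Alt x y) : Alt (f x) (f y) := by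
  rcases h with h | ⟨h1, h2, h3, h4⟩
  · left
    have e : (Subgroup.closure {x, y}).map f = Subgroup.closure {f x, f y} := by
      rw [MonoidHom.map_closure, Set.image_pair]
    rw [← e]
    exact isCyclic_of_surjective (f.subgroupMap _) (f.subgroupMap_surjective _)
  · right
    refine ⟨by rw [← map_pow, h1, map_one], fun h => h2 (hf (by rw [h, map_one])),
      by rw [← map_inv, ← map_mul, ← map_mul, h3, map_inv], fun k hk h => h4 k hk (hf (by rw [map_zpow, h, map_one]))⟩

/-- a power lemma for elements of finite order -/
theorem fin_order_pow {G : Type*} [Group G] (x y : G) (i j : ℤ) (h : x⁻¹ * y ^ i * x = y ^ j)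
    (d : ℤ) (hd : d ≠ 0) (hdy : ∀ k : ℤ, y ^ k = 1 ↔ d ∣ k) : ∃ e : ℤ, y ^ j = (y ^ i) ^ e := by
  have hg : (Int.gcd i d : ℤ) ∣ j := by
    obtain ⟨i', hi'⟩ := Int.gcd_dvd_left i d
    obtain ⟨d', hd'⟩ := Int.gcd_dvd_right i d
    have h0 : d' ≠ 0 := by rintro rfl; simp at hd'; exact hd hd'
    have h1 : (y ^ i) ^ d' = 1 := by
      rw [← zpow_mul, hdy]
      refine ⟨i', ?_⟩
      conv_lhs => rw [hi']
      conv_rhs => rw [hd']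
      ring
    have h2 := rel_pow h d'
    rw [h1, mul_one, inv_mul_cancel, ← zpow_mul] at h2
    obtain ⟨c, hc⟩ := (hdy _).1 h2.symm
    refine ⟨c, mul_right_cancel₀ h0 ?_⟩
    rw [hc]
    conv_lhs => rw [hd']
    ring
  obtain ⟨c, hc⟩ := hg
  refine ⟨Int.gcdA i d * c, ?_⟩
  have e : j = i * (Int.gcdA i d * c) + d * (Int.gcdB i d * c) := by
    rw [hc, Int.gcd_eq_gcd_ab]; ring
  have hy : y ^ d = 1 := (hdy d).2 dvd_rfl
  conv_lhs => rw [e, zpow_add, zpow_mul, zpow_mul y d, hy, one_zpow, mul_one]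

theorem main_alt (hn : 1 < n) (h2 : I2 R) (h3 : I3 n R) (x y : PresentedGroup {R ^ n}) (i j : ℤ)
    (hconj : x⁻¹ * y ^ i * x = y ^ j) (hi : y ^ i ≠ 1) (hj : y ^ j ≠ 1) : Alt x y := by
  have hi0 : i ≠ 0 := by rintro rfl; simp at hi
  have hj0 : j ≠ 0 := by rintro rfl; simp at hj
  obtain ⟨q, hq0⟩ : ∃ q, q = PresentedGroup.mk {R ^ n} := ⟨_, rfl⟩
  have hq : Function.Surjective q := hq0 ▸ PresentedGroup.mk_surjective _
  have hker : ∀ w, q w = 1 ↔ w ∈ NC (R ^ n) := by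
    intro w; rw [hq0]; exact QuotientGroup.eq_one_iff w
  have hlift : ∀ w, FreeGroup.lift (fun a => (QuotientGroup.mk (of a) : FreeGroup X ⧸ NC R)) w =
      QuotientGroup.mk w := by
    intro w
    have : FreeGroup.lift (fun a => (QuotientGroup.mk (of a) : FreeGroup X ⧸ NC R)) =
      QuotientGroup.mk' (NC R) := by ext a; simp
    rw [this]; rfl
  have hlR : FreeGroup.lift (fun a => (QuotientGroup.mk (of a) : FreeGroup X ⧸ NC R)) R = 1 := by
    rw [hlift, QuotientGroup.eq_one_iff]; exact mem_NC R
  obtain ⟨p, hp0⟩ : ∃ p : PresentedGroup {R ^ n} →* FreeGroup X ⧸ NC R, ∀ a,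
      p (PresentedGroup.of a) = QuotientGroup.mk (of a) :=
    ⟨PresentedGroup.toGroup (f := fun a => (QuotientGroup.mk (of a) : FreeGroup X ⧸ NC R)) (by
      rintro r hr
      rw [Set.mem_singleton_iff] at hr
      rw [hr, map_pow, hlR, one_pow]), fun a => PresentedGroup.toGroup.of _⟩
  have hp : ∀ w, p (q w) = QuotientGroup.mk w := by
    intro w
    have : p.comp q = QuotientGroup.mk' (NC R) := by
      ext a; rw [hq0]; exact hp0 a
    exact DFunLike.congr_fun this w
  obtain ⟨D, hD⟩ : ∃ D : PresentedGroup {R ^ n} →* Multiplicative ((FreeGroup X ⧸ NC R) →₀ X →₀ ZMod n)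
      ⋊[actHom (FreeGroup X ⧸ NC R) (X →₀ ZMod n)] (FreeGroup X ⧸ NC R), ∀ a,
      D (PresentedGroup.of a) = fox n (fun a => p (PresentedGroup.of a)) (of a) :=
    ⟨PresentedGroup.toGroup (f := fun a => fox n (fun a => p (PresentedGroup.of a)) (of a)) (by
      rintro r hr
      rw [Set.mem_singleton_iff] at hr
      have e : FreeGroup.lift (fun a => fox n (fun a => p (PresentedGroup.of a)) (of a)) =
        fox n (fun a => p (PresentedGroup.of a)) := by ext1 a; simp
      rw [hr, e]
      refine fox_pow_eq_one _ _ ?_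
      simp only [hp0]
      exact hlR), fun a => PresentedGroup.toGroup.of _⟩
  have htf : ∀ (a : FreeGroup X ⧸ NC R) (k : ℕ), k ≠ 0 → a ^ k = 1 → a = 1 := by
    intro a k hk h
    obtain ⟨w, rfl⟩ := QuotientGroup.mk_surjective a
    rw [← QuotientGroup.mk_pow, QuotientGroup.eq_one_iff] at h
    rw [QuotientGroup.eq_one_iff]
    exact h2 w k hk h
  have htfz : ∀ (a : FreeGroup X ⧸ NC R), a ≠ 1 → ∀ k : ℤ, k ≠ 0 → a ^ k ≠ 1 := by
    intro a ha k hk h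
    refine ha (htf a k.natAbs (Int.natAbs_ne_zero.2 hk) ?_)
    rcases Int.natAbs_eq k with e | e
    · rw [e, zpow_natCast] at h; exact h
    · rw [e, zpow_neg, zpow_natCast, inv_eq_one] at h; exact h
  have hcore := core_G h2 h3 q hq hker p hp
  by_cases hy : p y = 1
  · by_cases hx : p x = 1
    · obtain ⟨ι, f, hf⟩ := embed h3 q hq hker p hp
      refine alt_map p.ker.subtype p.ker.subtype_injective (x := ⟨x, hx⟩) (y := ⟨y, hy⟩)
        (alt_of_inj f hf (alt_cp (by omega) _ _ i j ?_ ?_ ?_))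
      · rw [← map_inv, ← map_zpow, ← map_zpow, ← map_mul, ← map_mul]
        congr 1
        ext; exact hconj
      · rw [← map_zpow]
        intro h
        rw [← map_one f] at h
        exact hi (congrArg Subtype.val (hf h))
      · rw [← map_zpow]
        intro h
        rw [← map_one f] at h
        exact hj (congrArg Subtype.val (hf h))
    · exfalso
      have hxi : p x⁻¹ ≠ 1 := by rwa [map_inv, Ne, inv_eq_one]
      obtain ⟨m, hm⟩ := hcore x⁻¹ y y hxi hy hy
      have h1 := hm m le_rfl (i ^ m) (j ^ m) (by
        rw [inv_pow, inv_inv]; exact rel_iter hconj m)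
      have hfo : IsOfFinOrder y := isOfFinOrder_iff_zpow_eq_one.2 ⟨j ^ m, pow_ne_zero _ hj0, h1⟩
      obtain ⟨e, he⟩ := fin_order_pow x y i j hconj (orderOf y)
        (by exact_mod_cast hfo.orderOf_pos.ne') (fun k => orderOf_dvd_iff_zpow_eq_one.symm)
      have hu : p (y ^ i) = 1 := by rw [map_zpow, hy, one_zpow]
      obtain ⟨m, hm⟩ := hcore x⁻¹ (y ^ i) (y ^ i) hxi hu hu
      have h5 : x⁻¹ * (y ^ i) ^ (1 : ℤ) * x = (y ^ i) ^ e := by rw [zpow_one, hconj, he]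
      have h6 := rel_iter h5 m
      have h7 := hm m le_rfl (1 ^ m) (e ^ m) (by
        rw [inv_pow, inv_inv]; exact h6)
      rw [h7, one_pow, zpow_one] at h6
      apply hi
      have : y ^ i = x ^ m * ((x ^ m)⁻¹ * y ^ i * x ^ m) * (x ^ m)⁻¹ := by group
      rw [this, h6]; group
  · left
    have hc := cyc_fox hn p PresentedGroup.of (PresentedGroup.closure_range_of _) D hD htf y hy
      (Subgroup.closure {x, y}) (Subgroup.subset_closure (by simp)) (rel_closure x y i j hi0 hj0 hconj)
    have hcomm : p x * p y = p y * p x := comm_of_cyc hc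
      (Subgroup.mem_map_of_mem p (Subgroup.subset_closure (by simp)))
      (Subgroup.mem_map_of_mem p (Subgroup.subset_closure (by simp)))
    have hij : i = j := by
      refine zpow_inj_of (htfz _ hy) ?_
      have h1 := congrArg p hconj
      simp only [map_mul, map_inv, map_zpow] at h1
      rw [← h1, mul_assoc, ← ((show Commute (p x) (p y) from hcomm).zpow_right i).eq]; group
    have hle : Subgroup.closure {x, y} ≤ Subgroup.centralizer {y ^ i} := by
      refine closure_pair_le ?_ ?_
      · rw [Subgroup.mem_centralizer_singleton_iff]
        rw [← hij] at hconj
        calc x * y ^ i = x * (x⁻¹ * y ^ i * x) := by rw [hconj]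
          _ = _ := by group
      · rw [Subgroup.mem_centralizer_singleton_iff]
        exact ((Commute.refl y).zpow_right i).eq
    refine isCyclic_of_injective (p.subgroupMap (Subgroup.closure {x, y})) ?_
    rw [injective_iff_map_eq_one]
    rintro ⟨ν, hν⟩ h1
    have h2 : p ν = 1 := congrArg Subtype.val h1
    have h3 := hle hν
    rw [Subgroup.mem_centralizer_singleton_iff] at h3
    obtain ⟨m, hm⟩ := hcore (y ^ i) ν ν (by rw [map_zpow]; exact htfz _ hy i hi0) h2 h2
    have h4 := hm m le_rfl 1 1 (by
      rw [zpow_one, ← ((show Commute ν (y ^ i) from h3).pow_right m).eq]; group)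
    ext
    simpa using h4

end

end OneRel


/-- Let `G` be a one-relator group with torsion, `x y ∈ G` and `i j : ℤ`
with `x⁻¹ yⁱ x = yʲ`, `yⁱ ≠ 1` and `yʲ ≠ 1`.  Then `⟨x, y⟩` is cyclic or a free product
of cyclic groups. -/
theorem statement_4 {X : Type} [Nontrivial X] (R : FreeGroup X) (n : ℕ)
    (hn : 1 < n) (hR : ∀ (S : FreeGroup X) (k : ℕ), 1 ≤ k → R = S ^ k → k = 1)
    (x y : PresentedGroup {R ^ n}) (i j : ℤ)
    (hconj : x⁻¹ * y ^ i * x = y ^ j) (hi : y ^ i ≠ 1) (hj : y ^ j ≠ 1) :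
    IsCyclic (Subgroup.closure {x, y} : Subgroup (PresentedGroup {R ^ n})) ∨
      IsFreeProductOfCyclics (Subgroup.closure {x, y} : Subgroup (PresentedGroup {R ^ n})) := by
  have hg := OneRel.good_all n R hR
  rcases OneRel.main_alt hn hg.i2 hg.i3 x y i j hconj hi hj with h | ⟨h1, h2, h3, h4⟩
  · exact Or.inl h
  · exact Or.inr ⟨Bool, fun _ => 2, OneRel.dihedral x y h1 h2 h3 h4⟩
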